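/- Mackey theorem: let μ, ν be compositions of n and M an H_ν-module. Then res^n_μ ind^n_ν M admits a filtration by H_μ-submodules whose successive quotients are evenly isomorphic to ind^μ_{μ∩xν} (^x(res^ν_{x^{−1}μ∩ν} M)), one for each x ∈ D_{μ,ν}. The subquotients can be taken in any order refining the Bruhat order on D_{μ,ν}; in particular ind^μ_{μ∩ν} res^ν_{μ∩ν} M appears as a submodule. -/

import Mathlib

set_option maxHeartbeats 1000000

namespace HC

/-- Generators of the affine Hecke–Clifford superalgebra `H_n`. -/
inductive Gen (n : ℕ) : Type
  | X : Fin n → Gen n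
  | Xinv : Fin n → Gen n
  | C : Fin n → Gen n
  | T : Fin (n - 1) → Gen n

/-- The node `i` of `Fin n`, for `i : Fin (n-1)` (1-based: the node `i`). -/
def lo {n : ℕ} (i : Fin (n - 1)) : Fin n :=
  ⟨i.val, by have := i.isLt; omega⟩

/-- The node `i+1` of `Fin n`, for `i : Fin (n-1)`. -/
def hi {n : ℕ} (i : Fin (n - 1)) : Fin n :=
  ⟨i.val + 1, by have := i.isLt; omega⟩

variable (F : Type) [Field F]

/-- The free algebra on the generators. -/
abbrev FA (n : ℕ) : Type := FreeAlgebra F (Gen n)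

noncomputable def fx {n : ℕ} (i : Fin n) : FA F n := FreeAlgebra.ι F (Gen.X i)
noncomputable def fxinv {n : ℕ} (i : Fin n) : FA F n := FreeAlgebra.ι F (Gen.Xinv i)
noncomputable def fc {n : ℕ} (i : Fin n) : FA F n := FreeAlgebra.ι F (Gen.C i)
noncomputable def ft {n : ℕ} (i : Fin (n - 1)) : FA F n := FreeAlgebra.ι F (Gen.T i)

/-- The defining relations of the affine Hecke–Clifford superalgebra, with parameter
`q` and `ξ = q - q⁻¹`. -/
inductive Rel (q : F) (n : ℕ) : FA F n → FA F n → Prop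
  | XXinv (i : Fin n) : Rel q n (fx F i * fxinv F i) 1
  | XinvX (i : Fin n) : Rel q n (fxinv F i * fx F i) 1
  | XX (i j : Fin n) : Rel q n (fx F i * fx F j) (fx F j * fx F i)
  | XiXi (i j : Fin n) : Rel q n (fxinv F i * fxinv F j) (fxinv F j * fxinv F i)
  | XXi (i j : Fin n) (h : i ≠ j) : Rel q n (fx F i * fxinv F j) (fxinv F j * fx F i)
  | CC (i : Fin n) : Rel q n (fc F i * fc F i) 1
  | Canti (i j : Fin n) (h : i ≠ j) : Rel q n (fc F i * fc F j) (-(fc F j * fc F i))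
  | CX (i : Fin n) : Rel q n (fc F i * fx F i) (fxinv F i * fc F i)
  | CXi (i : Fin n) : Rel q n (fc F i * fxinv F i) (fx F i * fc F i)
  | CXo (i j : Fin n) (h : i ≠ j) : Rel q n (fc F i * fx F j) (fx F j * fc F i)
  | CXio (i j : Fin n) (h : i ≠ j) : Rel q n (fc F i * fxinv F j) (fxinv F j * fc F i)
  | Tquad (i : Fin (n - 1)) : Rel q n (ft F i * ft F i) ((q - q⁻¹) • ft F i + 1)
  | Tbraid (i j : Fin (n - 1)) (h : (j : ℕ) = (i : ℕ) + 1) :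
      Rel q n (ft F i * ft F j * ft F i) (ft F j * ft F i * ft F j)
  | TTfar (i j : Fin (n - 1)) (h : (i : ℕ) + 1 < (j : ℕ)) :
      Rel q n (ft F i * ft F j) (ft F j * ft F i)
  | TC (i : Fin (n - 1)) : Rel q n (ft F i * fc F (lo i)) (fc F (hi i) * ft F i)
  | TCo (i : Fin (n - 1)) (j : Fin n) (h1 : j ≠ lo i) (h2 : j ≠ hi i) :
      Rel q n (ft F i * fc F j) (fc F j * ft F i)
  | TXo (i : Fin (n - 1)) (j : Fin n) (h1 : j ≠ lo i) (h2 : j ≠ hi i) :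
      Rel q n (ft F i * fx F j) (fx F j * ft F i)
  | TXio (i : Fin (n - 1)) (j : Fin n) (h1 : j ≠ lo i) (h2 : j ≠ hi i) :
      Rel q n (ft F i * fxinv F j) (fxinv F j * ft F i)
  | cross (i : Fin (n - 1)) :
      Rel q n ((ft F i + (q - q⁻¹) • (fc F (lo i) * fc F (hi i))) * fx F (lo i) * ft F i)
        (fx F (hi i))

/-- The affine Hecke–Clifford superalgebra `H_n` over `F` with parameter `q`. -/
abbrev H (q : F) (n : ℕ) : Type := RingQuot (Rel F q n)

noncomputable def X (q : F) {n : ℕ} (i : Fin n) : H F q n :=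
  RingQuot.mkAlgHom F (Rel F q n) (fx F i)

noncomputable def Xinv (q : F) {n : ℕ} (i : Fin n) : H F q n :=
  RingQuot.mkAlgHom F (Rel F q n) (fxinv F i)

noncomputable def C (q : F) {n : ℕ} (i : Fin n) : H F q n :=
  RingQuot.mkAlgHom F (Rel F q n) (fc F i)

noncomputable def T (q : F) {n : ℕ} (i : Fin (n - 1)) : H F q n :=
  RingQuot.mkAlgHom F (Rel F q n) (ft F i)

/-- `q` is either a primitive root of unity of odd order (including `q = 1`)
or not a root of unity at all (and `q ≠ 0`). -/
def GoodParam (q : F) : Prop :=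
  q ≠ 0 ∧ ((∃ m : ℕ, Odd m ∧ IsPrimitiveRoot q m) ∨ ∀ m : ℕ, 0 < m → q ^ m ≠ 1)

/-- `X_i^a` for an integer exponent `a ∈ ℤ`. -/
noncomputable def XZ (q : F) {n : ℕ} (i : Fin n) (a : ℤ) : H F q n :=
  if 0 ≤ a then X F q i ^ a.toNat else Xinv F q i ^ (-a).toNat

/-- The monomial `X^α = X_1^{α_1} ⋯ X_n^{α_n}` for `α ∈ ℤ^n`. -/
noncomputable def Xmon (q : F) {n : ℕ} (α : Fin n → ℤ) : H F q n :=
  ((List.finRange n).map fun i => XZ F q i (α i)).prod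

/-- The monomial `C^β = C_1^{β_1} ⋯ C_n^{β_n}` for `β ∈ {0,1}^n`. -/
noncomputable def Cmon (q : F) {n : ℕ} (β : Fin n → Bool) : H F q n :=
  ((List.finRange n).map fun i => if β i then C F q i else 1).prod

/-- The basic transposition `s_i = (i, i+1)` of `S_n`. -/
def s {n : ℕ} (i : Fin (n - 1)) : Equiv.Perm (Fin n) := Equiv.swap (lo i) (hi i)

/-- The Coxeter length (number of inversions) of a permutation of `Fin n`. -/
def len {n : ℕ} (w : Equiv.Perm (Fin n)) : ℕ :=
  ((Finset.univ : Finset (Fin n × Fin n)).filter fun p => p.1 < p.2 ∧ w p.2 < w p.1).card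

/-- `Tw` is the family of standard basis elements `T_w`, `w ∈ S_n`: it satisfies
`T_1 = 1`, `T_{s_i} = T_i`, and `T_{s_i w} = T_i T_w` whenever `ℓ(s_i w) = ℓ(w) + 1`.
These conditions determine the family uniquely. -/
def IsTFam (q : F) {n : ℕ} (Tw : Equiv.Perm (Fin n) → H F q n) : Prop :=
  Tw 1 = 1 ∧ (∀ i : Fin (n - 1), Tw (s i) = T F q i) ∧
    ∀ (i : Fin (n - 1)) (w : Equiv.Perm (Fin n)),
      len (s i * w) = len w + 1 → Tw (s i * w) = T F q i * Tw w

/-- `h` is the quantum characteristic of `q`:  the smallest positive integer with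
`q^{1-h} + q^{3-h} + ⋯ + q^{h-1} = 0`. -/
def qcharEq (q : F) (h : ℕ) : Prop :=
  0 < h ∧ (∑ k ∈ Finset.range h, q ^ (1 - (h : ℤ) + 2 * (k : ℤ))) = 0 ∧
    ∀ h' : ℕ, 0 < h' → h' < h →
      (∑ k ∈ Finset.range h', q ^ (1 - (h' : ℤ) + 2 * (k : ℤ))) ≠ 0

/-- `i ∈ I = {0, 1, …, ℓ}` where `ℓ = (h-1)/2` (no condition if the quantum
characteristic is infinite). -/
def memI (q : F) (i : ℕ) : Prop := ∀ h : ℕ, qcharEq F q h → 2 * i + 1 ≤ h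

/-- `q(i) = 2(q^{2i+1} + q^{-2i-1})/(q + q⁻¹)`. -/
noncomputable def qres (q : F) (i : ℕ) : F :=
  2 * (q ^ (2 * i + 1) + q⁻¹ ^ (2 * i + 1)) / (q + q⁻¹)

/-- Index of the block containing position `k` (0-based), for a composition given as a
list of parts. -/
def blk : List ℕ → ℕ → ℕ
  | [], _ => 0
  | a :: rest, k => if k < a then 0 else blk rest (k - a) + 1

/-- Membership in the Young subgroup `S_μ ⊆ S_n`. -/
def InYoung {n : ℕ} (μ : List ℕ) (w : Equiv.Perm (Fin n)) : Prop :=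
  ∀ k : Fin n, blk μ (w k).val = blk μ k.val

/-- `μ` is a composition of `n`. -/
def IsComposition (μ : List ℕ) (n : ℕ) : Prop := (∀ a ∈ μ, 0 < a) ∧ μ.sum = n

/-- The parabolic subalgebra generated by all `X_i^{±1}`, `C_i`, and the `T_j` with
`j` in a set `J` of admissible indices. -/
def parabolicJ (q : F) {n : ℕ} (J : Set (Fin (n - 1))) : Subalgebra F (H F q n) :=
  Algebra.adjoin F
    ((Set.range fun i : Fin n => X F q i) ∪ (Set.range fun i : Fin n => Xinv F q i) ∪
      (Set.range fun i : Fin n => C F q i) ∪ {h | ∃ j ∈ J, h = T F q j})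

/-- The parabolic subalgebra `H_μ` for a composition `μ`. -/
def parabolicC (q : F) {n : ℕ} (μ : List ℕ) : Subalgebra F (H F q n) :=
  parabolicJ F q {j | InYoung μ (s j)}

/-- The classical parabolic subalgebra `H^cl_μ`, generated by the `T_j` with `s_j ∈ S_μ`. -/
def clparC (q : F) {n : ℕ} (μ : List ℕ) : Subalgebra F (H F q n) :=
  Algebra.adjoin F {h | ∃ j : Fin (n - 1), InYoung μ (s j) ∧ h = T F q j}

/-- The finite Hecke–Clifford subalgebra `H^fn_n`, generated by all `C_i` and `T_j`. -/
def Hfin (q : F) (n : ℕ) : Subalgebra F (H F q n) :=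
  Algebra.adjoin F
    ((Set.range fun i : Fin n => C F q i) ∪ {h | ∃ j : Fin (n - 1), h = T F q j})

/-- `x` is a minimal length `(S_μ, S_ν)`-double coset representative. -/
def IsMinDC {n : ℕ} (μ ν : List ℕ) (x : Equiv.Perm (Fin n)) : Prop :=
  ∀ u v : Equiv.Perm (Fin n), InYoung μ u → InYoung ν v → len x ≤ len (u * x * v)

/-- `w ∈ S_μ x S_ν`. -/
def InDC {n : ℕ} (μ ν : List ℕ) (x w : Equiv.Perm (Fin n)) : Prop :=
  ∃ u v : Equiv.Perm (Fin n), InYoung μ u ∧ InYoung ν v ∧ w = u * x * v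

/-- A covering step in the Bruhat order: multiplication by a reflection increasing length. -/
def BruhatStep {n : ℕ} (v w : Equiv.Perm (Fin n)) : Prop :=
  ∃ a b : Fin n, a ≠ b ∧ w = Equiv.swap a b * v ∧ len v < len w

/-- The Bruhat order on `S_n`. -/
def BruhatLE {n : ℕ} : Equiv.Perm (Fin n) → Equiv.Perm (Fin n) → Prop :=
  Relation.ReflTransGen BruhatStep

/-- The space of `A`-equivariant linear maps between two representations of the
`F`-algebra `A`. -/
def eqvHoms {A : Type} [Ring A] [Algebra F A] {M N : Type}
    [AddCommGroup M] [Module F M] [AddCommGroup N] [Module F N]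
    (ρM : A →ₐ[F] Module.End F M) (ρN : A →ₐ[F] Module.End F N) :
    Submodule F (M →ₗ[F] N) where
  carrier := {f | ∀ (x : A) (m : M), f (ρM x m) = ρN x (f m)}
  add_mem' := by
    intro f g hf hg x m
    simp only [LinearMap.add_apply, hf x m, hg x m, map_add]
  zero_mem' := by
    intro x m
    simp only [LinearMap.zero_apply, map_zero]
  smul_mem' := by
    intro c f hf x m
    simp only [LinearMap.smul_apply, hf x m, map_smul]

/-- `(E, ρE, ι)` is the module induced along the algebra morphism `φ : B →ₐ A` from
the `B`-representation `(M, ρ)`, i.e. `E = A ⊗_B M`, characterized by its universal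
property. -/
def IsInducedAlong {A B : Type} [Ring A] [Ring B] [Algebra F A] [Algebra F B]
    (φ : B →ₐ[F] A) {M : Type} [AddCommGroup M] [Module F M]
    (ρ : B →ₐ[F] Module.End F M) {E : Type} [AddCommGroup E] [Module F E]
    (ρE : A →ₐ[F] Module.End F E) (ι : M →ₗ[F] E) : Prop :=
  (∀ (b : B) (m : M), ι (ρ b m) = ρE (φ b) (ι m)) ∧
    ∀ (P : Type) [AddCommGroup P] [Module F P],
      ∀ (ρP : A →ₐ[F] Module.End F P) (f : M →ₗ[F] P),
        (∀ (b : B) (m : M), f (ρ b m) = ρP (φ b) (f m)) →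
        ∃! g : E →ₗ[F] P,
          (∀ (x : A) (e : E), g (ρE x e) = ρP x (g e)) ∧ ∀ m : M, g (ι m) = f m

/-- `δ` is the grading automorphism of the superalgebra `H_n`
(identity on even generators, `-1` on the odd generators `C_i`). -/
def IsGradingAut (q : F) {n : ℕ} (δ : H F q n →ₐ[F] H F q n) : Prop :=
  (∀ i : Fin n, δ (X F q i) = X F q i) ∧ (∀ i : Fin n, δ (Xinv F q i) = Xinv F q i) ∧
    (∀ i : Fin n, δ (C F q i) = -C F q i) ∧ ∀ i : Fin (n - 1), δ (T F q i) = T F q i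

/-- `τ` is the antiautomorphism of `H_n` with `τ(T_i) = T_i + ξ C_i C_{i+1}`,
`τ(C_j) = C_j`, `τ(X_j) = X_j`. -/
def IsTauAntiAut (q : F) {n : ℕ} (τ : H F q n →ₗ[F] H F q n) : Prop :=
  Function.Bijective τ ∧ (∀ a b : H F q n, τ (a * b) = τ b * τ a) ∧ τ 1 = 1 ∧
    (∀ i : Fin (n - 1),
      τ (T F q i) = T F q i + (q - q⁻¹) • (C F q (lo i) * C F q (hi i))) ∧
    (∀ j : Fin n, τ (C F q j) = C F q j) ∧ (∀ j : Fin n, τ (X F q j) = X F q j) ∧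
    ∀ j : Fin n, τ (Xinv F q j) = Xinv F q j

/-- `ρ'` is the representation of the subalgebra `B` obtained from the
`H_ν`-representation `ρν` by twisting with the isomorphism `φ_{x⁻¹}`
(determined by `X_i ↦ X_{x⁻¹ i}`, `C_i ↦ C_{x⁻¹ i}`, `T_w ↦ T_{x⁻¹ w x}`). -/
def IsTwistedRep (q : F) {n : ℕ} (ν : List ℕ) (x : Equiv.Perm (Fin n))
    (B : Subalgebra F (H F q n)) {M : Type} [AddCommGroup M] [Module F M]
    (ρν : ↥(parabolicC F q (n := n) ν) →ₐ[F] Module.End F M)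
    (ρ' : ↥B →ₐ[F] Module.End F M) : Prop :=
  (∀ (i : Fin n) (a : ↥B) (b : ↥(parabolicC F q (n := n) ν)),
      (a : H F q n) = X F q i → (b : H F q n) = X F q (x⁻¹ i) → ρ' a = ρν b) ∧
  (∀ (i : Fin n) (a : ↥B) (b : ↥(parabolicC F q (n := n) ν)),
      (a : H F q n) = Xinv F q i → (b : H F q n) = Xinv F q (x⁻¹ i) → ρ' a = ρν b) ∧
  (∀ (i : Fin n) (a : ↥B) (b : ↥(parabolicC F q (n := n) ν)),
      (a : H F q n) = C F q i → (b : H F q n) = C F q (x⁻¹ i) → ρ' a = ρν b) ∧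
  ∀ (j j' : Fin (n - 1)) (a : ↥B) (b : ↥(parabolicC F q (n := n) ν)),
      lo j' = x⁻¹ (lo j) → (a : H F q n) = T F q j → (b : H F q n) = T F q j' → ρ' a = ρν b

/-- The element `f = a_d X_1^d + ⋯ + a_1 X_1 + a_0` of `H_n`. -/
noncomputable def felem (q : F) (n d : ℕ) (aa : ℕ → F) : H F q n :=
  if h : 0 < n then ∑ i ∈ Finset.range (d + 1), aa i • X F q (⟨0, h⟩ : Fin n) ^ i else 0

/-- The conditions on the coefficients of `f`: degree `d ≥ 1`, monic, and
`a_i = a_0 a_{d-i}`. -/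
def GoodPoly (d : ℕ) (aa : ℕ → F) : Prop :=
  1 ≤ d ∧ aa d = 1 ∧ (∀ i ≤ d, aa i = aa 0 * aa (d - i)) ∧ ∀ i : ℕ, d < i → aa i = 0

/-- The relation generating the two-sided ideal `I_f` of `H_n`. -/
inductive CycRel (q : F) (n d : ℕ) (aa : ℕ → F) : H F q n → H F q n → Prop
  | rel : CycRel q n d aa (felem F q n d aa) 0

/-- The cyclotomic Hecke–Clifford superalgebra `H_n^f = H_n / I_f`. -/
abbrev Hf (q : F) (n d : ℕ) (aa : ℕ → F) : Type := RingQuot (CycRel F q n d aa)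

/-- The canonical quotient map `H_n → H_n^f`. -/
noncomputable def cyc (q : F) (n d : ℕ) (aa : ℕ → F) : H F q n →ₐ[F] Hf F q n d aa :=
  RingQuot.mkAlgHom F (CycRel F q n d aa)

noncomputable def Xf (q : F) (n d : ℕ) (aa : ℕ → F) (i : Fin n) : Hf F q n d aa :=
  cyc F q n d aa (X F q i)
noncomputable def Xinvf (q : F) (n d : ℕ) (aa : ℕ → F) (i : Fin n) : Hf F q n d aa :=
  cyc F q n d aa (Xinv F q i)
noncomputable def Cf (q : F) (n d : ℕ) (aa : ℕ → F) (i : Fin n) : Hf F q n d aa :=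
  cyc F q n d aa (C F q i)
noncomputable def Tf (q : F) (n d : ℕ) (aa : ℕ → F) (i : Fin (n - 1)) : Hf F q n d aa :=
  cyc F q n d aa (T F q i)

/-- `e` is the canonical embedding `H_k^f → H_N^f` (shifting all indices by `sh`;
for `sh = 0` this is the standard identification of `H_k^f` with a subalgebra of
`H_N^f`). -/
def IsCycEmb (q : F) (k N d : ℕ) (aa : ℕ → F) (sh : ℕ)
    (e : Hf F q k d aa →ₐ[F] Hf F q N d aa) : Prop :=
  (∀ (i : Fin k) (i' : Fin N), (i' : ℕ) = sh + (i : ℕ) →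
      e (Xf F q k d aa i) = Xf F q N d aa i') ∧
  (∀ (i : Fin k) (i' : Fin N), (i' : ℕ) = sh + (i : ℕ) →
      e (Xinvf F q k d aa i) = Xinvf F q N d aa i') ∧
  (∀ (i : Fin k) (i' : Fin N), (i' : ℕ) = sh + (i : ℕ) →
      e (Cf F q k d aa i) = Cf F q N d aa i') ∧
  ∀ (j : Fin (k - 1)) (j' : Fin (N - 1)), (j' : ℕ) = sh + (j : ℕ) →
      e (Tf F q k d aa j) = Tf F q N d aa j'

/-- `δ` is the grading automorphism of the superalgebra `H_n^f`. -/
def IsCycGrading (q : F) (n d : ℕ) (aa : ℕ → F)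
    (δ : Hf F q n d aa →ₐ[F] Hf F q n d aa) : Prop :=
  (∀ i : Fin n, δ (Xf F q n d aa i) = Xf F q n d aa i) ∧
  (∀ i : Fin n, δ (Xinvf F q n d aa i) = Xinvf F q n d aa i) ∧
  (∀ i : Fin n, δ (Cf F q n d aa i) = -Cf F q n d aa i) ∧
  ∀ j : Fin (n - 1), δ (Tf F q n d aa j) = Tf F q n d aa j

/-- The elements `f_1 = f`, `f_{i+1} = (T_i + ξ C_i C_{i+1}) f_i T_i` of `H_n`
(0-based indexing: `fseq k = f_{k+1}`). -/
noncomputable def fseq (q : F) (n d : ℕ) (aa : ℕ → F) : ℕ → H F q n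
  | 0 => felem F q n d aa
  | k + 1 =>
    if h : k < n - 1 then
      (T F q (⟨k, h⟩ : Fin (n - 1)) +
          (q - q⁻¹) • (C F q (lo (⟨k, h⟩ : Fin (n - 1))) *
            C F q (hi (⟨k, h⟩ : Fin (n - 1))))) *
        fseq q n d aa k * T F q (⟨k, h⟩ : Fin (n - 1))
    else 0

/-- `f_Z = f_{z_1} ⋯ f_{z_u}` for `Z = {z_1 < ⋯ < z_u} ⊆ {1,…,n}` (0-based). -/
noncomputable def fZ (q : F) (n d : ℕ) (aa : ℕ → F) (Z : Finset (Fin n)) : H F q n :=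
  ((Z.sort (· ≤ ·)).map fun z => fseq F q n d aa (z : ℕ)).prod

/-- The set of indices `j` with `s_j ∈ S_μ ∩ x S_ν x⁻¹`, defining the parabolic
subalgebra `H_{μ ∩ xν}`. -/
def Jcap {n : ℕ} (μ ν : List ℕ) (x : Equiv.Perm (Fin n)) : Set (Fin (n - 1)) :=
  {j | InYoung μ (s j) ∧ InYoung ν (x⁻¹ * s j * x)}

theorem parabolicJ_mono (F : Type) [Field F] (q : F) {n : ℕ}
    {J J' : Set (Fin (n - 1))} (hJ : J ⊆ J') :
    parabolicJ F q J ≤ parabolicJ F q J' := by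
  apply Algebra.adjoin_mono
  apply Set.union_subset_union_right
  rintro y ⟨j, hj, rfl⟩
  exact ⟨j, hJ hj, rfl⟩

/-- The inclusion `H_{μ ∩ xν} ⊆ H_μ`. -/
def JcapIncl (F : Type) [Field F] (q : F) {n : ℕ} (μ ν : List ℕ)
    (x : Equiv.Perm (Fin n)) :
    ↥(parabolicJ F q (Jcap μ ν x)) →ₐ[F] ↥(parabolicC F q (n := n) μ) :=
  Subalgebra.inclusion (parabolicJ_mono F q fun _ hj => hj.1)

/-! The elements `T_w` form a basis of `H_n` as a right module over the algebra generated by the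
`X_i` and `C_i`. They span because that span is a right ideal, and they are independent because
`H_n` acts on the right of `⊕_w T_w · CliffordLaurent`, where `T_i` is governed by the skew
derivation `d_i` with `a T_i = T_i s_i(a) + d_i(a)`.

Since `a T_x = T_x x⁻¹(a) + (terms T_y a' with y < x)` and minimal length representatives `x` of
double cosets satisfy `T_{ux} = T_u T_x` for `u ∈ S_μ`, the span of the `T_w` with `w` in the first
`k` double cosets `S_μ x S_ν` is an `(H_μ, H_ν)`-bimodule whenever the double cosets are listed
compatibly with the Bruhat order. In the induced module these spans cut out the filtration. Modulo
the preceding double cosets, `H_{μ∩xν}` passes `T_x` through `φ_{x⁻¹}`, and the elements `T_u`, with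
`u` running over minimal length representatives of `S_μ / (S_μ ∩ xS_νx⁻¹)`, form a basis of `H_μ`
over `H_{μ∩xν}`; this identifies the subquotient with the module induced from `^xM`. -/

section HeckeClifford

open Equiv MulOpposite DoubleCoset

/-! ### Simple transpositions and length -/

section Length

variable {n : ℕ}

theorem lo_lt_hi (i : Fin (n - 1)) : lo i < hi i := Fin.lt_def.2 (Nat.lt_succ_self _)

theorem lo_ne_hi (i : Fin (n - 1)) : lo i ≠ hi i := (lo_lt_hi i).ne

theorem s_apply_lo (i : Fin (n - 1)) : s i (lo i) = hi i := swap_apply_left _ _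

theorem s_apply_hi (i : Fin (n - 1)) : s i (hi i) = lo i := swap_apply_right _ _

theorem s_apply_of_ne {i : Fin (n - 1)} {k : Fin n} (h1 : k ≠ lo i) (h2 : k ≠ hi i) :
    s i k = k :=
  swap_apply_of_ne_of_ne h1 h2

theorem s_apply_s_apply (i : Fin (n - 1)) (k : Fin n) : s i (s i k) = k := swap_apply_self _ _ _

theorem s_mul_self (i : Fin (n - 1)) : s i * s i = 1 := swap_mul_self _ _

theorem s_inv (i : Fin (n - 1)) : (s i)⁻¹ = s i := swap_inv _ _

theorem mul_s_mul_s_cancel (w : Perm (Fin n)) (i : Fin (n - 1)) : w * s i * s i = w := by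
  rw [mul_assoc, s_mul_self, mul_one]

theorem s_mul_s_mul_cancel (i : Fin (n - 1)) (w : Perm (Fin n)) : s i * (s i * w) = w := by
  rw [← mul_assoc, s_mul_self, one_mul]

theorem mul_s_eq_swap_mul (w : Perm (Fin n)) (i : Fin (n - 1)) :
    w * s i = swap (w (lo i)) (w (hi i)) * w :=
  mul_swap_eq_swap_mul _ _ _

theorem s_apply_lt_s_apply {i : Fin (n - 1)} {a b : Fin n} (h : a < b)
    (hne : a = lo i → b ≠ hi i) : s i a < s i b := by
  grind [s, lo, hi]

/-- The inversions of a permutation, counted by `len`. -/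
def inversions (w : Perm (Fin n)) : Finset (Fin n × Fin n) :=
  Finset.univ.filter fun z => z.1 < z.2 ∧ w z.2 < w z.1

theorem mem_inversions {w : Perm (Fin n)} {z : Fin n × Fin n} :
    z ∈ inversions w ↔ z.1 < z.2 ∧ w z.2 < w z.1 := by
  simp only [inversions, Finset.mem_filter, Finset.mem_univ, true_and]

theorem len_inv (w : Perm (Fin n)) : len w⁻¹ = len w := by
  change (inversions w⁻¹).card = (inversions w).card
  refine Finset.card_nbij' (fun z => (w⁻¹ z.2, w⁻¹ z.1)) (fun z => (w z.2, w z.1)) ?_ ?_ ?_ ?_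
  all_goals rintro ⟨a, b⟩ h
  · simpa [mem_inversions, and_comm] using h
  · simpa [mem_inversions, and_comm] using h
  · simp
  · simp

/-- The transposition of `p` and `r` applied to the entries of an increasing pair, unless this
destroys the order of the entries. It embeds the inversions of `w` into those of
`w * swap p r`. -/
def swapPair (p r : Fin n) (z : Fin n × Fin n) : Fin n × Fin n :=
  if swap p r z.1 < swap p r z.2 then (swap p r z.1, swap p r z.2) else z

theorem swapPair_swapPair {p r : Fin n} {z : Fin n × Fin n} (hz : z.1 < z.2) :
    swapPair p r (swapPair p r z) = z := by
  by_cases h : swap p r z.1 < swap p r z.2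
  · have h' : swapPair p r z = (swap p r z.1, swap p r z.2) := if_pos h
    rw [h', swapPair, if_pos] <;> simp only [swap_apply_self, hz]
  · have h' : swapPair p r z = z := if_neg h
    rw [h', h']

theorem swapPair_mem_inversions {w : Perm (Fin n)} {p r : Fin n} (hpr : p < r)
    (hw : w p < w r) {z : Fin n × Fin n} (hz : z ∈ inversions w) :
    swapPair p r z ∈ inversions (w * swap p r) := by
  obtain ⟨a, b⟩ := z
  obtain ⟨hab, hwab⟩ := mem_inversions.1 hz
  simp only at hab hwab
  by_cases h : swap p r a < swap p r b
  · have h' : swapPair p r (a, b) = (swap p r a, swap p r b) := if_pos h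
    exact h' ▸ mem_inversions.2 ⟨h, by simpa only [Perm.mul_apply, swap_apply_self] using hwab⟩
  · have h' : swapPair p r (a, b) = (a, b) := if_neg h
    rw [h', mem_inversions]
    refine ⟨hab, ?_⟩
    rw [Perm.mul_apply, Perm.mul_apply]
    grind

theorem len_lt_len_mul_swap {w : Perm (Fin n)} {p r : Fin n} (hpr : p < r) (hw : w p < w r) :
    len w < len (w * swap p r) := by
  change (inversions w).card < (inversions (w * swap p r)).card
  have hlt {z} (hz : z ∈ inversions w) : z.1 < z.2 := (mem_inversions.1 hz).1
  have hinj : Set.InjOn (swapPair p r) (inversions w) := fun z hz z' hz' h => by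
    rw [← swapPair_swapPair (hlt hz), h, swapPair_swapPair (hlt hz')]
  rw [← Finset.card_image_of_injOn hinj]
  refine Finset.card_lt_card (Finset.ssubset_iff_of_subset ?_ |>.2 ⟨(p, r), ?_, ?_⟩)
  · exact Finset.image_subset_iff.2 fun z hz => swapPair_mem_inversions hpr hw hz
  · exact mem_inversions.2 ⟨hpr, by simpa using hw⟩
  · intro h
    obtain ⟨z, hz, hz'⟩ := Finset.mem_image.1 h
    have hfix : swapPair p r (p, r) = (p, r) := if_neg (by simpa using hpr.le)
    rw [← swapPair_swapPair (hlt hz), hz', hfix] at hz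
    exact (mem_inversions.1 hz).2.not_gt hw

theorem len_lt_len_mul_swap_iff {w : Perm (Fin n)} {p r : Fin n} (hpr : p < r) :
    len w < len (w * swap p r) ↔ w p < w r := by
  refine ⟨fun h => ?_, len_lt_len_mul_swap hpr⟩
  by_contra hw
  have hw' : (w * swap p r) p < (w * swap p r) r := by
    simpa using (not_lt.1 hw).lt_of_ne (w.injective.ne hpr.ne')
  have h' := len_lt_len_mul_swap hpr hw'
  rw [mul_assoc, swap_mul_self, mul_one] at h'
  exact h.not_gt h'

theorem len_lt_len_mul_s {w : Perm (Fin n)} {i : Fin (n - 1)} (h : w (lo i) < w (hi i)) :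
    len w < len (w * s i) :=
  len_lt_len_mul_swap (lo_lt_hi i) h

theorem mul_s_ascent {w : Perm (Fin n)} {i : Fin (n - 1)} (h : w (hi i) < w (lo i)) :
    (w * s i) (lo i) < (w * s i) (hi i) := by
  simpa only [Perm.mul_apply, s_apply_lo, s_apply_hi] using h

theorem mul_s_descent {w : Perm (Fin n)} {i : Fin (n - 1)} (h : w (lo i) < w (hi i)) :
    (w * s i) (hi i) < (w * s i) (lo i) := by
  simpa only [Perm.mul_apply, s_apply_lo, s_apply_hi] using h

theorem len_mul_s_lt {w : Perm (Fin n)} {i : Fin (n - 1)} (h : w (hi i) < w (lo i)) :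
    len (w * s i) < len w := by
  simpa only [mul_s_mul_s_cancel] using len_lt_len_mul_s (mul_s_ascent h)

theorem lt_or_gt_apply_lo_hi (w : Perm (Fin n)) (i : Fin (n - 1)) :
    w (lo i) < w (hi i) ∨ w (hi i) < w (lo i) :=
  (w.injective.ne (lo_ne_hi i)).lt_or_gt

theorem eq_one_of_strictMono {w : Perm (Fin n)} (h : StrictMono w) : w = 1 :=
  Perm.ext fun k => congrArg (fun e : Fin n ≃o Fin n => e k)
    (Subsingleton.elim (h.orderIsoOfSurjective w w.surjective) (OrderIso.refl (Fin n)))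

/-- The product `u * v` is reduced, i.e. `len (u * v) = len u + len v`: the inversions of `v`
persist in `u * v`. -/
def IsReducedMul (u v : Perm (Fin n)) : Prop :=
  ∀ a b, a < b → v b < v a → u (v b) < u (v a)

theorem IsReducedMul.mul_s {u v : Perm (Fin n)} (h : IsReducedMul u v) {i : Fin (n - 1)}
    (hv : v (hi i) < v (lo i)) : IsReducedMul u (v * s i) := by
  intro a b hab hvab
  refine h (s i a) (s i b) (s_apply_lt_s_apply hab ?_) hvab
  rintro rfl rfl
  exact (mul_s_ascent hv).not_gt hvab

theorem isReducedMul_s_left {w : Perm (Fin n)} {j : Fin (n - 1)}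
    (h : w⁻¹ (lo j) < w⁻¹ (hi j)) : IsReducedMul (s j) w := by
  intro a b hab hw
  refine s_apply_lt_s_apply hw fun hb ha => ?_
  rw [← hb, ← ha] at h
  exact hab.not_gt (by simpa using h)

end Length

/-! ### The Bruhat order -/

section Bruhat

variable {n : ℕ} {v w y : Perm (Fin n)}

theorem bruhatStep_mul_s {i : Fin (n - 1)} (h : w (lo i) < w (hi i)) : BruhatStep w (w * s i) :=
  ⟨w (lo i), w (hi i), h.ne, mul_s_eq_swap_mul w i, len_lt_len_mul_s h⟩

theorem bruhatLE_mul_s {i : Fin (n - 1)} (h : w (lo i) < w (hi i)) : BruhatLE w (w * s i) :=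
  .single (bruhatStep_mul_s h)

theorem mul_s_bruhatLE {i : Fin (n - 1)} (h : w (hi i) < w (lo i)) : BruhatLE (w * s i) w := by
  simpa only [mul_s_mul_s_cancel] using bruhatLE_mul_s (mul_s_ascent h)

theorem BruhatStep.len_lt (h : BruhatStep v w) : len v < len w :=
  h.choose_spec.choose_spec.2.2

theorem BruhatStep.inv (h : BruhatStep v w) : BruhatStep v⁻¹ w⁻¹ := by
  obtain ⟨a, b, hab, rfl, hl⟩ := h
  refine ⟨v⁻¹ a, v⁻¹ b, v⁻¹.injective.ne hab, ?_, by simpa only [len_inv] using hl⟩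
  rw [mul_inv_rev, swap_inv, mul_swap_eq_swap_mul]

theorem BruhatLE.inv (h : BruhatLE v w) : BruhatLE v⁻¹ w⁻¹ :=
  Relation.ReflTransGen.lift (fun x => x⁻¹) (fun _ _ => BruhatStep.inv) _ _ h

theorem BruhatLE.inv_right (h : BruhatLE v w⁻¹) : BruhatLE v⁻¹ w :=
  inv_inv w ▸ h.inv

theorem bruhatStep_iff_exists_mul_swap :
    BruhatStep v w ↔ ∃ p r, p < r ∧ v p < v r ∧ w = v * swap p r := by
  constructor
  · rintro ⟨a, b, hab, rfl, hl⟩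
    wlog h : v⁻¹ a < v⁻¹ b generalizing a b
    · rw [swap_comm] at hl ⊢
      exact this b a hab.symm hl ((v⁻¹.injective.ne hab.symm).lt_of_le (not_lt.1 h))
    rw [swap_mul_eq_mul_swap] at hl ⊢
    exact ⟨v⁻¹ a, v⁻¹ b, h, (len_lt_len_mul_swap_iff h).1 hl, rfl⟩
  · rintro ⟨p, r, hpr, hv, rfl⟩
    exact ⟨v p, v r, hv.ne, mul_swap_eq_swap_mul _ _ _, len_lt_len_mul_swap hpr hv⟩

theorem BruhatStep.eq_or_mul_s (h : BruhatStep v w) (i : Fin (n - 1)) :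
    w = v * s i ∨ BruhatStep (v * s i) (w * s i) := by
  obtain ⟨p, r, hpr, hv, rfl⟩ := bruhatStep_iff_exists_mul_swap.1 h
  by_cases hp : p = lo i ∧ r = hi i
  · exact .inl (by rw [hp.1, hp.2, s])
  · refine .inr (bruhatStep_iff_exists_mul_swap.2 ⟨s i p, s i r,
      s_apply_lt_s_apply hpr fun h1 h2 => hp ⟨h1, h2⟩, ?_, ?_⟩)
    · simpa only [Perm.mul_apply, s_apply_s_apply] using hv
    · rw [mul_assoc, mul_assoc, mul_swap_eq_swap_mul (s i), s_apply_s_apply, s_apply_s_apply]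

theorem BruhatLE.le_mul_s_or (h : BruhatLE y w) (i : Fin (n - 1)) :
    BruhatLE y (w * s i) ∨ BruhatLE (y * s i) (w * s i) := by
  induction h using Relation.ReflTransGen.head_induction_on with
  | refl => exact .inr .refl
  | head hstep _ ih =>
    rcases hstep.eq_or_mul_s i with rfl | hstep'
    · rw [mul_s_mul_s_cancel] at ih
      exact ih.symm
    · exact ih.imp (.head hstep) (.head hstep')

theorem BruhatLE.mul_s {i : Fin (n - 1)} (h : BruhatLE v w) (hw : w (lo i) < w (hi i)) :
    BruhatLE (v * s i) (w * s i) := by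
  induction h using Relation.ReflTransGen.head_induction_on with
  | refl => exact .refl
  | head hstep hle ih =>
    rcases hstep.eq_or_mul_s i with rfl | hstep'
    · exact hle.trans (bruhatLE_mul_s hw)
    · exact ih.head hstep'

theorem BruhatLE.len_le (h : BruhatLE v w) : len v ≤ len w := by
  induction h with
  | refl => exact le_rfl
  | tail _ hstep ih => exact ih.trans hstep.len_lt.le

theorem BruhatLE.len_lt (h : BruhatLE v w) (hne : v ≠ w) : len v < len w := by
  rcases Relation.ReflTransGen.cases_head h with rfl | ⟨y, hstep, hyw⟩
  · exact absurd rfl hne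
  · exact hstep.len_lt.trans_le (BruhatLE.len_le hyw)

end Bruhat

/-! ### Young subgroups and minimal coset representatives -/

section Young

variable {n : ℕ} {κ : Type*} {c : Fin n → κ}

/-- The Young subgroup of permutations preserving the fibres of a colouring `c`. For a composition,
`c` sends a position to the index of its block; monotone colourings correspond to compositions. -/
def youngSubgroup (c : Fin n → κ) : Subgroup (Perm (Fin n)) where
  carrier := {w | ∀ k, c (w k) = c k}
  one_mem' _ := rfl
  mul_mem' {u v} hu hv k := by rw [Perm.mul_apply, hu, hv]
  inv_mem' {u} hu k := by simpa using (hu (u⁻¹ k)).symm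

/-- The indices of the simple transpositions lying in the Young subgroup of `c`. -/
def youngIndices (c : Fin n → κ) : Set (Fin (n - 1)) := {j | s j ∈ youngSubgroup c}

theorem swap_mem_youngSubgroup {a b : Fin n} : swap a b ∈ youngSubgroup c ↔ c a = c b := by
  refine ⟨fun h => by simpa using h b, fun h k => ?_⟩
  rw [swap_apply_def]
  split_ifs with h1 h2
  · rw [h1, h]
  · rw [h2, h]
  · rfl

theorem mem_youngIndices {j : Fin (n - 1)} : j ∈ youngIndices c ↔ c (lo j) = c (hi j) :=
  swap_mem_youngSubgroup

/-- `w` is the element of minimal length in its left coset modulo the Young subgroup of `c`;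
equivalently, it is increasing on the fibres of `c`. -/
def IsMinCosetRep (c : Fin n → κ) (w : Perm (Fin n)) : Prop :=
  ∀ a b, a < b → c a = c b → w a < w b

variable [LinearOrder κ]

theorem isMinCosetRep_of_simple (hc : Monotone c) {w : Perm (Fin n)}
    (h : ∀ i ∈ youngIndices c, w (lo i) < w (hi i)) : IsMinCosetRep c w := by
  suffices H : ∀ (d : ℕ) (a b : Fin n), (b : ℕ) = a + d + 1 → c a = c b → w a < w b by
    intro a b hab hcab
    have := Fin.lt_def.1 hab
    exact H (b - a - 1) a b (by omega) hcab
  intro d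
  induction d with
  | zero =>
    intro a b hab hcab
    obtain ⟨i, rfl⟩ : ∃ i : Fin (n - 1), a = lo i := ⟨⟨a, by omega⟩, rfl⟩
    obtain rfl : b = hi i := Fin.ext hab
    exact h i (mem_youngIndices.2 hcab)
  | succ d ih =>
    intro a b hab hcab
    obtain ⟨i, rfl⟩ : ∃ i : Fin (n - 1), a = lo i := ⟨⟨a, by omega⟩, rfl⟩
    have hib : (b : ℕ) = hi i + d + 1 := by simp only [hab, lo, hi]; omega
    have hcol : c (lo i) = c (hi i) :=
      (hc (lo_lt_hi i).le).antisymm (hcab ▸ hc (Fin.le_def.2 (by omega)))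
    exact (h i (mem_youngIndices.2 hcol)).trans (ih (hi i) b hib (hcol ▸ hcab))

theorem apply_lt_apply_of_mem_youngSubgroup (hc : Monotone c) {u : Perm (Fin n)}
    (hu : u ∈ youngSubgroup c) {a b : Fin n} (h : c a < c b) : u a < u b :=
  hc.reflect_lt (by rwa [hu, hu])

theorem eq_one_of_mem_youngSubgroup (hc : Monotone c) {w : Perm (Fin n)}
    (hw : w ∈ youngSubgroup c) (h : IsMinCosetRep c w) : w = 1 :=
  eq_one_of_strictMono fun a b hab => (hc hab.le).lt_or_eq.elim
    (apply_lt_apply_of_mem_youngSubgroup hc hw) (h a b hab)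

theorem exists_descent_of_mem_youngSubgroup (hc : Monotone c) {w : Perm (Fin n)}
    (hw : w ∈ youngSubgroup c) (hne : w ≠ 1) : ∃ i ∈ youngIndices c, w (hi i) < w (lo i) := by
  by_contra! H
  exact hne (eq_one_of_mem_youngSubgroup hc hw (isMinCosetRep_of_simple hc fun i hi =>
    (H i hi).lt_of_ne (w.injective.ne (lo_ne_hi i))))

theorem exists_descent {w : Perm (Fin n)} (hw : w ≠ 1) : ∃ i, w (hi i) < w (lo i) :=
  let ⟨i, _, h⟩ := exists_descent_of_mem_youngSubgroup (c := fun _ => 0) monotone_const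
    (fun _ => rfl) hw
  ⟨i, h⟩

theorem youngSubgroup_induction (hc : Monotone c) {p : Perm (Fin n) → Prop} (one : p 1)
    (mul_s : ∀ u ∈ youngSubgroup c, ∀ i ∈ youngIndices c, u (lo i) < u (hi i) → p u → p (u * s i))
    {u : Perm (Fin n)} (hu : u ∈ youngSubgroup c) : p u := by
  induction hl : len u using Nat.strong_induction_on generalizing u with
  | _ l ih =>
    subst hl
    rcases eq_or_ne u 1 with rfl | hne
    · exact one
    obtain ⟨i, hi, hdesc⟩ := exists_descent_of_mem_youngSubgroup hc hu hne
    have hmem : u * s i ∈ youngSubgroup c := mul_mem hu hi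
    have := mul_s _ hmem i hi (mul_s_ascent hdesc) (ih _ (len_mul_s_lt hdesc) hmem rfl)
    rwa [mul_s_mul_s_cancel] at this

theorem IsMinCosetRep.unique (hc : Monotone c) {d d' u u' : Perm (Fin n)}
    (hd : IsMinCosetRep c d) (hd' : IsMinCosetRep c d') (hu : u ∈ youngSubgroup c)
    (hu' : u' ∈ youngSubgroup c) (h : d * u = d' * u') : d = d' ∧ u = u' := by
  have hv : u' * u⁻¹ ∈ youngSubgroup c := mul_mem hu' (inv_mem hu)
  have hdd' : d = d' * (u' * u⁻¹) := by rw [← mul_assoc, ← h, mul_inv_cancel_right]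
  have hv1 : u' * u⁻¹ = 1 := by
    refine eq_one_of_mem_youngSubgroup hc hv fun a b hab hcab => ?_
    have hlt := hd a b hab hcab
    rw [hdd', Perm.mul_apply d', Perm.mul_apply d'] at hlt
    refine ((u' * u⁻¹).injective.ne hab.ne).lt_of_le (not_lt.1 fun hgt => ?_)
    exact hlt.not_gt (hd' _ _ hgt (by rw [hv, hv, hcab]))
  exact ⟨by rw [hdd', hv1, mul_one], (mul_inv_eq_one.1 hv1).symm⟩

theorem exists_isMinCosetRep_mul (hc : Monotone c) (w : Perm (Fin n)) :
    ∃ d u, IsMinCosetRep c d ∧ u ∈ youngSubgroup c ∧ w = d * u ∧ BruhatLE d w := by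
  induction hl : len w using Nat.strong_induction_on generalizing w with
  | _ l ih =>
    subst hl
    by_cases h : ∀ i ∈ youngIndices c, w (lo i) < w (hi i)
    · exact ⟨w, 1, isMinCosetRep_of_simple hc h, one_mem _, (mul_one w).symm, .refl⟩
    push Not at h
    obtain ⟨i, hi, hle⟩ := h
    have hdesc := (lt_or_gt_apply_lo_hi w i).resolve_left hle.not_gt
    obtain ⟨d, u, hd, hu, hw, hdw⟩ := ih _ (len_mul_s_lt hdesc) (w * s i) rfl
    refine ⟨d, u * s i, hd, mul_mem hu hi, ?_, hdw.trans (mul_s_bruhatLE hdesc)⟩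
    rw [← mul_assoc, ← hw, mul_s_mul_s_cancel]

theorem IsMinCosetRep.isReducedMul (hc : Monotone c) {d u : Perm (Fin n)}
    (hd : IsMinCosetRep c d) (hu : u ∈ youngSubgroup c) : IsReducedMul d u := by
  intro a b hab h
  refine hd _ _ h (le_antisymm (hc h.le) ?_)
  rw [hu, hu]
  exact hc hab.le

theorem IsMinCosetRep.colour_lt_of_inversion (hc : Monotone c) {x : Perm (Fin n)}
    (hx : IsMinCosetRep c x⁻¹) {a b : Fin n} (hab : a < b) (h : x b < x a) :
    c (x b) < c (x a) :=
  (hc h.le).lt_of_ne fun h' => hab.not_gt (by simpa using hx _ _ h h')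

theorem IsMinCosetRep.isReducedMul_of_inv (hc : Monotone c) {u x : Perm (Fin n)}
    (hx : IsMinCosetRep c x⁻¹) (hu : u ∈ youngSubgroup c) : IsReducedMul u x := fun _ _ hab h =>
  apply_lt_apply_of_mem_youngSubgroup hc hu (hx.colour_lt_of_inversion hc hab h)

theorem BruhatLE.exists_mul_le_of_le_mul (hc : Monotone c) {y w v : Perm (Fin n)}
    (h : BruhatLE y (w * v)) (hv : v ∈ youngSubgroup c) :
    ∃ v' ∈ youngSubgroup c, BruhatLE (y * v') w := by
  refine youngSubgroup_induction hc
    (p := fun v => ∀ y, BruhatLE y (w * v) → ∃ v' ∈ youngSubgroup c, BruhatLE (y * v') w)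
    (fun y h => ⟨1, one_mem _, by simpa only [mul_one] using h⟩)
    (fun u _ i hi _ ih y h => ?_) hv y h
  have hlift := h.le_mul_s_or i
  rw [← mul_assoc, mul_s_mul_s_cancel] at hlift
  rcases hlift with hy | hy
  · exact ih y hy
  · obtain ⟨v', hv', hle⟩ := ih _ hy
    exact ⟨s i * v', mul_mem hi hv', by rwa [← mul_assoc]⟩

end Young

/-! ### Double cosets of Young subgroups -/

section DoubleCosets

variable {n : ℕ} {κ κ' : Type*} {c : Fin n → κ} {c' : Fin n → κ'}

/-- `x` is the element of minimal length in its double coset modulo the Young subgroups of `c`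
and `c'`. -/
structure IsMinDoubleCosetRep (c : Fin n → κ) (c' : Fin n → κ') (x : Perm (Fin n)) : Prop where
  right : IsMinCosetRep c' x
  left : IsMinCosetRep c x⁻¹

/-- The colouring whose Young subgroup is the intersection of the Young subgroup of `c` with the
conjugate by `x` of the Young subgroup of `c'`. -/
def meetColouring (c : Fin n → κ) (c' : Fin n → κ') (x : Perm (Fin n)) : Fin n → κ ×ₗ κ' :=
  fun k => toLex (c k, c' (x⁻¹ k))

theorem meetColouring_eq_iff {x : Perm (Fin n)} {a b : Fin n} :
    meetColouring c c' x a = meetColouring c c' x b ↔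
      c a = c b ∧ c' (x⁻¹ a) = c' (x⁻¹ b) := by
  simp only [meetColouring, EmbeddingLike.apply_eq_iff_eq, Prod.mk.injEq]

theorem mem_youngSubgroup_meetColouring {x w : Perm (Fin n)} :
    w ∈ youngSubgroup (meetColouring c c' x) ↔
      w ∈ youngSubgroup c ∧ x⁻¹ * w * x ∈ youngSubgroup c' := by
  refine ⟨fun h => ⟨fun k => (meetColouring_eq_iff.1 (h k)).1, fun k => ?_⟩,
    fun h k => meetColouring_eq_iff.2 ⟨h.1 k, ?_⟩⟩
  · simpa using (meetColouring_eq_iff.1 (h (x k))).2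
  · simpa using h.2 (x⁻¹ k)

theorem youngSubgroup_meetColouring_le (x : Perm (Fin n)) :
    youngSubgroup (meetColouring c c' x) ≤ youngSubgroup c :=
  fun _ h => (mem_youngSubgroup_meetColouring.1 h).1

theorem IsMinDoubleCosetRep.exists_conj_s [LinearOrder κ'] (hc' : Monotone c')
    {x : Perm (Fin n)} (hx : IsMinDoubleCosetRep c c' x) {j : Fin (n - 1)}
    (hj : j ∈ youngIndices (meetColouring c c' x)) :
    ∃ j' ∈ youngIndices c', lo j' = x⁻¹ (lo j) ∧ hi j' = x⁻¹ (hi j) := by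
  obtain ⟨h1, h2⟩ := meetColouring_eq_iff.1 (mem_youngIndices.1 hj)
  have hlt := hx.left _ _ (lo_lt_hi j) h1
  -- A position strictly between the two would be sent by `x` between `j` and `j + 1`.
  have hsucc : (x⁻¹ (hi j)).val = (x⁻¹ (lo j)).val + 1 := by
    by_contra hne
    obtain ⟨p, hp1, hp2⟩ : ∃ p, x⁻¹ (lo j) < p ∧ p < x⁻¹ (hi j) :=
      ⟨⟨(x⁻¹ (lo j)).val + 1, by omega⟩, by simp [Fin.lt_def], Fin.lt_def.2 (by grind)⟩
    have hcol : c' (x⁻¹ (lo j)) = c' p := (hc' hp1.le).antisymm ((hc' hp2.le).trans h2.ge)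
    have hlo := hx.right _ _ hp1 hcol
    have hhi := hx.right _ _ hp2 (hcol.symm.trans h2)
    simp only [lo, hi, Fin.lt_def, Perm.inv_def, apply_symm_apply] at hlo hhi
    omega
  obtain ⟨j', hj'⟩ : ∃ j' : Fin (n - 1), lo j' = x⁻¹ (lo j) := ⟨⟨(x⁻¹ (lo j)).val, by omega⟩, rfl⟩
  have hj'' : hi j' = x⁻¹ (hi j) := Fin.ext (by rw [hsucc, ← hj']; rfl)
  exact ⟨j', mem_youngIndices.2 (by rwa [hj', hj'']), hj', hj''⟩

variable [LinearOrder κ]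

theorem IsMinDoubleCosetRep.mul_right_unique (hc : Monotone c) {x x' u u' : Perm (Fin n)}
    (hx : IsMinDoubleCosetRep c c' x) (hx' : IsMinDoubleCosetRep c c' x')
    (hu : u ∈ youngSubgroup c) (hu' : u' ∈ youngSubgroup c) (h : u * x = u' * x') : x = x' := by
  have := hx.left.unique hc hx'.left (inv_mem hu) (inv_mem hu')
    (by rw [← mul_inv_rev, h, mul_inv_rev])
  exact inv_injective this.1

theorem IsMinDoubleCosetRep.isMinCosetRep_mul_iff (hc : Monotone c) {x : Perm (Fin n)}
    (hx : IsMinDoubleCosetRep c c' x) {u : Perm (Fin n)} (hu : u ∈ youngSubgroup c) :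
    IsMinCosetRep c' (u * x) ↔ IsMinCosetRep (meetColouring c c' x) u := by
  refine ⟨fun h a b hab hcab => ?_, fun h a b hab hcab => ?_⟩
  · obtain ⟨h1, h2⟩ := meetColouring_eq_iff.1 hcab
    simpa using h _ _ (hx.left a b hab h1) h2
  · have hlt := hx.right a b hab hcab
    rcases (hc hlt.le).lt_or_eq with hcol | hcol
    · exact apply_lt_apply_of_mem_youngSubgroup hc hu hcol
    · exact h _ _ hlt (meetColouring_eq_iff.2 ⟨hcol, by simpa using hcab⟩)

variable [LinearOrder κ']

theorem IsMinDoubleCosetRep.len_le (hc : Monotone c) (hc' : Monotone c') {x u v : Perm (Fin n)}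
    (hx : IsMinDoubleCosetRep c c' x) (hu : u ∈ youngSubgroup c) (hv : v ∈ youngSubgroup c') :
    len x ≤ len (u * x * v) := by
  change (inversions x).card ≤ (inversions (u * x * v)).card
  refine Finset.card_le_card_of_injOn (Prod.map ⇑v⁻¹ ⇑v⁻¹) (fun z hz => ?_)
    (v⁻¹.injective.prodMap v⁻¹.injective).injOn
  obtain ⟨hlt, hinv⟩ := mem_inversions.1 hz
  have hcol' : c' z.1 < c' z.2 := (hc' hlt.le).lt_of_ne fun e =>
    (hx.right _ _ hlt e).not_gt hinv
  refine mem_inversions.2 ⟨apply_lt_apply_of_mem_youngSubgroup hc' (inv_mem hv) hcol', ?_⟩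
  simpa using apply_lt_apply_of_mem_youngSubgroup hc hu
    (hx.left.colour_lt_of_inversion hc hlt hinv)

theorem isMinDoubleCosetRep_of_len_le (hc : Monotone c) (hc' : Monotone c') {x : Perm (Fin n)}
    (h : ∀ u v, u ∈ youngSubgroup c → v ∈ youngSubgroup c' → len x ≤ len (u * x * v)) :
    IsMinDoubleCosetRep c c' x where
  right := isMinCosetRep_of_simple hc' fun i hi =>
    (lt_or_gt_apply_lo_hi x i).resolve_right fun hdesc =>
      (len_mul_s_lt hdesc).not_ge (by simpa using h 1 (s i) (one_mem _) hi)
  left := isMinCosetRep_of_simple hc fun i hi =>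
    (lt_or_gt_apply_lo_hi x⁻¹ i).resolve_right fun hdesc => by
      have hlt := len_mul_s_lt hdesc
      rw [← len_inv (x⁻¹ * s i), mul_inv_rev, s_inv, inv_inv, len_inv] at hlt
      exact hlt.not_ge (by simpa using h (s i) 1 hi (one_mem _))

theorem exists_isMinDoubleCosetRep_le (hc : Monotone c) (hc' : Monotone c') (w : Perm (Fin n)) :
    ∃ x, IsMinDoubleCosetRep c c' x ∧
      w ∈ doubleCoset x (youngSubgroup c : Set (Perm (Fin n))) (youngSubgroup c') ∧
        BruhatLE x w := by
  obtain ⟨d, v, hd, hv, rfl, hdw⟩ := exists_isMinCosetRep_mul hc' w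
  obtain ⟨e, u, he, hu, hd', hed⟩ := exists_isMinCosetRep_mul hc d⁻¹
  obtain rfl : d = u⁻¹ * e⁻¹ := by rw [← mul_inv_rev, ← hd', inv_inv]
  have he' : IsMinCosetRep c e⁻¹⁻¹ := by rwa [inv_inv]
  refine ⟨e⁻¹, ⟨fun a b hab hcab => ?_, he'⟩,
    mem_doubleCoset.2 ⟨u⁻¹, inv_mem hu, v, hv, rfl⟩, hed.inv_right.trans hdw⟩
  refine (e⁻¹.injective.ne hab.ne).lt_of_le (not_lt.1 fun hgt => (hd a b hab hcab).not_gt ?_)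
  exact apply_lt_apply_of_mem_youngSubgroup hc (inv_mem hu) (he'.colour_lt_of_inversion hc hab hgt)

theorem BruhatLE.exists_isMinDoubleCosetRep_le (hc : Monotone c) (hc' : Monotone c')
    {x y w : Perm (Fin n)} (h : BruhatLE y w)
    (hw : w ∈ doubleCoset x (youngSubgroup c : Set (Perm (Fin n))) (youngSubgroup c')) :
    ∃ z, IsMinDoubleCosetRep c c' z ∧
      y ∈ doubleCoset z (youngSubgroup c : Set (Perm (Fin n))) (youngSubgroup c') ∧
        BruhatLE z x := by
  obtain ⟨u, hu, v, hv, rfl⟩ := mem_doubleCoset.1 hw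
  obtain ⟨v', hv', hle⟩ := h.exists_mul_le_of_le_mul hc' hv
  have hinv := hle.inv
  rw [mul_inv_rev u] at hinv
  obtain ⟨u', hu', hle'⟩ := hinv.exists_mul_le_of_le_mul hc (inv_mem hu)
  obtain ⟨z, hz, hmem, hzle⟩ := HC.exists_isMinDoubleCosetRep_le hc hc' ((y * v')⁻¹ * u')⁻¹
  refine ⟨z, hz, ?_, hzle.trans hle'.inv_right⟩
  rw [← doubleCoset_eq_of_mem hmem]
  exact mem_doubleCoset.2 ⟨u', hu', v'⁻¹, inv_mem hv', by group⟩

namespace IsMinDoubleCosetRep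

variable {x : Perm (Fin n)}

theorem monotone_meetColouring (hc : Monotone c) (hc' : Monotone c')
    (hx : IsMinDoubleCosetRep c c' x) : Monotone (meetColouring c c' x) := by
  intro a b hab
  rcases hab.eq_or_lt with rfl | hlt
  · exact le_rfl
  · exact Prod.Lex.toLex_le_toLex.2 ((hc hab).lt_or_eq.imp_right fun h =>
      ⟨h, hc' (hx.left a b hlt h).le⟩)

theorem exists_eq_mul (hc : Monotone c) (hc' : Monotone c') (hx : IsMinDoubleCosetRep c c' x)
    {d : Perm (Fin n)} (hd : IsMinCosetRep c' d)
    (hdx : d ∈ doubleCoset x (youngSubgroup c : Set (Perm (Fin n))) (youngSubgroup c')) :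
    ∃ u ∈ youngSubgroup c, IsMinCosetRep (meetColouring c c' x) u ∧ d = u * x := by
  obtain ⟨u, hu, v, hv, rfl⟩ := mem_doubleCoset.1 hdx
  obtain ⟨u₁, u₂, hu₁, hu₂, rfl, -⟩ :=
    exists_isMinCosetRep_mul (hx.monotone_meetColouring hc hc') u
  obtain ⟨hu₂c, hu₂c'⟩ := mem_youngSubgroup_meetColouring.1 hu₂
  have hu₁c : u₁ ∈ youngSubgroup c := by simpa using mul_mem hu (inv_mem hu₂c)
  refine ⟨u₁, hu₁c, hu₁, (hd.unique hc' ((hx.isMinCosetRep_mul_iff hc hu₁c).2 hu₁)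
    (one_mem _) (mul_mem hu₂c' hv) ?_).1⟩
  group

theorem eq_of_mem_doubleCoset (hc : Monotone c) (hc' : Monotone c') {x' : Perm (Fin n)}
    (hx : IsMinDoubleCosetRep c c' x) (hx' : IsMinDoubleCosetRep c c' x')
    (h : x' ∈ doubleCoset x (youngSubgroup c : Set (Perm (Fin n))) (youngSubgroup c')) :
    x' = x := by
  obtain ⟨u, hu, -, rfl⟩ := hx.exists_eq_mul hc hc' hx'.right h
  exact hx'.mul_right_unique hc hx (one_mem _) hu (one_mul _)

end IsMinDoubleCosetRep

end DoubleCosets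

/-! ### Clifford–Laurent and Hecke generators in an algebra -/

theorem lo_eq_hi_of_adjacent {n : ℕ} {i j : Fin (n - 1)} (h : (j : ℕ) = i + 1) : lo j = hi i :=
  Fin.ext h

theorem ne_of_far {n : ℕ} {i j : Fin (n - 1)} (h : (i : ℕ) + 1 < j ∨ (j : ℕ) + 1 < i) :
    lo i ≠ lo j ∧ lo i ≠ hi j ∧ hi i ≠ lo j ∧ hi i ≠ hi j := by
  simp only [lo, hi, ne_eq, Fin.ext_iff]
  omega

theorem hi_ne_of_adjacent {n : ℕ} {i j : Fin (n - 1)} (h : (j : ℕ) = i + 1) :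
    hi j ≠ lo i ∧ hi j ≠ hi i := by
  simp only [lo, hi, ne_eq, Fin.ext_iff]
  omega

theorem mul_mul_eq_of_mul_eq {S : Type*} [Semigroup S] {a b c : S} (h : a * b = c) (z : S) :
    a * (b * z) = c * z := by rw [← mul_assoc, h]

theorem inv_mul_eq_mul_inv {M : Type*} [Monoid M] {a a' b b' g : M} (ha : a' * a = 1)
    (hb : b * b' = 1) (h : a * g = g * b) : a' * g = g * b' := by
  calc a' * g = a' * (g * b) * b' := by rw [mul_assoc, mul_assoc, hb, mul_one]
    _ = g * b' := by rw [← h, ← mul_assoc, ha, one_mul]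

section Relations

variable {A R : Type*} [CommRing A] [Ring R] [Algebra A R] {n : ℕ} {x x' c : Fin n → R} {ξ : A}

/-- The relations of the Clifford–Laurent algebra: the `x j` commute, with inverses `x' j`, and the
`c j` are anticommuting involutions inverting the `x j`. -/
structure IsCliffordLaurent (x x' c : Fin n → R) : Prop where
  mul_inv : ∀ j, x j * x' j = 1
  inv_mul : ∀ j, x' j * x j = 1
  x_comm : ∀ j k, x j * x k = x k * x j
  c_sq : ∀ j, c j * c j = 1
  c_anticomm : ∀ j k, j ≠ k → c j * c k = -(c k * c j)
  c_mul_x : ∀ j, c j * x j = x' j * c j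
  c_mul_x_of_ne : ∀ j k, j ≠ k → c j * x k = x k * c j

namespace IsCliffordLaurent

theorem inv_comm (h : IsCliffordLaurent x x' c) (j k : Fin n) : x' j * x' k = x' k * x' j :=
  inv_mul_eq_mul_inv (h.inv_mul j) (h.mul_inv j)
    (inv_mul_eq_mul_inv (h.inv_mul k) (h.mul_inv k) (h.x_comm k j)).symm

theorem x_mul_inv (h : IsCliffordLaurent x x' c) (j k : Fin n) : x j * x' k = x' k * x j :=
  (inv_mul_eq_mul_inv (h.inv_mul k) (h.mul_inv k) (h.x_comm k j)).symm

theorem c_mul_inv (h : IsCliffordLaurent x x' c) (j : Fin n) : c j * x' j = x j * c j :=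
  (inv_mul_eq_mul_inv (h.mul_inv j) (h.mul_inv j) (h.c_mul_x j).symm).symm

theorem c_mul_inv_of_ne (h : IsCliffordLaurent x x' c) {j k : Fin n} (hjk : j ≠ k) :
    c j * x' k = x' k * c j :=
  (inv_mul_eq_mul_inv (h.inv_mul k) (h.mul_inv k) (h.c_mul_x_of_ne j k hjk).symm).symm

theorem comp (h : IsCliffordLaurent x x' c) {f : Fin n → Fin n} (hf : f.Injective) :
    IsCliffordLaurent (x ∘ f) (x' ∘ f) (c ∘ f) where
  mul_inv _ := h.mul_inv _
  inv_mul _ := h.inv_mul _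
  x_comm _ _ := h.x_comm _ _
  c_sq _ := h.c_sq _
  c_anticomm _ _ hjk := h.c_anticomm _ _ (hf.ne hjk)
  c_mul_x _ := h.c_mul_x _
  c_mul_x_of_ne _ _ hjk := h.c_mul_x_of_ne _ _ (hf.ne hjk)

theorem map {B S : Type*} [CommRing B] [Ring S] [Algebra B R] [Algebra B S]
    (h : IsCliffordLaurent x x' c) (f : R →ₐ[B] S) :
    IsCliffordLaurent (fun j => f (x j)) (fun j => f (x' j)) (fun j => f (c j)) where
  mul_inv j := by rw [← map_mul, h.mul_inv, map_one]
  inv_mul j := by rw [← map_mul, h.inv_mul, map_one]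
  x_comm j k := by rw [← map_mul, h.x_comm, map_mul]
  c_sq j := by rw [← map_mul, h.c_sq, map_one]
  c_anticomm j k hjk := by rw [← map_mul, h.c_anticomm j k hjk, map_neg, map_mul]
  c_mul_x j := by rw [← map_mul, h.c_mul_x, map_mul]
  c_mul_x_of_ne j k hjk := by rw [← map_mul, h.c_mul_x_of_ne j k hjk, map_mul]

end IsCliffordLaurent

/-- The commutation relations between a Hecke generator `t = T_i` and the Clifford–Laurent
generators, in the form `a t = t s_i(a) + d_i(a)`. -/
structure IsHeckeTwist (ξ : A) (x c : Fin n → R) (i : Fin (n - 1)) (t : R) : Prop where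
  x_lo : x (lo i) * t = t * x (hi i) + ξ • ((c (lo i) * c (hi i) - 1) * x (hi i))
  x_hi : x (hi i) * t = t * x (lo i) + ξ • (x (hi i) + c (lo i) * c (hi i) * x (lo i))
  x_of_ne : ∀ j, j ≠ lo i → j ≠ hi i → x j * t = t * x j
  c_lo : c (lo i) * t = t * c (hi i) + ξ • (c (lo i) - c (hi i))
  c_hi : c (hi i) * t = t * c (lo i)
  c_of_ne : ∀ j, j ≠ lo i → j ≠ hi i → c j * t = t * c j

/-- Right multiplication by `y` permutes the Clifford–Laurent generators according to `σ`. -/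
structure IsIntertwiner (x c : Fin n → R) (σ : Perm (Fin n)) (y : R) : Prop where
  x_mul : ∀ j, x j * y = y * x (σ j)
  c_mul : ∀ j, c j * y = y * c (σ j)

theorem eq_lo_or_eq_hi_or_ne (i : Fin (n - 1)) (j : Fin n) :
    j = lo i ∨ j = hi i ∨ j ≠ lo i ∧ j ≠ hi i := by
  tauto

namespace IsHeckeTwist

variable {i i' : Fin (n - 1)} {t t' : R}

theorem quadratic_mul_x (h : IsCliffordLaurent x x' c) (ht : IsHeckeTwist ξ x c i t)
    (j : Fin n) : x j * (t * t - ξ • t - 1) = (t * t - ξ • t - 1) * x j := by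
  have anti := h.c_anticomm (hi i) (lo i) (lo_ne_hi i).symm
  rcases eq_lo_or_eq_hi_or_ne i j with rfl | rfl | ⟨hlo, hhi⟩
  · simp only [mul_add, add_mul, mul_sub, sub_mul, smul_mul_assoc, mul_smul_comm, mul_assoc,
      one_mul, mul_one, smul_add, smul_sub, mul_neg, neg_mul, smul_neg, ht.x_lo, ht.x_hi,
      mul_mul_eq_of_mul_eq ht.x_lo, mul_mul_eq_of_mul_eq ht.c_lo, mul_mul_eq_of_mul_eq ht.c_hi,
      mul_mul_eq_of_mul_eq anti, mul_mul_eq_of_mul_eq (h.c_sq _)]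
    module
  · simp only [mul_add, add_mul, mul_sub, sub_mul, smul_mul_assoc, mul_smul_comm, mul_assoc,
      one_mul, mul_one, smul_add, smul_sub, mul_neg, neg_mul, smul_neg, ht.x_lo, ht.x_hi,
      mul_mul_eq_of_mul_eq ht.x_hi, mul_mul_eq_of_mul_eq ht.c_lo, mul_mul_eq_of_mul_eq ht.c_hi,
      mul_mul_eq_of_mul_eq anti, mul_mul_eq_of_mul_eq (h.c_sq _)]
    module
  · have comm := ht.x_of_ne j hlo hhi
    simp only [mul_sub, sub_mul, mul_smul_comm, smul_mul_assoc, mul_assoc, comm,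
      mul_mul_eq_of_mul_eq comm, mul_one, one_mul]

theorem quadratic_mul_c (ht : IsHeckeTwist ξ x c i t) (j : Fin n) :
    c j * (t * t - ξ • t - 1) = (t * t - ξ • t - 1) * c j := by
  rcases eq_lo_or_eq_hi_or_ne i j with rfl | rfl | ⟨hlo, hhi⟩
  · simp only [add_mul, mul_sub, sub_mul, smul_mul_assoc, mul_smul_comm, mul_assoc, one_mul,
      mul_one, smul_add, smul_sub, ht.c_lo, ht.c_hi, mul_mul_eq_of_mul_eq ht.c_lo]
    module
  · simp only [mul_add, mul_sub, sub_mul, smul_mul_assoc, mul_smul_comm, mul_assoc, one_mul,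
      mul_one, smul_sub, ht.c_lo, ht.c_hi, mul_mul_eq_of_mul_eq ht.c_hi]
    module
  · have comm := ht.c_of_ne j hlo hhi
    simp only [mul_sub, sub_mul, mul_smul_comm, smul_mul_assoc, mul_assoc, comm,
      mul_mul_eq_of_mul_eq comm, mul_one, one_mul]

theorem isIntertwiner_quadratic (h : IsCliffordLaurent x x' c) (ht : IsHeckeTwist ξ x c i t) :
    IsIntertwiner x c 1 (t * t - ξ • t - 1) :=
  ⟨ht.quadratic_mul_x h, ht.quadratic_mul_c⟩

theorem c_mul_c_mul (h : IsCliffordLaurent x x' c)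
    (c_lo : c (lo i) * t = t * c (hi i) + ξ • (c (lo i) - c (hi i)))
    (c_hi : c (hi i) * t = t * c (lo i)) :
    c (lo i) * (c (hi i) * t)
      = -(t * (c (lo i) * c (hi i))) + ξ • (1 + c (lo i) * c (hi i)) := by
  rw [c_hi, ← mul_assoc, c_lo]
  simp only [add_mul, sub_mul, smul_mul_assoc, mul_assoc, h.c_sq,
    h.c_anticomm (hi i) (lo i) (lo_ne_hi i).symm, mul_neg]
  module

theorem c_mul_c_mul_self (h : IsCliffordLaurent x x' c) (i : Fin (n - 1)) :
    c (lo i) * (c (hi i) * (c (lo i) * c (hi i))) = -1 := by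
  rw [mul_mul_eq_of_mul_eq (h.c_anticomm _ _ (lo_ne_hi i).symm), neg_mul, mul_neg, mul_assoc,
    h.c_sq, mul_one, h.c_sq]

theorem cross_mul_inv (h : IsCliffordLaurent x x' c)
    (c_lo : c (lo i) * t = t * c (hi i) + ξ • (c (lo i) - c (hi i)))
    (c_hi : c (hi i) * t = t * c (lo i)) (hquad : t * t = ξ • t + 1) :
    (t + ξ • (c (lo i) * c (hi i))) * (t + ξ • (c (lo i) * c (hi i)) - ξ • 1) = 1 ∧
      (t + ξ • (c (lo i) * c (hi i)) - ξ • 1) * (t + ξ • (c (lo i) * c (hi i))) = 1 := by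
  constructor <;>
  · simp only [mul_add, add_mul, mul_sub, sub_mul, smul_mul_assoc, mul_smul_comm, mul_assoc,
      one_mul, mul_one, smul_add, smul_neg, hquad, c_mul_c_mul h c_lo c_hi, c_mul_c_mul_self h i]
    module

theorem cross (h : IsCliffordLaurent x x' c) (ht : IsHeckeTwist ξ x c i t)
    (hquad : t * t = ξ • t + 1) :
    (t + ξ • (c (lo i) * c (hi i))) * x (lo i) * t = x (hi i) := by
  have hx : x (lo i) * t = (t + ξ • (c (lo i) * c (hi i)) - ξ • 1) * x (hi i) := by
    rw [ht.x_lo]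
    simp only [add_mul, sub_mul, smul_mul_assoc]
    module
  rw [mul_assoc, hx, ← mul_assoc, (cross_mul_inv h ht.c_lo ht.c_hi hquad).1, one_mul]

theorem c_lo_of_quadratic (hquad : t * t = ξ • t + 1) (c_hi : c (hi i) * t = t * c (lo i)) :
    c (lo i) * t = t * c (hi i) + ξ • (c (lo i) - c (hi i)) := by
  have right_inv : t * (t - ξ • 1) = 1 := by
    simp only [mul_sub, hquad, mul_smul_comm, mul_one]
    module
  have left_inv : (t - ξ • 1) * t = 1 := by
    simp only [sub_mul, hquad, smul_mul_assoc, one_mul]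
    module
  have hinv : c (lo i) * (t - ξ • 1) = (t - ξ • 1) * c (hi i) := by
    calc c (lo i) * (t - ξ • 1) = (t - ξ • 1) * (t * c (lo i)) * (t - ξ • 1) := by
          rw [← mul_assoc, left_inv, one_mul]
      _ = (t - ξ • 1) * c (hi i) * (t * (t - ξ • 1)) := by rw [← c_hi]; simp only [mul_assoc]
      _ = (t - ξ • 1) * c (hi i) := by rw [right_inv, mul_one]
  simp only [mul_sub, sub_mul, mul_smul_comm, smul_mul_assoc, one_mul, mul_one] at hinv
  rw [sub_eq_iff_eq_add.1 hinv]
  module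

theorem of_relations (h : IsCliffordLaurent x x' c) (hquad : t * t = ξ • t + 1)
    (c_hi : c (hi i) * t = t * c (lo i))
    (c_of_ne : ∀ j, j ≠ lo i → j ≠ hi i → c j * t = t * c j)
    (x_of_ne : ∀ j, j ≠ lo i → j ≠ hi i → x j * t = t * x j)
    (hcross : (t + ξ • (c (lo i) * c (hi i))) * x (lo i) * t = x (hi i)) :
    IsHeckeTwist ξ x c i t := by
  have c_lo := c_lo_of_quadratic hquad c_hi
  refine ⟨?_, ?_, x_of_ne, c_lo, c_hi, c_of_ne⟩
  · have hx : x (lo i) * t = (t + ξ • (c (lo i) * c (hi i)) - ξ • 1) * x (hi i) := by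
      rw [← hcross, mul_assoc (t + _), ← mul_assoc, (cross_mul_inv h c_lo c_hi hquad).2, one_mul]
    rw [hx]
    simp only [add_mul, sub_mul, smul_mul_assoc, mul_assoc]
    module
  · calc x (hi i) * t
        = (t + ξ • (c (lo i) * c (hi i))) * x (lo i) * (ξ • t + 1) := by
          rw [← hcross, mul_assoc _ t t, hquad]
      _ = ξ • x (hi i) + (t + ξ • (c (lo i) * c (hi i))) * x (lo i) := by
          rw [mul_add, mul_smul_comm, hcross, mul_one]
      _ = t * x (lo i) + ξ • (x (hi i) + c (lo i) * c (hi i) * x (lo i)) := by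
          simp only [add_mul, smul_mul_assoc]
          module

theorem c_mul_braid (ht : IsHeckeTwist ξ x c i t) (ht' : IsHeckeTwist ξ x c i' t')
    (hii' : (i' : ℕ) = i + 1) (hquad : t * t = ξ • t + 1) (hquad' : t' * t' = ξ • t' + 1)
    (j : Fin n) :
    c j * (t * t' * t - t' * t * t')
      = (t * t' * t - t' * t * t') * c (swap (lo i) (hi i') j) := by
  obtain ⟨hlo, hhi⟩ := hi_ne_of_adjacent hii'
  have c_lo' := ht'.c_lo
  have c_hi' := ht'.c_hi
  have c_of_ne := ht.c_of_ne _ hlo hhi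
  have c_of_ne' := ht'.c_of_ne (lo i) (lo_eq_hi_of_adjacent hii' ▸ lo_ne_hi i) hlo.symm
  rw [lo_eq_hi_of_adjacent hii'] at c_lo' c_hi'
  by_cases hj : j = lo i ∨ j = hi i ∨ j = hi i'
  · rcases hj with rfl | rfl | rfl
    on_goal 1 => rw [swap_apply_left]
    on_goal 2 => rw [swap_apply_of_ne_of_ne (lo_ne_hi i).symm hhi.symm]
    on_goal 3 => rw [swap_apply_right]
    all_goals
      simp only [mul_add, add_mul, mul_sub, sub_mul, smul_mul_assoc, mul_smul_comm, mul_assoc,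
        one_mul, smul_add, smul_sub, ht.c_lo, ht.c_hi, c_of_ne, c_lo', c_hi', c_of_ne',
        mul_mul_eq_of_mul_eq ht.c_lo, mul_mul_eq_of_mul_eq ht.c_hi,
        mul_mul_eq_of_mul_eq c_of_ne, mul_mul_eq_of_mul_eq c_lo', mul_mul_eq_of_mul_eq c_hi',
        mul_mul_eq_of_mul_eq c_of_ne', mul_mul_eq_of_mul_eq hquad, mul_mul_eq_of_mul_eq hquad']
      try module
  · push Not at hj
    have comm := ht.c_of_ne j hj.1 hj.2.1
    have comm' := ht'.c_of_ne j (lo_eq_hi_of_adjacent hii' ▸ hj.2.1) hj.2.2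
    rw [swap_apply_of_ne_of_ne hj.1 hj.2.2]
    simp only [mul_sub, sub_mul, mul_assoc, comm, comm', mul_mul_eq_of_mul_eq comm,
      mul_mul_eq_of_mul_eq comm']

theorem x_mul_braid (h : IsCliffordLaurent x x' c) (ht : IsHeckeTwist ξ x c i t)
    (ht' : IsHeckeTwist ξ x c i' t') (hii' : (i' : ℕ) = i + 1) (hquad : t * t = ξ • t + 1)
    (hquad' : t' * t' = ξ • t' + 1) (j : Fin n) :
    x j * (t * t' * t - t' * t * t')
      = (t * t' * t - t' * t * t') * x (swap (lo i) (hi i') j) := by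
  obtain ⟨hlo, hhi⟩ := hi_ne_of_adjacent hii'
  obtain ⟨x_lo', x_hi', -, c_lo', c_hi', -⟩ := id ht'
  have x_of_ne := ht.x_of_ne _ hlo hhi
  have c_of_ne := ht.c_of_ne _ hlo hhi
  have hlo' : lo i ≠ lo i' := lo_eq_hi_of_adjacent hii' ▸ lo_ne_hi i
  have x_of_ne' := ht'.x_of_ne (lo i) hlo' hlo.symm
  have c_of_ne' := ht'.c_of_ne (lo i) hlo' hlo.symm
  rw [lo_eq_hi_of_adjacent hii'] at x_lo' x_hi' c_lo' c_hi'
  by_cases hj : j = lo i ∨ j = hi i ∨ j = hi i'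
  · rcases hj with rfl | rfl | rfl
    on_goal 1 => rw [swap_apply_left]
    on_goal 2 => rw [swap_apply_of_ne_of_ne (lo_ne_hi i).symm hhi.symm]
    on_goal 3 => rw [swap_apply_right]
    all_goals
      simp only [mul_add, add_mul, mul_sub, sub_mul, smul_mul_assoc, mul_smul_comm, mul_assoc,
        one_mul, smul_add, smul_sub, mul_neg, neg_mul, smul_neg, neg_neg, ht.x_lo, ht.x_hi,
        x_of_ne, x_lo', x_hi', x_of_ne', mul_mul_eq_of_mul_eq ht.x_lo,
        mul_mul_eq_of_mul_eq ht.x_hi, mul_mul_eq_of_mul_eq x_of_ne, mul_mul_eq_of_mul_eq x_lo',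
        mul_mul_eq_of_mul_eq x_hi', mul_mul_eq_of_mul_eq x_of_ne', mul_mul_eq_of_mul_eq ht.c_lo,
        mul_mul_eq_of_mul_eq ht.c_hi, mul_mul_eq_of_mul_eq c_of_ne, mul_mul_eq_of_mul_eq c_lo',
        mul_mul_eq_of_mul_eq c_hi', mul_mul_eq_of_mul_eq c_of_ne', mul_mul_eq_of_mul_eq hquad,
        mul_mul_eq_of_mul_eq hquad', mul_mul_eq_of_mul_eq (h.c_sq _),
        mul_mul_eq_of_mul_eq (h.c_anticomm _ _ hlo), mul_mul_eq_of_mul_eq (h.c_anticomm _ _ hhi),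
        mul_mul_eq_of_mul_eq (h.c_anticomm _ _ (lo_ne_hi i).symm)]
      module
  · push Not at hj
    have comm := ht.x_of_ne j hj.1 hj.2.1
    have comm' := ht'.x_of_ne j (lo_eq_hi_of_adjacent hii' ▸ hj.2.1) hj.2.2
    rw [swap_apply_of_ne_of_ne hj.1 hj.2.2]
    simp only [mul_sub, sub_mul, mul_assoc, comm, comm', mul_mul_eq_of_mul_eq comm,
      mul_mul_eq_of_mul_eq comm']

theorem isIntertwiner_braid (h : IsCliffordLaurent x x' c) (ht : IsHeckeTwist ξ x c i t)
    (ht' : IsHeckeTwist ξ x c i' t') (hii' : (i' : ℕ) = i + 1) (hquad : t * t = ξ • t + 1)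
    (hquad' : t' * t' = ξ • t' + 1) :
    IsIntertwiner x c (swap (lo i) (hi i')) (t * t' * t - t' * t * t') :=
  ⟨x_mul_braid h ht ht' hii' hquad hquad', c_mul_braid ht ht' hii' hquad hquad'⟩

theorem mul_commutator_of_mul_eq {a a' b : R} (ha : a * t = t * a' + b) (hat' : a * t' = t' * a)
    (ha't' : a' * t' = t' * a') (hbt' : b * t' = t' * b) :
    a * (t * t' - t' * t) = (t * t' - t' * t) * a' := by
  simp only [mul_sub, sub_mul, mul_mul_eq_of_mul_eq ha, mul_mul_eq_of_mul_eq hat', ha, ha't', hbt',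
    add_mul, mul_add, mul_assoc]
  abel

theorem mul_commutator_of_ne (ht : IsHeckeTwist ξ x c i t) (ht' : IsHeckeTwist ξ x c i' t')
    (hii' : (i : ℕ) + 1 < i' ∨ (i' : ℕ) + 1 < i) {j : Fin n} (hlo : j ≠ lo i') (hhi : j ≠ hi i') :
    x j * (t * t' - t' * t) = (t * t' - t' * t) * x (s i j) ∧
      c j * (t * t' - t' * t) = (t * t' - t' * t) * c (s i j) := by
  obtain ⟨h₁, h₂, h₃, h₄⟩ := ne_of_far hii'
  have x_lo := ht'.x_of_ne _ h₁ h₂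
  have x_hi := ht'.x_of_ne _ h₃ h₄
  have c_lo := ht'.c_of_ne _ h₁ h₂
  have c_hi := ht'.c_of_ne _ h₃ h₄
  rcases eq_lo_or_eq_hi_or_ne i j with rfl | rfl | ⟨hj, hj'⟩
  · rw [s_apply_lo]
    constructor
    · refine mul_commutator_of_mul_eq ht.x_lo x_lo x_hi ?_
      simp only [mul_sub, sub_mul, smul_mul_assoc, mul_smul_comm, mul_assoc, one_mul, x_hi,
        mul_mul_eq_of_mul_eq c_lo, mul_mul_eq_of_mul_eq c_hi]
    · refine mul_commutator_of_mul_eq ht.c_lo c_lo c_hi ?_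
      simp only [mul_sub, sub_mul, smul_mul_assoc, mul_smul_comm, c_lo, c_hi]
  · rw [s_apply_hi]
    constructor
    · refine mul_commutator_of_mul_eq ht.x_hi x_hi x_lo ?_
      simp only [mul_add, add_mul, smul_mul_assoc, mul_smul_comm, mul_assoc, x_lo, x_hi,
        mul_mul_eq_of_mul_eq c_lo, mul_mul_eq_of_mul_eq c_hi]
    · exact mul_commutator_of_mul_eq (by rw [ht.c_hi, add_zero]) c_hi c_lo (by simp)
  · have x_comm := ht'.x_of_ne j hlo hhi
    have c_comm := ht'.c_of_ne j hlo hhi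
    rw [s_apply_of_ne hj hj']
    exact ⟨mul_commutator_of_mul_eq (by rw [ht.x_of_ne j hj hj', add_zero]) x_comm x_comm
        (by simp),
      mul_commutator_of_mul_eq (by rw [ht.c_of_ne j hj hj', add_zero]) c_comm c_comm (by simp)⟩

theorem isIntertwiner_commutator (ht : IsHeckeTwist ξ x c i t) (ht' : IsHeckeTwist ξ x c i' t')
    (hii' : (i : ℕ) + 1 < i') : IsIntertwiner x c (s i * s i') (t * t' - t' * t) := by
  suffices key : ∀ j, x j * (t * t' - t' * t) = (t * t' - t' * t) * x ((s i * s i') j) ∧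
      c j * (t * t' - t' * t) = (t * t' - t' * t) * c ((s i * s i') j) from
    ⟨fun j => (key j).1, fun j => (key j).2⟩
  intro j
  obtain ⟨h₁, h₂, h₃, h₄⟩ := ne_of_far (.inl hii')
  by_cases hj : j ≠ lo i' ∧ j ≠ hi i'
  · rw [Perm.mul_apply, s_apply_of_ne hj.1 hj.2]
    exact mul_commutator_of_ne ht ht' (.inl hii') hj.1 hj.2
  · have hj' : j ≠ lo i ∧ j ≠ hi i := by grind
    have hs : (s i * s i') j = s i' j := by
      rw [Perm.mul_apply]
      grind [s_apply_of_ne, s_apply_lo, s_apply_hi]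
    rw [hs, ← neg_sub (t' * t), mul_neg, mul_neg, neg_mul, neg_mul, neg_inj, neg_inj]
    exact mul_commutator_of_ne ht' ht (.inr hii') hj'.1 hj'.2

end IsHeckeTwist

end Relations

/-! ### The Clifford–Laurent algebra and its skew derivations -/

section SkewDerivation

variable {A R : Type*} [CommRing A] [Ring R] [Algebra A R] {n : ℕ} (ξ : A) (x x' c : Fin n → R)
  (i : Fin (n - 1))

/-- The value `d_i(x_j)` of the skew derivation `d_i` with `x_j T_i = T_i s_i(x_j) + d_i(x_j)`. -/
def derX (j : Fin n) : R :=
  if j = lo i then ξ • ((c (lo i) * c (hi i) - 1) * x (hi i))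
  else if j = hi i then ξ • (x (hi i) + c (lo i) * c (hi i) * x (lo i)) else 0

/-- The value `d_i(c_j)` of the skew derivation `d_i` with `c_j T_i = T_i s_i(c_j) + d_i(c_j)`. -/
def derC (j : Fin n) : R := if j = lo i then ξ • (c (lo i) - c (hi i)) else 0

/-- The value `d_i(x_j⁻¹)` of the skew derivation `d_i`, forced by `d_i(x_j x_j⁻¹) = 0`. -/
def derXinv (j : Fin n) : R := -(x' j * derX ξ x c i j * x' (s i j))

theorem derX_lo : derX ξ x c i (lo i) = ξ • ((c (lo i) * c (hi i) - 1) * x (hi i)) := if_pos rfl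

theorem derX_hi :
    derX ξ x c i (hi i) = ξ • (x (hi i) + c (lo i) * c (hi i) * x (lo i)) := by
  rw [derX, if_neg (lo_ne_hi i).symm, if_pos rfl]

theorem derC_lo : derC ξ c i (lo i) = ξ • (c (lo i) - c (hi i)) := if_pos rfl

variable {i} {j : Fin n}

theorem derX_of_ne (hlo : j ≠ lo i) (hhi : j ≠ hi i) : derX ξ x c i j = 0 := by
  rw [derX, if_neg hlo, if_neg hhi]

theorem derC_of_ne (hlo : j ≠ lo i) : derC ξ c i j = 0 := if_neg hlo

namespace IsHeckeTwist

variable {ξ x x' c} {t : R}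

theorem x_mul (ht : IsHeckeTwist ξ x c i t) (j : Fin n) :
    x j * t = t * x (s i j) + derX ξ x c i j := by
  rcases eq_lo_or_eq_hi_or_ne i j with rfl | rfl | ⟨hlo, hhi⟩
  · rw [s_apply_lo, derX_lo, ht.x_lo]
  · rw [s_apply_hi, derX_hi, ht.x_hi]
  · rw [s_apply_of_ne hlo hhi, derX_of_ne ξ x c hlo hhi, ht.x_of_ne j hlo hhi, add_zero]

theorem c_mul (ht : IsHeckeTwist ξ x c i t) (j : Fin n) :
    c j * t = t * c (s i j) + derC ξ c i j := by
  rcases eq_lo_or_eq_hi_or_ne i j with rfl | rfl | ⟨hlo, hhi⟩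
  · rw [s_apply_lo, derC_lo, ht.c_lo]
  · rw [s_apply_hi, derC_of_ne ξ c (lo_ne_hi i).symm, ht.c_hi, add_zero]
  · rw [s_apply_of_ne hlo hhi, derC_of_ne ξ c hlo, ht.c_of_ne j hlo hhi, add_zero]

theorem inv_mul (h : IsCliffordLaurent x x' c) (ht : IsHeckeTwist ξ x c i t) (j : Fin n) :
    x' j * t = t * x' (s i j) + derXinv ξ x x' c i j := by
  have conj : x' j * (x j * t) * x' (s i j)
      = x' j * (t * x (s i j) + derX ξ x c i j) * x' (s i j) := by rw [ht.x_mul]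
  rw [← mul_assoc, h.inv_mul, one_mul, mul_add, add_mul, ← mul_assoc, mul_assoc _ (x _),
    h.mul_inv, mul_one] at conj
  rw [conj, derXinv, add_neg_cancel_right]

end IsHeckeTwist

namespace IsCliffordLaurent

variable {x x' c} (h : IsCliffordLaurent x x' c)
include h

theorem commute_x_derX (hlo : j ≠ lo i) (hhi : j ≠ hi i) (k : Fin n) :
    Commute (x j) (derX ξ x c i k) := by
  have comm_c {l} (hl : j ≠ l) : Commute (x j) (c l) := (h.c_mul_x_of_ne l j hl.symm).symm
  have comm_x l : Commute (x j) (x l) := h.x_comm j l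
  rw [derX]
  split_ifs
  · exact ((((comm_c hlo).mul_right (comm_c hhi)).sub_right (.one_right _)).mul_right
      (comm_x _)).smul_right _
  · exact ((comm_x _).add_right (((comm_c hlo).mul_right (comm_c hhi)).mul_right
      (comm_x _))).smul_right _
  · exact .zero_right _

theorem commute_x_derC (hlo : j ≠ lo i) (hhi : j ≠ hi i) (k : Fin n) :
    Commute (x j) (derC ξ c i k) := by
  have comm_c {l} (hl : j ≠ l) : Commute (x j) (c l) := (h.c_mul_x_of_ne l j hl.symm).symm
  rw [derC]
  split_ifs
  · exact ((comm_c hlo).sub_right (comm_c hhi)).smul_right _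
  · exact .zero_right _

theorem commute_c_derX (hlo : j ≠ lo i) (hhi : j ≠ hi i) (k : Fin n) :
    Commute (c j) (derX ξ x c i k) := by
  have comm_cc : Commute (c j) (c (lo i) * c (hi i)) := by
    rw [Commute, SemiconjBy, ← mul_assoc, h.c_anticomm j _ hlo, neg_mul, mul_assoc,
      h.c_anticomm j _ hhi, mul_neg, neg_neg, mul_assoc]
  have comm_x {l} (hl : j ≠ l) : Commute (c j) (x l) := h.c_mul_x_of_ne j l hl
  rw [derX]
  split_ifs
  · exact ((comm_cc.sub_right (.one_right _)).mul_right (comm_x hhi)).smul_right _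
  · exact ((comm_x hhi).add_right (comm_cc.mul_right (comm_x hlo))).smul_right _
  · exact .zero_right _

theorem c_mul_derC_of_ne (hlo : j ≠ lo i) (hhi : j ≠ hi i) (k : Fin n) :
    c j * derC ξ c i k = -(derC ξ c i k * c j) := by
  rw [derC]
  split_ifs
  · rw [mul_smul_comm, smul_mul_assoc, ← smul_neg, mul_sub, sub_mul, h.c_anticomm j _ hlo,
      h.c_anticomm j _ hhi, neg_sub_neg, neg_sub]
  · rw [mul_zero, zero_mul, neg_zero]

theorem x_mul_derX_add (j k : Fin n) :
    x j * derX ξ x c i k + derX ξ x c i j * x (s i k)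
      = x k * derX ξ x c i j + derX ξ x c i k * x (s i j) := by
  have lo_hi : x (lo i) * derX ξ x c i (hi i) + derX ξ x c i (lo i) * x (lo i)
      = x (hi i) * derX ξ x c i (lo i) + derX ξ x c i (hi i) * x (hi i) := by
    have x_c (j) := mul_mul_eq_of_mul_eq (h.c_mul_inv j).symm
    have x_c_of_ne {j k} (hjk : j ≠ k) := mul_mul_eq_of_mul_eq (h.c_mul_x_of_ne j k hjk).symm
    have inv_c := mul_mul_eq_of_mul_eq (h.c_mul_inv_of_ne (lo_ne_hi i).symm).symm
    simp only [derX_lo, derX_hi, mul_add, add_mul, sub_mul, mul_sub, smul_mul_assoc, mul_smul_comm,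
      mul_assoc, one_mul, mul_one, x_c, x_c_of_ne (lo_ne_hi i), inv_c, h.inv_mul,
      h.x_comm (hi i) (lo i)]
    module
  have of_ne {j} (hlo : j ≠ lo i) (hhi : j ≠ hi i) (k) :
      x j * derX ξ x c i k + derX ξ x c i j * x (s i k)
        = x k * derX ξ x c i j + derX ξ x c i k * x (s i j) := by
    rw [derX_of_ne ξ x c hlo hhi, s_apply_of_ne hlo hhi, (h.commute_x_derX ξ hlo hhi k).eq,
      zero_mul, mul_zero, add_comm]
  rcases eq_lo_or_eq_hi_or_ne i j with rfl | rfl | ⟨hlo, hhi⟩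
  on_goal 3 => exact of_ne hlo hhi k
  · rcases eq_lo_or_eq_hi_or_ne i k with rfl | rfl | ⟨hlo, hhi⟩
    · rfl
    · rw [s_apply_lo, s_apply_hi, lo_hi]
    · exact (of_ne hlo hhi _).symm
  · rcases eq_lo_or_eq_hi_or_ne i k with rfl | rfl | ⟨hlo, hhi⟩
    · rw [s_apply_lo, s_apply_hi, lo_hi]
    · rfl
    · exact (of_ne hlo hhi _).symm

theorem c_mul_derC_add_self (j : Fin n) : c j * derC ξ c i j + derC ξ c i j * c (s i j) = 0 := by
  by_cases hlo : j = lo i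
  · subst hlo
    simp only [s_apply_lo, derC_lo, mul_smul_comm, smul_mul_assoc, mul_sub, sub_mul, h.c_sq]
    module
  · rw [derC_of_ne ξ c hlo, mul_zero, zero_mul, add_zero]

theorem c_mul_derC_add {j k : Fin n} (hjk : j ≠ k) :
    c j * derC ξ c i k + derC ξ c i j * c (s i k)
      = -(c k * derC ξ c i j + derC ξ c i k * c (s i j)) := by
  have lo_hi : c (lo i) * derC ξ c i (hi i) + derC ξ c i (lo i) * c (lo i)
      = -(c (hi i) * derC ξ c i (lo i) + derC ξ c i (hi i) * c (hi i)) := by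
    simp only [derC_lo, derC_of_ne ξ c (lo_ne_hi i).symm, mul_smul_comm, smul_mul_assoc, mul_sub,
      sub_mul, h.c_sq, mul_zero, zero_mul]
    module
  have of_ne {j} (hlo : j ≠ lo i) (hhi : j ≠ hi i) (k) :
      c j * derC ξ c i k + derC ξ c i j * c (s i k)
        = -(c k * derC ξ c i j + derC ξ c i k * c (s i j)) := by
    rw [derC_of_ne ξ c hlo, s_apply_of_ne hlo hhi, h.c_mul_derC_of_ne ξ hlo hhi, zero_mul,
      mul_zero, zero_add, add_zero]
  rcases eq_lo_or_eq_hi_or_ne i j with rfl | rfl | ⟨hlo, hhi⟩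
  on_goal 3 => exact of_ne hlo hhi k
  · rcases eq_lo_or_eq_hi_or_ne i k with rfl | rfl | ⟨hlo, hhi⟩
    · exact absurd rfl hjk
    · rw [s_apply_lo, s_apply_hi, lo_hi]
    · exact (neg_eq_iff_eq_neg.2 (of_ne hlo hhi _)).symm
  · rcases eq_lo_or_eq_hi_or_ne i k with rfl | rfl | ⟨hlo, hhi⟩
    · rw [s_apply_lo, s_apply_hi, lo_hi, neg_neg]
    · exact absurd rfl hjk
    · exact (neg_eq_iff_eq_neg.2 (of_ne hlo hhi _)).symm

theorem c_mul_derX_add_self (j : Fin n) :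
    c j * derX ξ x c i j + derC ξ c i j * x (s i j)
      = x' j * derC ξ c i j + derXinv ξ x x' c i j * c (s i j) := by
  have c_c (j) := mul_mul_eq_of_mul_eq (h.c_sq j)
  have anti := h.c_anticomm (hi i) (lo i) (lo_ne_hi i).symm
  have inv_x (j) := mul_mul_eq_of_mul_eq (h.inv_mul j)
  have x_inv (j) := mul_mul_eq_of_mul_eq (h.mul_inv j)
  rcases eq_lo_or_eq_hi_or_ne i j with rfl | rfl | ⟨hlo, hhi⟩
  · simp only [derXinv, derX_lo, derC_lo, s_apply_lo, smul_mul_assoc, mul_smul_comm, mul_assoc,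
      neg_mul, sub_mul, mul_sub, one_mul, c_c, x_inv, h.c_sq, mul_one]
    module
  · simp only [derXinv, derX_hi, derC_of_ne ξ c (lo_ne_hi i).symm, s_apply_hi, smul_mul_assoc,
      mul_smul_comm, mul_assoc, add_mul, mul_add, one_mul, inv_x, x_inv, anti, h.c_mul_x,
      mul_mul_eq_of_mul_eq anti, c_c, mul_neg, neg_mul, mul_zero, zero_mul]
    module
  · rw [derXinv, derX_of_ne ξ x c hlo hhi, derC_of_ne ξ c hlo]
    simp only [mul_zero, zero_mul, neg_zero]

theorem c_mul_derX_add {j k : Fin n} (hjk : j ≠ k) :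
    c j * derX ξ x c i k + derC ξ c i j * x (s i k)
      = x k * derC ξ c i j + derX ξ x c i k * c (s i j) := by
  have c_c (j) := mul_mul_eq_of_mul_eq (h.c_sq j)
  have anti := mul_mul_eq_of_mul_eq (h.c_anticomm (hi i) (lo i) (lo_ne_hi i).symm)
  have x_c {j k} (hjk : j ≠ k) := (h.c_mul_x_of_ne j k hjk).symm
  by_cases hj : j ≠ lo i ∧ j ≠ hi i
  · rw [derC_of_ne ξ c hj.1, s_apply_of_ne hj.1 hj.2, (h.commute_c_derX ξ hj.1 hj.2 k).eq,
      zero_mul, mul_zero, zero_add, add_zero]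
  by_cases hk : k ≠ lo i ∧ k ≠ hi i
  · rw [derX_of_ne ξ x c hk.1 hk.2, s_apply_of_ne hk.1 hk.2, (h.commute_x_derC ξ hk.1 hk.2 j).eq,
      zero_mul, mul_zero, zero_add, add_zero]
  obtain ⟨rfl, rfl⟩ | ⟨rfl, rfl⟩ : j = lo i ∧ k = hi i ∨ j = hi i ∧ k = lo i := by grind
  · simp only [derX_hi, derC_lo, s_apply_lo, s_apply_hi, smul_mul_assoc, mul_smul_comm, mul_assoc,
      add_mul, mul_add, sub_mul, mul_sub, c_c, x_c (lo_ne_hi i).symm, x_c (lo_ne_hi i), one_mul]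
    module
  · simp only [derX_lo, derC_of_ne ξ c (lo_ne_hi i).symm, s_apply_lo, s_apply_hi, smul_mul_assoc,
      mul_smul_comm, mul_assoc, sub_mul, mul_sub, one_mul, anti, c_c, x_c (lo_ne_hi i), neg_mul,
      mul_neg, mul_zero, zero_mul]
    module

variable (i) in
/-- The skew derivation `d_i` and the permutation `s_i` assemble into upper triangular matrices
`!![a, d_i a; 0, s_i a]`. -/
theorem upperTriangular :
    IsCliffordLaurent (fun j => !![x j, derX ξ x c i j; 0, x (s i j)])
      (fun j => !![x' j, derXinv ξ x x' c i j; 0, x' (s i j)])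
      (fun j => !![c j, derC ξ c i j; 0, c (s i j)]) where
  mul_inv j := by
    simp [Matrix.one_fin_two, h.mul_inv, derXinv, ← mul_assoc]
  inv_mul j := by
    simp [Matrix.one_fin_two, h.inv_mul, derXinv, mul_assoc]
  x_comm j k := by simp [h.x_comm j k, h.x_comm (s i j), h.x_mul_derX_add ξ j k]
  c_sq j := by simp [Matrix.one_fin_two, h.c_sq, h.c_mul_derC_add_self ξ j]
  c_anticomm j k hjk := by
    simp [h.c_anticomm j k hjk, h.c_anticomm _ _ ((s i).injective.ne hjk),
      h.c_mul_derC_add ξ hjk]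
  c_mul_x j := by simp [h.c_mul_x, h.c_mul_derX_add_self ξ j]
  c_mul_x_of_ne j k hjk := by
    simp [h.c_mul_x_of_ne j k hjk, h.c_mul_x_of_ne _ _ ((s i).injective.ne hjk),
      h.c_mul_derX_add ξ hjk]

end IsCliffordLaurent

end SkewDerivation

/-- Generators of the Clifford–Laurent algebra. -/
inductive CliffordLaurentGen (n : ℕ) : Type
  | x : Fin n → CliffordLaurentGen n
  | xInv : Fin n → CliffordLaurentGen n
  | c : Fin n → CliffordLaurentGen n

open FreeAlgebra in
/-- Defining relations of the Clifford–Laurent algebra. -/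
inductive CliffordLaurentRel (A : Type*) [CommRing A] (n : ℕ) :
    FreeAlgebra A (CliffordLaurentGen n) → FreeAlgebra A (CliffordLaurentGen n) → Prop
  | mul_inv (j) : CliffordLaurentRel A n (ι A (.x j) * ι A (.xInv j)) 1
  | inv_mul (j) : CliffordLaurentRel A n (ι A (.xInv j) * ι A (.x j)) 1
  | x_comm (j k) : CliffordLaurentRel A n (ι A (.x j) * ι A (.x k)) (ι A (.x k) * ι A (.x j))
  | c_sq (j) : CliffordLaurentRel A n (ι A (.c j) * ι A (.c j)) 1
  | c_anticomm (j k) (h : j ≠ k) :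
      CliffordLaurentRel A n (ι A (.c j) * ι A (.c k)) (-(ι A (.c k) * ι A (.c j)))
  | c_mul_x (j) : CliffordLaurentRel A n (ι A (.c j) * ι A (.x j)) (ι A (.xInv j) * ι A (.c j))
  | c_mul_x_of_ne (j k) (h : j ≠ k) :
      CliffordLaurentRel A n (ι A (.c j) * ι A (.x k)) (ι A (.x k) * ι A (.c j))

/-- The Clifford–Laurent algebra: the universal algebra with an `IsCliffordLaurent` family. It is
the subalgebra of `H_n` generated by all `X_j^{±1}` and `C_j`. -/
def CliffordLaurent (A : Type*) [CommRing A] (n : ℕ) : Type _ := RingQuot (CliffordLaurentRel A n)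

namespace CliffordLaurent

noncomputable instance (A : Type*) [CommRing A] (n : ℕ) : Ring (CliffordLaurent A n) :=
  inferInstanceAs (Ring (RingQuot (CliffordLaurentRel A n)))

noncomputable instance (A : Type*) [CommRing A] (n : ℕ) : Algebra A (CliffordLaurent A n) :=
  inferInstanceAs (Algebra A (RingQuot (CliffordLaurentRel A n)))

section Generators

variable (A : Type*) [CommRing A] {n : ℕ}

/-- The quotient map from the free algebra. -/
noncomputable def mk : FreeAlgebra A (CliffordLaurentGen n) →ₐ[A] CliffordLaurent A n :=
  RingQuot.mkAlgHom A (CliffordLaurentRel A n)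

/-- The generator `x_j`. -/
noncomputable def x (j : Fin n) : CliffordLaurent A n := mk A (.ι A (.x j))

/-- The generator `x_j⁻¹`. -/
noncomputable def xInv (j : Fin n) : CliffordLaurent A n := mk A (.ι A (.xInv j))

/-- The generator `c_j`. -/
noncomputable def c (j : Fin n) : CliffordLaurent A n := mk A (.ι A (.c j))

theorem mk_eq_mk {a b : FreeAlgebra A (CliffordLaurentGen n)} (h : CliffordLaurentRel A n a b) :
    mk A a = mk A b :=
  RingQuot.mkAlgHom_rel A h

theorem isCliffordLaurent : IsCliffordLaurent (x A (n := n)) (xInv A) (c A) where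
  mul_inv j := by simpa [x, xInv, c] using mk_eq_mk A (.mul_inv j)
  inv_mul j := by simpa [x, xInv, c] using mk_eq_mk A (.inv_mul j)
  x_comm j k := by simpa [x, xInv, c] using mk_eq_mk A (.x_comm j k)
  c_sq j := by simpa [x, xInv, c] using mk_eq_mk A (.c_sq j)
  c_anticomm j k h := by simpa [x, xInv, c] using mk_eq_mk A (.c_anticomm j k h)
  c_mul_x j := by simpa [x, xInv, c] using mk_eq_mk A (.c_mul_x j)
  c_mul_x_of_ne j k h := by simpa [x, xInv, c] using mk_eq_mk A (.c_mul_x_of_ne j k h)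

end Generators

variable {A : Type*} [CommRing A] {n : ℕ}

@[elab_as_elim]
theorem induction {p : CliffordLaurent A n → Prop} (algebraMap : ∀ r, p (algebraMap A _ r))
    (x : ∀ j, p (x A j)) (xInv : ∀ j, p (xInv A j)) (c : ∀ j, p (c A j))
    (mul : ∀ a b, p a → p b → p (a * b)) (add : ∀ a b, p a → p b → p (a + b))
    (a : CliffordLaurent A n) : p a := by
  obtain ⟨a, rfl⟩ := RingQuot.mkAlgHom_surjective A (CliffordLaurentRel A n) a
  induction a using FreeAlgebra.induction with
  | grade0 r => rw [AlgHom.commutes]; exact algebraMap r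
  | grade1 g => cases g with
    | x j => exact x j
    | xInv j => exact xInv j
    | c j => exact c j
  | mul a b ha hb => rw [map_mul]; exact mul _ _ ha hb
  | add a b ha hb => rw [map_add]; exact add _ _ ha hb

variable {R : Type*} [Ring R] [Algebra A R]

theorem algHom_ext {f g : CliffordLaurent A n →ₐ[A] R} (hx : ∀ j, f (x A j) = g (x A j))
    (hxInv : ∀ j, f (xInv A j) = g (xInv A j)) (hc : ∀ j, f (c A j) = g (c A j)) : f = g := by
  refine AlgHom.ext fun a => ?_
  induction a using induction with
  | algebraMap r => rw [AlgHom.commutes, AlgHom.commutes]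
  | x j => exact hx j
  | xInv j => exact hxInv j
  | c j => exact hc j
  | mul a b ha hb => rw [map_mul, map_mul, ha, hb]
  | add a b ha hb => rw [map_add, map_add, ha, hb]

section Lift

variable {y y' d : Fin n → R} (h : IsCliffordLaurent y y' d)

/-- The universal property of the Clifford–Laurent algebra. -/
noncomputable def lift : CliffordLaurent A n →ₐ[A] R :=
  RingQuot.liftAlgHom A ⟨FreeAlgebra.lift A fun
    | .x j => y j
    | .xInv j => y' j
    | .c j => d j, by
    intro a b hab
    cases hab <;> simp only [map_mul, map_one, map_neg, FreeAlgebra.lift_ι_apply]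
    · exact h.mul_inv _
    · exact h.inv_mul _
    · exact h.x_comm _ _
    · exact h.c_sq _
    · exact h.c_anticomm _ _ ‹_›
    · exact h.c_mul_x _
    · exact h.c_mul_x_of_ne _ _ ‹_›⟩

@[simp]
theorem lift_x (j : Fin n) : lift h (x A j) = y j :=
  (RingQuot.liftAlgHom_mkAlgHom_apply A _ _ _).trans (FreeAlgebra.lift_ι_apply _ _)

@[simp]
theorem lift_xInv (j : Fin n) : lift h (xInv A j) = y' j :=
  (RingQuot.liftAlgHom_mkAlgHom_apply A _ _ _).trans (FreeAlgebra.lift_ι_apply _ _)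

@[simp]
theorem lift_c (j : Fin n) : lift h (c A j) = d j :=
  (RingQuot.liftAlgHom_mkAlgHom_apply A _ _ _).trans (FreeAlgebra.lift_ι_apply _ _)

end Lift

/-- The action of the symmetric group on the Clifford–Laurent algebra by permuting indices. -/
noncomputable def perm (σ : Perm (Fin n)) : CliffordLaurent A n →ₐ[A] CliffordLaurent A n :=
  lift ((isCliffordLaurent A).comp σ.injective)

@[simp]
theorem perm_x (σ : Perm (Fin n)) (j) : perm σ (x A j) = x A (σ j) := by simp [perm]

@[simp]
theorem perm_xInv (σ : Perm (Fin n)) (j) : perm σ (xInv A j) = xInv A (σ j) := by simp [perm]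

@[simp]
theorem perm_c (σ : Perm (Fin n)) (j) : perm σ (c A j) = c A (σ j) := by simp [perm]

theorem perm_mul (σ τ : Perm (Fin n)) (a : CliffordLaurent A n) :
    perm (σ * τ) a = perm σ (perm τ a) := by
  have comp_eq : perm (A := A) (σ * τ) = (perm σ).comp (perm τ) :=
    algHom_ext (by simp) (by simp) (by simp)
  rw [comp_eq, AlgHom.comp_apply]

@[simp]
theorem perm_one (a : CliffordLaurent A n) : perm 1 a = a := by
  have eq_id : perm (A := A) (1 : Perm (Fin n)) = AlgHom.id A _ :=
    algHom_ext (by simp) (by simp) (by simp)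
  rw [eq_id, AlgHom.id_apply]

section Der

variable (ξ : A) (i : Fin (n - 1))

/-- The skew derivation `d_i` with `a T_i = T_i s_i(a) + d_i(a)`: the upper right entry of the
triangular representation. -/
noncomputable def der : CliffordLaurent A n →ₗ[A] CliffordLaurent A n where
  toFun a := lift ((isCliffordLaurent A).upperTriangular ξ i) a 0 1
  map_add' a b := by rw [map_add, Matrix.add_apply]
  map_smul' r a := by rw [map_smul, Matrix.smul_apply, RingHom.id_apply]

theorem lift_upperTriangular (a : CliffordLaurent A n) :
    lift ((isCliffordLaurent A).upperTriangular ξ i) a = !![a, der ξ i a; 0, perm (s i) a] := by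
  suffices key : lift ((isCliffordLaurent A).upperTriangular ξ i) a 0 0 = a ∧
      lift ((isCliffordLaurent A).upperTriangular ξ i) a 1 0 = 0 ∧
      lift ((isCliffordLaurent A).upperTriangular ξ i) a 1 1 = perm (s i) a by
    rw [Matrix.eta_fin_two (lift _ a), key.1, key.2.1, key.2.2]; rfl
  induction a using induction with
  | algebraMap r => simp [Matrix.algebraMap_matrix_apply]
  | x j => simp
  | xInv j => simp
  | c j => simp
  | mul a b ha hb => simp [Matrix.mul_apply, ha, hb]
  | add a b ha hb => simp [ha, hb]

theorem der_mul (a b : CliffordLaurent A n) :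
    der ξ i (a * b) = a * der ξ i b + der ξ i a * perm (s i) b := by
  have := congr($(map_mul (lift ((isCliffordLaurent A).upperTriangular ξ i)) a b) 0 1)
  simpa only [lift_upperTriangular, Matrix.mul_fin_two, Matrix.of_apply, Matrix.cons_val] using this

@[simp]
theorem der_algebraMap (r : A) : der ξ i (algebraMap A (CliffordLaurent A n) r) = 0 := by
  simp [der, Matrix.algebraMap_matrix_apply]

@[simp]
theorem der_x (j : Fin n) : der ξ i (x A j) = derX ξ (x A) (c A) i j := by simp [der]

@[simp]
theorem der_xInv (j : Fin n) :
    der ξ i (xInv A j) = derXinv ξ (x A) (xInv A) (c A) i j := by simp [der]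

@[simp]
theorem der_c (j : Fin n) : der ξ i (c A j) = derC ξ (c A) i j := by simp [der]

end Der

section Commutation

variable {y y' d : Fin n → R} (h : IsCliffordLaurent y y' d)

@[simp]
theorem lift_derX (ξ : A) (i : Fin (n - 1)) (j : Fin n) :
    lift h (derX ξ (x A) (c A) i j) = derX ξ y d i j := by
  simp only [derX, apply_ite (lift (A := A) h), map_smul, map_mul, map_sub, map_add, map_one,
    map_zero, lift_x, lift_c]

@[simp]
theorem lift_derXinv (ξ : A) (i : Fin (n - 1)) (j : Fin n) :
    lift h (derXinv ξ (x A) (xInv A) (c A) i j) = derXinv ξ y y' d i j := by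
  simp only [derXinv, map_neg, map_mul, lift_derX, lift_xInv]

@[simp]
theorem lift_derC (ξ : A) (i : Fin (n - 1)) (j : Fin n) :
    lift h (derC ξ (c A) i j) = derC ξ d i j := by
  simp only [derC, apply_ite (lift (A := A) h), map_smul, map_sub, map_zero, lift_c]

theorem lift_mul_of_isHeckeTwist {ξ : A} {i : Fin (n - 1)} {t : R} (ht : IsHeckeTwist ξ y d i t)
    (a : CliffordLaurent A n) :
    lift h a * t = t * lift h (perm (s i) a) + lift h (der ξ i a) := by
  induction a using induction with
  | algebraMap r => simp [Algebra.commutes]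
  | x j => simp [ht.x_mul]
  | xInv j => simp [ht.inv_mul h]
  | c j => simp [ht.c_mul]
  | mul a b ha hb =>
    rw [map_mul, mul_assoc, hb, mul_add, ← mul_assoc, ha, der_mul]
    simp only [map_mul, map_add, add_mul, mul_assoc]
    abel
  | add a b ha hb =>
    rw [map_add, add_mul, ha, hb]
    simp only [map_add, mul_add]
    abel

end Commutation

theorem map_mul_of_isIntertwiner (f : CliffordLaurent A n →ₐ[A] R) {σ : Perm (Fin n)} {z : R}
    (hz : IsIntertwiner (fun j => f (x A j)) (fun j => f (c A j)) σ z) (a : CliffordLaurent A n) :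
    f a * z = z * f (perm σ a) := by
  induction a using induction with
  | algebraMap r => simp [Algebra.commutes]
  | x j => rw [perm_x]; exact hz.x_mul j
  | xInv j =>
    have h := (isCliffordLaurent A).map f
    rw [perm_xInv]
    exact inv_mul_eq_mul_inv (h.inv_mul j) (h.mul_inv _) (hz.x_mul j)
  | c j => rw [perm_c]; exact hz.c_mul j
  | mul a b ha hb => rw [map_mul, mul_assoc, hb, ← mul_assoc, ha, mul_assoc, map_mul, map_mul]
  | add a b ha hb => rw [map_add, add_mul, ha, hb, map_add, map_add, mul_add]

end CliffordLaurent

/-! ### The right representation on `⊕_w T_w · CliffordLaurent` -/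

section Adjacent

variable {n : ℕ} {i j : Fin (n - 1)}

theorem s_apply_hi_of_adjacent (h : (j : ℕ) = i + 1) : s j (hi i) = hi j :=
  lo_eq_hi_of_adjacent h ▸ s_apply_lo j

theorem s_apply_hi_self_of_adjacent (h : (j : ℕ) = i + 1) : s j (hi j) = hi i :=
  lo_eq_hi_of_adjacent h ▸ s_apply_hi j

theorem s_apply_lo_of_adjacent (h : (j : ℕ) = i + 1) : s j (lo i) = lo i :=
  s_apply_of_ne (lo_eq_hi_of_adjacent h ▸ lo_ne_hi i) (hi_ne_of_adjacent h).1.symm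

theorem s_apply_hi_of_adjacent' (h : (j : ℕ) = i + 1) : s i (hi j) = hi j :=
  s_apply_of_ne (hi_ne_of_adjacent h).1 (hi_ne_of_adjacent h).2

theorem s_braid (h : (j : ℕ) = i + 1) : s i * s j * s i = s j * s i * s j := by
  obtain ⟨hlo, hhi⟩ := hi_ne_of_adjacent h
  simp only [s, lo_eq_hi_of_adjacent h]
  rw [swap_mul_swap_mul_swap (lo_ne_hi i) hlo.symm, swap_comm (lo i) (hi i),
    swap_comm (hi i) (hi j), swap_mul_swap_mul_swap hhi hlo, swap_comm]

theorem s_apply_of_far (h : (i : ℕ) + 1 < j ∨ (j : ℕ) + 1 < i) :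
    s i (lo j) = lo j ∧ s i (hi j) = hi j := by
  obtain ⟨h₁, h₂, h₃, h₄⟩ := ne_of_far h
  exact ⟨s_apply_of_ne h₁.symm h₃.symm, s_apply_of_ne h₂.symm h₄.symm⟩

theorem s_mul_s_of_far (h : (i : ℕ) + 1 < j) : s i * s j = s j * s i := by
  have hdisj : Perm.Disjoint (s i) (s j) := by
    intro k
    have hji := s_apply_of_far (.inr h)
    rcases eq_lo_or_eq_hi_or_ne i k with rfl | rfl | ⟨hlo, hhi⟩
    · exact .inr hji.1
    · exact .inr hji.2
    · exact .inl (s_apply_of_ne hlo hhi)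
  exact hdisj.commute

end Adjacent

section RegRep

open CliffordLaurent

variable {A : Type*} [CommRing A] {n : ℕ}

/-- The space of the right regular representation of `H_n`: the function `f` stands for
`∑_w T_w f(w)`. Operators act from the right, hence live in the opposite endomorphism ring. -/
abbrev RegRep (A : Type*) [CommRing A] (n : ℕ) : Type _ := Perm (Fin n) → CliffordLaurent A n

/-- Right multiplication by elements of the Clifford–Laurent algebra. -/
noncomputable def rightMul : CliffordLaurent A n →ₐ[A] (Module.End A (RegRep A n))ᵐᵒᵖ where
  toFun a := op (LinearMap.pi fun w => LinearMap.mulRight A a ∘ₗ LinearMap.proj w)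
  map_one' := by apply unop_injective; ext; simp
  map_mul' a b := by apply unop_injective; ext; simp [mul_assoc]
  map_zero' := by apply unop_injective; ext; simp
  map_add' a b := by apply unop_injective; ext; simp [mul_add]
  commutes' r := by apply unop_injective; ext; simp [← Algebra.commutes, Algebra.smul_def]

theorem rightMul_apply (a : CliffordLaurent A n) (f : RegRep A n) (w : Perm (Fin n)) :
    (rightMul a).unop f w = f w * a := rfl

variable (ξ : A)

/-- Right multiplication by `T_i`, computed from `a T_i = T_i s_i(a) + d_i(a)` and from
`T_w T_i = T_{w s_i}` or `T_w T_i = T_{w s_i} + ξ T_w`. -/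
noncomputable def rightT (i : Fin (n - 1)) : (Module.End A (RegRep A n))ᵐᵒᵖ := op
  { toFun := fun f w => perm (s i) (f (w * s i)) +
      (if w (hi i) < w (lo i) then ξ • perm (s i) (f w) else 0) + der ξ i (f w)
    map_add' := fun f g => by
      ext w; simp only [Pi.add_apply, map_add, smul_add]; split_ifs <;> abel
    map_smul' := fun r f => by
      ext w
      simp only [Pi.smul_apply, map_smul, RingHom.id_apply, smul_add, smul_ite, smul_zero]
      rw [smul_comm] }

theorem rightT_apply (i : Fin (n - 1)) (f : RegRep A n) (w : Perm (Fin n)) :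
    (rightT ξ i).unop f w = perm (s i) (f (w * s i)) +
      (if w (hi i) < w (lo i) then ξ • perm (s i) (f w) else 0) + der ξ i (f w) := rfl

theorem rightMul_mul_rightT (i : Fin (n - 1)) (a : CliffordLaurent A n) :
    rightMul a * rightT ξ i
      = rightT ξ i * rightMul (perm (s i) a) + rightMul (der ξ i a) := by
  apply unop_injective
  refine LinearMap.ext fun f => funext fun w => ?_
  simp only [unop_mul, unop_add, Module.End.mul_apply, LinearMap.add_apply, Pi.add_apply,
    rightMul_apply, rightT_apply, map_mul, der_mul, add_mul, ite_mul, zero_mul,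
    smul_mul_assoc]
  abel

theorem isCliffordLaurent_rightMul : IsCliffordLaurent (fun j => rightMul (x A (n := n) j))
    (fun j => rightMul (xInv A j)) (fun j => rightMul (c A j)) :=
  (isCliffordLaurent A).map rightMul

theorem isHeckeTwist_rightT (i : Fin (n - 1)) :
    IsHeckeTwist ξ (fun j => rightMul (x A (n := n) j)) (fun j => rightMul (c A j)) i
      (rightT ξ i) where
  x_lo := by rw [rightMul_mul_rightT]; simp [s_apply_lo, derX_lo]
  x_hi := by rw [rightMul_mul_rightT]; simp [s_apply_hi, derX_hi]
  c_lo := by rw [rightMul_mul_rightT]; simp [s_apply_lo, derC_lo]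
  c_hi := by rw [rightMul_mul_rightT]; simp [s_apply_hi, derC_of_ne _ _ (lo_ne_hi i).symm]
  x_of_ne j hlo hhi := by
    rw [rightMul_mul_rightT]; simp [s_apply_of_ne hlo hhi, derX_of_ne _ _ _ hlo hhi]
  c_of_ne j hlo hhi := by
    rw [rightMul_mul_rightT]; simp [s_apply_of_ne hlo hhi, derC_of_ne _ _ hlo]

/-- Scalar-valued functions in the right regular representation. -/
noncomputable def scalarFun : (Perm (Fin n) → A) →ₗ[A] RegRep A n :=
  LinearMap.compLeft (Algebra.linearMap A (CliffordLaurent A n)) _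

theorem scalarFun_apply (g : Perm (Fin n) → A) (w : Perm (Fin n)) :
    scalarFun g w = algebraMap A (CliffordLaurent A n) (g w) := rfl

theorem eq_sum_rightMul_scalarFun (f : RegRep A n) :
    f = ∑ w, (rightMul (f w)).unop (scalarFun (Pi.single w 1)) := by
  ext w
  rw [Finset.sum_apply, Finset.sum_eq_single_of_mem w (Finset.mem_univ w)]
  · simp [rightMul_apply, scalarFun_apply]
  · intro v _ hv
    simp [rightMul_apply, scalarFun_apply, hv.symm]

/-- The scalar-valued functions generate `RegRep` over the Clifford–Laurent algebra, so an
intertwiner is determined by its values on them. -/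
theorem eq_zero_of_isIntertwiner {σ : Perm (Fin n)} {z : (Module.End A (RegRep A n))ᵐᵒᵖ}
    (hz : IsIntertwiner (fun j => rightMul (x A j)) (fun j => rightMul (c A j)) σ z)
    (hscalar : ∀ g, z.unop (scalarFun g) = 0) : z = 0 := by
  apply unop_injective
  refine LinearMap.ext fun f => ?_
  rw [eq_sum_rightMul_scalarFun f, map_sum]
  refine Finset.sum_eq_zero fun w _ => ?_
  have := congr(($(map_mul_of_isIntertwiner rightMul hz (f w))).unop (scalarFun (Pi.single w 1)))
  simpa only [unop_mul, Module.End.mul_apply, hscalar, map_zero] using this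

/-- The restriction of `rightT` to scalar-valued functions, which is right multiplication by `T_i`
in the regular representation of the Hecke algebra of `S_n`. -/
def scalarT (i : Fin (n - 1)) (g : Perm (Fin n) → A) (w : Perm (Fin n)) : A :=
  g (w * s i) + if w (hi i) < w (lo i) then ξ * g w else 0

theorem rightT_scalarFun (i : Fin (n - 1)) (g : Perm (Fin n) → A) :
    (rightT ξ i).unop (scalarFun g) = scalarFun (scalarT ξ i g) := by
  ext w
  simp only [rightT_apply, scalarFun_apply, scalarT, AlgHom.commutes, der_algebraMap, add_zero,
    map_add]
  split_ifs <;> simp [Algebra.smul_def]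

theorem scalarT_quadratic (i : Fin (n - 1)) (g : Perm (Fin n) → A) :
    scalarT ξ i (scalarT ξ i g) = ξ • scalarT ξ i g + g := by
  ext w
  simp only [scalarT, Pi.add_apply, Pi.smul_apply, smul_eq_mul, Perm.mul_apply, s_apply_lo,
    s_apply_hi, mul_s_mul_s_cancel]
  rcases lt_or_gt_apply_lo_hi w i with h | h <;>
  · simp only [h, h.not_gt, if_true, if_false]; ring

theorem scalarT_comm_of_far {i j : Fin (n - 1)} (hij : (i : ℕ) + 1 < j) (g : Perm (Fin n) → A) :
    scalarT ξ i (scalarT ξ j g) = scalarT ξ j (scalarT ξ i g) := by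
  ext w
  obtain ⟨hlo, hhi⟩ := s_apply_of_far (.inl hij)
  obtain ⟨hlo', hhi'⟩ := s_apply_of_far (.inr hij)
  simp only [scalarT, Perm.mul_apply, mul_assoc, s_mul_s_of_far hij, hlo, hhi, hlo', hhi']
  split_ifs <;> ring

theorem scalarT_braid {i j : Fin (n - 1)} (hij : (j : ℕ) = i + 1) (g : Perm (Fin n) → A) :
    scalarT ξ i (scalarT ξ j (scalarT ξ i g)) = scalarT ξ j (scalarT ξ i (scalarT ξ j g)) := by
  ext w
  obtain ⟨hlo, hhi⟩ := hi_ne_of_adjacent hij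
  have braid := s_braid hij
  simp only [mul_assoc] at braid
  simp only [scalarT, Perm.mul_apply, mul_assoc, lo_eq_hi_of_adjacent hij, s_apply_lo, s_apply_hi,
    s_apply_hi_of_adjacent hij, s_apply_hi_self_of_adjacent hij, s_apply_lo_of_adjacent hij,
    s_apply_hi_of_adjacent' hij, braid, s_mul_self, mul_one]
  rcases (w.injective.ne (lo_ne_hi i)).lt_or_gt with h₁ | h₁ <;>
  rcases (w.injective.ne hlo.symm).lt_or_gt with h₂ | h₂ <;>
  rcases (w.injective.ne hhi.symm).lt_or_gt with h₃ | h₃ <;>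
  first
  | exact absurd (h₁.trans h₃) h₂.not_gt
  | exact absurd (h₃.trans h₁) h₂.not_gt
  | (simp only [h₁, h₂, h₃, h₁.not_gt, h₂.not_gt, h₃.not_gt, if_true, if_false] <;> ring)

theorem rightT_quadratic (i : Fin (n - 1)) :
    rightT ξ i * rightT ξ i = ξ • rightT ξ i + 1 := by
  have hz := (isHeckeTwist_rightT (n := n) ξ i).isIntertwiner_quadratic isCliffordLaurent_rightMul
  refine sub_eq_zero.mp ((sub_sub _ _ _).symm.trans (eq_zero_of_isIntertwiner hz fun g => ?_))
  rw [unop_sub, unop_sub, LinearMap.sub_apply, LinearMap.sub_apply, unop_mul,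
    Module.End.mul_apply, rightT_scalarFun, rightT_scalarFun, scalarT_quadratic, map_add, map_smul,
    unop_smul, LinearMap.smul_apply, rightT_scalarFun, unop_one, Module.End.one_apply,
    add_sub_cancel_left, sub_self]

theorem rightT_comm_of_far {i j : Fin (n - 1)} (hij : (i : ℕ) + 1 < j) :
    rightT ξ i * rightT ξ j = rightT ξ j * rightT ξ i := by
  rw [← sub_eq_zero]
  refine eq_zero_of_isIntertwiner
    ((isHeckeTwist_rightT ξ i).isIntertwiner_commutator (isHeckeTwist_rightT ξ j) hij) fun g => ?_
  simp only [unop_sub, unop_mul, LinearMap.sub_apply, Module.End.mul_apply, rightT_scalarFun,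
    scalarT_comm_of_far ξ hij, sub_self]

theorem rightT_braid {i j : Fin (n - 1)} (hij : (j : ℕ) = i + 1) :
    rightT ξ i * rightT ξ j * rightT ξ i = rightT ξ j * rightT ξ i * rightT ξ j := by
  rw [← sub_eq_zero]
  refine eq_zero_of_isIntertwiner ((isHeckeTwist_rightT ξ i).isIntertwiner_braid
    isCliffordLaurent_rightMul (isHeckeTwist_rightT ξ j) hij (rightT_quadratic ξ i)
    (rightT_quadratic ξ j)) fun g => ?_
  simp only [unop_sub, unop_mul, LinearMap.sub_apply, Module.End.mul_apply, rightT_scalarFun,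
    scalarT_braid ξ hij, sub_self]

end RegRep

/-! ### The regular representation of the affine Hecke–Clifford algebra -/

section Relations

variable {F} (q : F) {n : ℕ}

theorem mkAlgHom_eq_of_rel {a b : FA F n} (h : Rel F q n a b) :
    RingQuot.mkAlgHom F (Rel F q n) a = RingQuot.mkAlgHom F (Rel F q n) b :=
  RingQuot.mkAlgHom_rel F h

theorem T_quadratic (i : Fin (n - 1)) : T F q i * T F q i = (q - q⁻¹) • T F q i + 1 := by
  simpa only [map_mul, map_add, map_smul, map_one] using! mkAlgHom_eq_of_rel q (.Tquad i)

theorem T_braid {i j : Fin (n - 1)} (h : (j : ℕ) = i + 1) :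
    T F q i * T F q j * T F q i = T F q j * T F q i * T F q j := by
  simpa only [map_mul] using! mkAlgHom_eq_of_rel q (.Tbraid i j h)

theorem T_comm_of_far {i j : Fin (n - 1)} (h : (i : ℕ) + 1 < j) :
    T F q i * T F q j = T F q j * T F q i := by
  simpa only [map_mul] using! mkAlgHom_eq_of_rel q (.TTfar i j h)

theorem isCliffordLaurent_H : IsCliffordLaurent (X F q (n := n)) (Xinv F q) (C F q) where
  mul_inv j := by simpa only [map_mul, map_one] using! mkAlgHom_eq_of_rel q (.XXinv j)
  inv_mul j := by simpa only [map_mul, map_one] using! mkAlgHom_eq_of_rel q (.XinvX j)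
  x_comm j k := by simpa only [map_mul] using! mkAlgHom_eq_of_rel q (.XX j k)
  c_sq j := by simpa only [map_mul, map_one] using! mkAlgHom_eq_of_rel q (.CC j)
  c_anticomm j k h := by
    simpa only [map_mul, map_neg] using! mkAlgHom_eq_of_rel q (.Canti j k h)
  c_mul_x j := by simpa only [map_mul] using! mkAlgHom_eq_of_rel q (.CX j)
  c_mul_x_of_ne j k h := by simpa only [map_mul] using! mkAlgHom_eq_of_rel q (.CXo j k h)

theorem isHeckeTwist_H (i : Fin (n - 1)) :
    IsHeckeTwist (q - q⁻¹) (X F q (n := n)) (C F q) i (T F q i) :=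
  .of_relations (isCliffordLaurent_H q) (T_quadratic q i)
    (by simpa only [map_mul] using! (mkAlgHom_eq_of_rel q (.TC i)).symm)
    (fun j hlo hhi => by
      simpa only [map_mul] using! (mkAlgHom_eq_of_rel q (.TCo i j hlo hhi)).symm)
    (fun j hlo hhi => by
      simpa only [map_mul] using! (mkAlgHom_eq_of_rel q (.TXo i j hlo hhi)).symm)
    (by simpa only [map_mul, map_add, map_smul] using! mkAlgHom_eq_of_rel q (.cross i))

/-- The canonical morphism from the Clifford–Laurent algebra to `H_n`. -/
noncomputable def ofCL : CliffordLaurent F n →ₐ[F] H F q n :=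
  CliffordLaurent.lift (isCliffordLaurent_H q)

@[simp]
theorem ofCL_x (j : Fin n) : ofCL q (.x F j) = X F q j := CliffordLaurent.lift_x _ _

@[simp]
theorem ofCL_xInv (j : Fin n) : ofCL q (.xInv F j) = Xinv F q j := CliffordLaurent.lift_xInv _ _

@[simp]
theorem ofCL_c (j : Fin n) : ofCL q (.c F j) = C F q j := CliffordLaurent.lift_c _ _

theorem ofCL_mul_T (i : Fin (n - 1)) (a : CliffordLaurent F n) :
    ofCL q a * T F q i = T F q i * ofCL q (.perm (s i) a) + ofCL q (.der (q - q⁻¹) i a) :=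
  CliffordLaurent.lift_mul_of_isHeckeTwist (isCliffordLaurent_H q) (isHeckeTwist_H q i) a

theorem adjoin_generators :
    Algebra.adjoin F (Set.range (RingQuot.mkAlgHom F (Rel F q n) ∘ FreeAlgebra.ι F)) = ⊤ := by
  rw [Set.range_comp, ← AlgHom.map_adjoin, FreeAlgebra.adjoin_range_ι, Algebra.map_top,
    AlgHom.range_eq_top]
  exact RingQuot.mkAlgHom_surjective F _

theorem parabolicJ_univ : parabolicJ F q (Set.univ : Set (Fin (n - 1))) = ⊤ := by
  rw [eq_top_iff, ← adjoin_generators]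
  refine Algebra.adjoin_mono ?_
  rintro _ ⟨j | j | j | j, rfl⟩
  · exact .inl (.inl (.inl ⟨j, rfl⟩))
  · exact .inl (.inl (.inr ⟨j, rfl⟩))
  · exact .inl (.inr ⟨j, rfl⟩)
  · exact .inr ⟨j, trivial, rfl⟩

end Relations

section UniversalProperty

variable {F} {q : F} {n : ℕ} {R : Type*} [Ring R] [Algebra F R] {y y' d : Fin n → R}
  {t : Fin (n - 1) → R}

/-- The algebra morphism out of `H_n` determined by the images of the generators. -/
noncomputable def liftH (h : IsCliffordLaurent y y' d)
    (ht : ∀ i, IsHeckeTwist (q - q⁻¹) y d i (t i))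
    (quadratic : ∀ i, t i * t i = (q - q⁻¹) • t i + 1)
    (braid : ∀ i j : Fin (n - 1), (j : ℕ) = i + 1 → t i * t j * t i = t j * t i * t j)
    (comm_of_far : ∀ i j : Fin (n - 1), (i : ℕ) + 1 < j → t i * t j = t j * t i) :
    H F q n →ₐ[F] R :=
  RingQuot.liftAlgHom F ⟨FreeAlgebra.lift F fun
    | .X j => y j
    | .Xinv j => y' j
    | .C j => d j
    | .T i => t i, fun a b hab => by
      cases hab <;>
        simp only [fx, fxinv, fc, ft, map_mul, map_add, map_neg, map_smul, map_one,
          FreeAlgebra.lift_ι_apply]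
      case XXinv j => exact h.mul_inv j
      case XinvX j => exact h.inv_mul j
      case XX j k => exact h.x_comm j k
      case XiXi j k => exact h.inv_comm j k
      case XXi j k _ => exact h.x_mul_inv j k
      case CC j => exact h.c_sq j
      case Canti j k hjk => exact h.c_anticomm j k hjk
      case CX j => exact h.c_mul_x j
      case CXi j => exact h.c_mul_inv j
      case CXo j k hjk => exact h.c_mul_x_of_ne j k hjk
      case CXio j k hjk => exact h.c_mul_inv_of_ne hjk
      case Tquad i => exact quadratic i
      case Tbraid i j hij => exact braid i j hij
      case TTfar i j hij => exact comm_of_far i j hij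
      case TC i => exact (ht i).c_hi.symm
      case TCo i j hlo hhi => exact ((ht i).c_of_ne j hlo hhi).symm
      case TXo i j hlo hhi => exact ((ht i).x_of_ne j hlo hhi).symm
      case TXio i j hlo hhi =>
        exact (inv_mul_eq_mul_inv (h.inv_mul j) (h.mul_inv j) ((ht i).x_of_ne j hlo hhi)).symm
      case cross i => exact (ht i).cross h (quadratic i)⟩

end UniversalProperty

section RegularRepresentation

variable {F} (q : F) {n : ℕ}

/-- The right regular representation of `H_n`, on `⊕_w T_w · CliffordLaurent`. -/
noncomputable def regRep : H F q n →ₐ[F] (Module.End F (RegRep F n))ᵐᵒᵖ :=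
  liftH isCliffordLaurent_rightMul (isHeckeTwist_rightT (q - q⁻¹)) (rightT_quadratic (q - q⁻¹))
    (fun _ _ => rightT_braid (q - q⁻¹)) (fun _ _ => rightT_comm_of_far (q - q⁻¹))

theorem regRep_T (i : Fin (n - 1)) : regRep q (T F q i) = rightT (q - q⁻¹) i :=
  (RingQuot.liftAlgHom_mkAlgHom_apply F _ _ _).trans (FreeAlgebra.lift_ι_apply _ _)

theorem regRep_ofCL (a : CliffordLaurent F n) : regRep q (ofCL q a) = rightMul a := by
  have comp_eq : (regRep q).comp (ofCL q) = rightMul (A := F) (n := n) := by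
    refine CliffordLaurent.algHom_ext (fun j => ?_) (fun j => ?_) (fun j => ?_) <;>
    · simp only [AlgHom.comp_apply, ofCL_x, ofCL_xInv, ofCL_c]
      exact (RingQuot.liftAlgHom_mkAlgHom_apply F _ _ _).trans (FreeAlgebra.lift_ι_apply _ _)
  exact DFunLike.congr_fun comp_eq a

end RegularRepresentation

/-! ### The basis `T_w` -/

section StandardBasis

variable {F} (q : F) {n : ℕ}

open Classical in
/-- The standard element `T_w`, defined along the reduced word of `w` obtained by removing chosen
descents on the right. -/
noncomputable def Tw (w : Perm (Fin n)) : H F q n :=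
  if h : ∃ i : Fin (n - 1), w (hi i) < w (lo i) then Tw (w * s h.choose) * T F q h.choose else 1
termination_by len w
decreasing_by exact len_mul_s_lt h.choose_spec

theorem Tw_one : Tw q (1 : Perm (Fin n)) = 1 := by
  rw [Tw, dif_neg]
  rintro ⟨i, hi⟩
  exact (lo_lt_hi i).not_gt hi

section Descent

variable {w : Perm (Fin n)} {i j : Fin (n - 1)}
  (ih : ∀ v : Perm (Fin n), len v < len w → ∀ k, v (hi k) < v (lo k) →
    Tw q v = Tw q (v * s k) * T F q k)
include ih

theorem Tw_mul_T_eq_of_far (hij : (i : ℕ) + 1 < j) (hwi : w (hi i) < w (lo i))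
    (hwj : w (hi j) < w (lo j)) : Tw q (w * s i) * T F q i = Tw q (w * s j) * T F q j := by
  have descent_j : (w * s i) (hi j) < (w * s i) (lo j) := by
    simpa only [Perm.mul_apply, s_apply_of_far (.inl hij)] using hwj
  have descent_i : (w * s j) (hi i) < (w * s j) (lo i) := by
    simpa only [Perm.mul_apply, s_apply_of_far (.inr hij)] using hwi
  rw [ih _ (len_mul_s_lt hwi) j descent_j, ih _ (len_mul_s_lt hwj) i descent_i, mul_assoc,
    mul_assoc w, mul_assoc (Tw q _), mul_assoc w, s_mul_s_of_far hij, T_comm_of_far q hij]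

theorem Tw_mul_T_eq_of_adjacent (hij : (j : ℕ) = i + 1) (hwi : w (hi i) < w (lo i))
    (hwj : w (hi j) < w (lo j)) : Tw q (w * s i) * T F q i = Tw q (w * s j) * T F q j := by
  have hwij : w (hi j) < w (hi i) := lo_eq_hi_of_adjacent hij ▸ hwj
  have descent_j : (w * s i) (hi j) < (w * s i) (lo j) := by
    simpa only [Perm.mul_apply, s_apply_hi_of_adjacent' hij, lo_eq_hi_of_adjacent hij,
      s_apply_hi] using hwij.trans hwi
  have descent_ji : (w * s i * s j) (hi i) < (w * s i * s j) (lo i) := by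
    simpa only [Perm.mul_apply, s_apply_hi_of_adjacent hij, s_apply_hi_of_adjacent' hij,
      s_apply_lo_of_adjacent hij, s_apply_lo] using hwij
  have descent_i : (w * s j) (hi i) < (w * s j) (lo i) := by
    simpa only [Perm.mul_apply, s_apply_hi_of_adjacent hij, s_apply_lo_of_adjacent hij]
      using hwij.trans hwi
  have descent_ij : (w * s j * s i) (hi j) < (w * s j * s i) (lo j) := by
    simpa only [Perm.mul_apply, s_apply_hi_of_adjacent' hij, lo_eq_hi_of_adjacent hij, s_apply_hi,
      s_apply_hi_self_of_adjacent hij, s_apply_lo_of_adjacent hij] using hwi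
  rw [ih _ (len_mul_s_lt hwi) j descent_j,
    ih _ ((len_mul_s_lt descent_j).trans (len_mul_s_lt hwi)) i descent_ji,
    ih _ (len_mul_s_lt hwj) i descent_i,
    ih _ ((len_mul_s_lt descent_i).trans (len_mul_s_lt hwj)) j descent_ij]
  have braid_s := s_braid hij
  have braid_T := T_braid q hij
  simp only [mul_assoc] at braid_s braid_T ⊢
  rw [braid_s, braid_T]

theorem Tw_mul_T_eq_of_descents (hwi : w (hi i) < w (lo i)) (hwj : w (hi j) < w (lo j)) :
    Tw q (w * s i) * T F q i = Tw q (w * s j) * T F q j := by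
  wlog hij : i ≤ j generalizing i j
  · exact (this hwj hwi (le_of_not_ge hij)).symm
  rcases hij.eq_or_lt with rfl | hij
  · rfl
  rcases (Nat.succ_le_of_lt hij).eq_or_lt with adjacent | far
  · exact Tw_mul_T_eq_of_adjacent q ih adjacent.symm hwi hwj
  · exact Tw_mul_T_eq_of_far q ih far hwi hwj

end Descent

theorem Tw_of_descent {w : Perm (Fin n)} {i : Fin (n - 1)} (h : w (hi i) < w (lo i)) :
    Tw q w = Tw q (w * s i) * T F q i := by
  induction hN : len w using Nat.strong_induction_on generalizing w i with
  | _ N ih =>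
    subst hN
    have hex : ∃ j : Fin (n - 1), w (hi j) < w (lo j) := ⟨i, h⟩
    rw [Tw, dif_pos hex]
    exact Tw_mul_T_eq_of_descents q (fun v hv k hk => ih _ hv hk rfl) hex.choose_spec h

theorem Tw_mul_T_of_lt {w : Perm (Fin n)} {i : Fin (n - 1)} (h : w (lo i) < w (hi i)) :
    Tw q w * T F q i = Tw q (w * s i) := by
  rw [Tw_of_descent q (mul_s_descent h), mul_s_mul_s_cancel]

theorem Tw_mul_T_of_gt {w : Perm (Fin n)} {i : Fin (n - 1)} (h : w (hi i) < w (lo i)) :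
    Tw q w * T F q i = Tw q (w * s i) + (q - q⁻¹) • Tw q w := by
  conv_lhs => rw [Tw_of_descent q h, mul_assoc, T_quadratic, mul_add, mul_one, mul_smul_comm]
  rw [← Tw_of_descent q h, add_comm]

theorem Tw_s (i : Fin (n - 1)) : Tw q (s i) = T F q i := by
  simpa only [Tw_one, one_mul] using (Tw_mul_T_of_lt q (w := 1) (i := i) (lo_lt_hi i)).symm

@[elab_as_elim]
theorem perm_induction {p : Perm (Fin n) → Prop} (one : p 1)
    (mul_s : ∀ w i, w (lo i) < w (hi i) → p w → p (w * s i)) (w : Perm (Fin n)) : p w := by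
  induction hN : len w using Nat.strong_induction_on generalizing w with
  | _ N ih =>
    subst hN
    by_cases hw : w = 1
    · rwa [hw]
    obtain ⟨i, h⟩ := exists_descent hw
    rw [← mul_s_mul_s_cancel w i]
    exact mul_s _ i (mul_s_ascent h) (ih _ (len_mul_s_lt h) _ rfl)

theorem Tw_mul {u v : Perm (Fin n)} (h : IsReducedMul u v) : Tw q u * Tw q v = Tw q (u * v) := by
  induction v using perm_induction with
  | one => rw [Tw_one, mul_one, mul_one]
  | mul_s v i hv ih =>
    have huvs := h _ _ (lo_lt_hi i) (mul_s_descent hv)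
    have hu : IsReducedMul u v := by
      simpa only [mul_s_mul_s_cancel] using h.mul_s (mul_s_descent hv)
    rw [← Tw_mul_T_of_lt q hv, ← mul_assoc, ih hu, ← mul_assoc, Tw_mul_T_of_lt]
    simpa only [Perm.mul_apply, s_apply_lo, s_apply_hi] using huvs

/-- The coordinates of an element of `H_n` in the basis `T_w`, read off from its action on the
vacuum vector of the regular representation. -/
noncomputable def coord : H F q n →ₗ[F] RegRep F n where
  toFun h := (regRep q h).unop (scalarFun (Pi.single 1 1))
  map_add' a b := by rw [map_add, unop_add, LinearMap.add_apply]
  map_smul' r a := by rw [map_smul, unop_smul, LinearMap.smul_apply, RingHom.id_apply]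

theorem coord_apply (h : H F q n) :
    coord q h = (regRep q h).unop (scalarFun (Pi.single 1 1)) := rfl

theorem coord_mul (g h : H F q n) : coord q (g * h) = (regRep q h).unop (coord q g) := by
  rw [coord_apply, map_mul, unop_mul, Module.End.mul_apply, coord_apply]

theorem coord_Tw (w : Perm (Fin n)) : coord q (Tw q w) = scalarFun (Pi.single w 1) := by
  induction w using perm_induction with
  | one => simp [coord_apply, Tw_one]
  | mul_s w i hw ih =>
    rw [← Tw_mul_T_of_lt q hw, coord_mul, ih, regRep_T, rightT_scalarFun]
    congr 1
    ext v
    have hv : v * s i = w ↔ v = w * s i := by grind [mul_s_mul_s_cancel]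
    simp only [scalarT, Pi.single_apply, hv, mul_ite, mul_one, mul_zero]
    grind

theorem coord_Tw_mul_ofCL (w : Perm (Fin n)) (a : CliffordLaurent F n) :
    coord q (Tw q w * ofCL q a) = Pi.single w a := by
  ext v
  rw [coord_mul, coord_Tw, regRep_ofCL, rightMul_apply, scalarFun_apply]
  rcases eq_or_ne v w with rfl | hv
  · simp
  · simp [hv]

end StandardBasis

/-! ### Spans of standard elements over the Clifford–Laurent algebra -/

section Parabolic

variable {F} (q : F) {n : ℕ} {J : Set (Fin (n - 1))}

theorem ofCL_mem_parabolicJ (J : Set (Fin (n - 1))) (a : CliffordLaurent F n) :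
    ofCL q a ∈ parabolicJ F q J := by
  induction a using CliffordLaurent.induction with
  | algebraMap r => rw [AlgHom.commutes]; exact Subalgebra.algebraMap_mem _ r
  | x j => rw [ofCL_x]; exact Algebra.subset_adjoin (.inl (.inl (.inl ⟨j, rfl⟩)))
  | xInv j => rw [ofCL_xInv]; exact Algebra.subset_adjoin (.inl (.inl (.inr ⟨j, rfl⟩)))
  | c j => rw [ofCL_c]; exact Algebra.subset_adjoin (.inl (.inr ⟨j, rfl⟩))
  | mul a b ha hb => rw [map_mul]; exact mul_mem ha hb
  | add a b ha hb => rw [map_add]; exact add_mem ha hb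

theorem T_mem_parabolicJ {j : Fin (n - 1)} (hj : j ∈ J) : T F q j ∈ parabolicJ F q J :=
  Algebra.subset_adjoin (.inr ⟨j, hj, rfl⟩)

@[elab_as_elim]
theorem parabolicJ_induction {p : ∀ h, h ∈ parabolicJ F q J → Prop}
    (ofCL : ∀ a, p (ofCL q a) (ofCL_mem_parabolicJ q J a))
    (T : ∀ j (hj : j ∈ J), p (T F q j) (T_mem_parabolicJ q hj))
    (add : ∀ a b ha hb, p a ha → p b hb → p (a + b) (add_mem ha hb))
    (mul : ∀ a b ha hb, p a ha → p b hb → p (a * b) (mul_mem ha hb)) {h : H F q n}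
    (hh : h ∈ parabolicJ F q J) : p h hh := by
  induction hh using Algebra.adjoin_induction with
  | mem h hh =>
    rcases hh with ((⟨j, rfl⟩ | ⟨j, rfl⟩) | ⟨j, rfl⟩) | ⟨j, hj, rfl⟩
    · simpa only [ofCL_x] using ofCL (.x F j)
    · simpa only [ofCL_xInv] using ofCL (.xInv F j)
    · simpa only [ofCL_c] using ofCL (.c F j)
    · exact T j hj
  | algebraMap r => simpa only [AlgHom.commutes] using ofCL (algebraMap F _ r)
  | add a b ha hb iha ihb => exact add a b ha hb iha ihb
  | mul a b ha hb iha ihb => exact mul a b ha hb iha ihb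

end Parabolic

section Span

variable {F} (q : F) {n : ℕ} {A B : Set (Perm (Fin n))} {J : Set (Fin (n - 1))} {h : H F q n}

/-- The right Clifford–Laurent submodule of `H_n` spanned by the `T_w` with `w ∈ A`. -/
def twSpan (A : Set (Perm (Fin n))) : Submodule F (H F q n) :=
  Submodule.span F {h | ∃ w ∈ A, ∃ a, h = Tw q w * ofCL q a}

theorem Tw_mul_ofCL_mem_twSpan {w : Perm (Fin n)} (hw : w ∈ A) (a : CliffordLaurent F n) :
    Tw q w * ofCL q a ∈ twSpan q A :=
  Submodule.subset_span ⟨w, hw, a, rfl⟩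

theorem Tw_mem_twSpan {w : Perm (Fin n)} (hw : w ∈ A) : Tw q w ∈ twSpan q A := by
  simpa only [map_one, mul_one] using Tw_mul_ofCL_mem_twSpan q hw 1

theorem twSpan_mono (hAB : A ⊆ B) : twSpan q A ≤ twSpan q B :=
  Submodule.span_mono fun _ ⟨w, hw, a, e⟩ => ⟨w, hAB hw, a, e⟩

@[elab_as_elim]
theorem twSpan_induction {p : ∀ h, h ∈ twSpan q A → Prop} (zero : p 0 (zero_mem _))
    (Tw_mul_ofCL : ∀ w (hw : w ∈ A) a, p (Tw q w * ofCL q a) (Tw_mul_ofCL_mem_twSpan q hw a))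
    (add : ∀ g h hg hh, p g hg → p h hh → p (g + h) (add_mem hg hh)) (hh : h ∈ twSpan q A) :
    p h hh := by
  induction hh using Submodule.closure_induction with
  | zero => exact zero
  | add g h hg hh ihg ihh => exact add g h hg hh ihg ihh
  | smul_mem r h hh =>
    obtain ⟨w, hw, a, rfl⟩ := hh
    simpa only [map_smul, mul_smul_comm] using Tw_mul_ofCL w hw (r • a)

theorem mul_ofCL_mem_twSpan (hh : h ∈ twSpan q A) (a : CliffordLaurent F n) :
    h * ofCL q a ∈ twSpan q A := by
  induction hh using twSpan_induction with
  | zero => rw [zero_mul]; exact zero_mem _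
  | Tw_mul_ofCL w hw b => rw [mul_assoc, ← map_mul]; exact Tw_mul_ofCL_mem_twSpan q hw _
  | add g h _ _ hg hh => rw [add_mul]; exact add_mem hg hh

theorem mul_T_mem_twSpan (hh : h ∈ twSpan q A) {i : Fin (n - 1)} (hAB : A ⊆ B)
    (hB : ∀ w ∈ A, w * s i ∈ B) : h * T F q i ∈ twSpan q B := by
  induction hh using twSpan_induction with
  | zero => rw [zero_mul]; exact zero_mem _
  | Tw_mul_ofCL w hw b =>
    rw [mul_assoc, ofCL_mul_T, mul_add, ← mul_assoc]
    refine add_mem (mul_ofCL_mem_twSpan q ?_ _) (Tw_mul_ofCL_mem_twSpan q (hAB hw) _)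
    rcases lt_or_gt_apply_lo_hi w i with h | h
    · rw [Tw_mul_T_of_lt q h]
      exact Tw_mem_twSpan q (hB w hw)
    · rw [Tw_mul_T_of_gt q h]
      exact add_mem (Tw_mem_twSpan q (hB w hw)) (Submodule.smul_mem _ _ (Tw_mem_twSpan q (hAB hw)))
  | add g h _ _ hg hh => rw [add_mul]; exact add_mem hg hh

theorem mul_mem_twSpan_of_mem_parabolicJ (hA : ∀ w ∈ A, ∀ j ∈ J, w * s j ∈ A) {b : H F q n}
    (hb : b ∈ parabolicJ F q J) (hh : h ∈ twSpan q A) : h * b ∈ twSpan q A := by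
  induction hb using parabolicJ_induction generalizing h with
  | ofCL a => exact mul_ofCL_mem_twSpan q hh a
  | T j hj => exact mul_T_mem_twSpan q hh subset_rfl fun w hw => hA w hw j hj
  | add a b _ _ ha hb => rw [mul_add]; exact add_mem (ha hh) (hb hh)
  | mul a b _ _ ha hb => rw [← mul_assoc]; exact hb (ha hh)

theorem mem_twSpan_of_mem_parabolicJ (one_mem : 1 ∈ A) (hA : ∀ w ∈ A, ∀ j ∈ J, w * s j ∈ A)
    (hh : h ∈ parabolicJ F q J) : h ∈ twSpan q A := by
  simpa only [Tw_one, one_mul] using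
    mul_mem_twSpan_of_mem_parabolicJ q hA hh (Tw_mem_twSpan q one_mem)

theorem twSpan_univ : twSpan q (Set.univ : Set (Perm (Fin n))) = ⊤ :=
  eq_top_iff.2 fun _ _ => mem_twSpan_of_mem_parabolicJ q (J := Set.univ) (Set.mem_univ _)
    (fun _ _ _ _ => Set.mem_univ _) (parabolicJ_univ q ▸ Algebra.mem_top)

theorem sum_Tw_mul_ofCL_coord (h : H F q n) : ∑ w, Tw q w * ofCL q (coord q h w) = h := by
  have hh : h ∈ twSpan q Set.univ := twSpan_univ q ▸ Submodule.mem_top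
  induction hh using twSpan_induction with
  | zero => simp
  | Tw_mul_ofCL w _ a =>
    rw [coord_Tw_mul_ofCL, Finset.sum_eq_single w (fun v _ hv => by simp [hv]) (by simp),
      Pi.single_eq_same]
  | add g h _ _ hg hh => simp only [map_add, Pi.add_apply, mul_add, Finset.sum_add_distrib, hg, hh]

theorem coord_injective : Function.Injective (coord q : H F q n → RegRep F n) := fun a b h => by
  rw [← sum_Tw_mul_ofCL_coord q a, ← sum_Tw_mul_ofCL_coord q b, h]

theorem coord_eq_zero_of_mem_twSpan (hh : h ∈ twSpan q A) {w : Perm (Fin n)} (hw : w ∉ A) :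
    coord q h w = 0 := by
  induction hh using twSpan_induction with
  | zero => rw [map_zero, Pi.zero_apply]
  | Tw_mul_ofCL v hv a =>
    rw [coord_Tw_mul_ofCL, Pi.single_eq_of_ne (ne_of_mem_of_not_mem hv hw).symm]
  | add g h _ _ hg hh => rw [map_add, Pi.add_apply, hg, hh, add_zero]

/-! ### Triangularity for the Bruhat order -/

theorem exists_ofCL_mul_Tw (w : Perm (Fin n)) (a : CliffordLaurent F n) :
    ∃ l ∈ twSpan q {y | BruhatLE y w ∧ y ≠ w},
      ofCL q a * Tw q w = Tw q w * ofCL q (.perm w⁻¹ a) + l := by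
  induction w using perm_induction with
  | one => exact ⟨0, zero_mem _, by simp [Tw_one, CliffordLaurent.perm_one]⟩
  | mul_s w i hw ih =>
    obtain ⟨l, hl, e⟩ := ih
    have hlen := len_lt_len_mul_s hw
    rw [← Tw_mul_T_of_lt q hw, ← mul_assoc, e, add_mul, mul_assoc, ofCL_mul_T, mul_add,
      ← mul_assoc, add_assoc, mul_inv_rev, s_inv, CliffordLaurent.perm_mul]
    refine ⟨_, add_mem (Tw_mul_ofCL_mem_twSpan q ?_ _) (mul_T_mem_twSpan q hl ?_ ?_), rfl⟩
    · exact ⟨bruhatLE_mul_s hw, fun h => hlen.ne (congrArg len h)⟩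
    · rintro y ⟨hy, -⟩
      exact ⟨hy.trans (bruhatLE_mul_s hw), fun h => (hy.len_le.trans_lt hlen).ne (congrArg len h)⟩
    · rintro y ⟨hy, hne⟩
      exact ⟨hy.mul_s hw, fun h => hne (mul_left_injective _ h)⟩

theorem T_mul_Tw_of_lt {w : Perm (Fin n)} {j : Fin (n - 1)} (h : w⁻¹ (lo j) < w⁻¹ (hi j)) :
    T F q j * Tw q w = Tw q (s j * w) := by
  rw [← Tw_s, Tw_mul q (isReducedMul_s_left h)]

theorem T_mul_Tw_of_gt {w : Perm (Fin n)} {j : Fin (n - 1)} (h : w⁻¹ (hi j) < w⁻¹ (lo j)) :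
    T F q j * Tw q w = Tw q (s j * w) + (q - q⁻¹) • Tw q w := by
  have hsw : (s j * w)⁻¹ (lo j) < (s j * w)⁻¹ (hi j) := by
    simpa only [mul_inv_rev, s_inv, Perm.mul_apply, s_apply_lo, s_apply_hi] using h
  have hw : T F q j * Tw q (s j * w) = Tw q w := by
    rw [T_mul_Tw_of_lt q hsw, s_mul_s_mul_cancel]
  rw [← hw, ← mul_assoc, T_quadratic, add_mul, one_mul, smul_mul_assoc, hw, add_comm]

theorem mul_mem_twSpan_of_bruhatLE_mem (lower : ∀ w ∈ A, ∀ y, BruhatLE y w → y ∈ A)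
    (hA : ∀ w ∈ A, ∀ j ∈ J, s j * w ∈ A) {b : H F q n} (hb : b ∈ parabolicJ F q J)
    (hh : h ∈ twSpan q A) : b * h ∈ twSpan q A := by
  induction hb using parabolicJ_induction generalizing h with
  | ofCL a =>
    induction hh using twSpan_induction with
    | zero => rw [mul_zero]; exact zero_mem _
    | Tw_mul_ofCL w hw c =>
      obtain ⟨l, hl, e⟩ := exists_ofCL_mul_Tw q w a
      rw [← mul_assoc, e]
      refine mul_ofCL_mem_twSpan q (add_mem (Tw_mul_ofCL_mem_twSpan q hw _) ?_) c
      exact twSpan_mono q (fun y hy => lower w hw y hy.1) hl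
    | add g h _ _ hg hh => rw [mul_add]; exact add_mem hg hh
  | T j hj =>
    induction hh using twSpan_induction with
    | zero => rw [mul_zero]; exact zero_mem _
    | Tw_mul_ofCL w hw c =>
      rw [← mul_assoc]
      refine mul_ofCL_mem_twSpan q ?_ c
      have hsw := Tw_mem_twSpan q (hA w hw j hj)
      rcases lt_or_gt_of_ne (w⁻¹.injective.ne (lo_ne_hi j)) with h | h
      · rwa [T_mul_Tw_of_lt q h]
      · rw [T_mul_Tw_of_gt q h]
        exact add_mem hsw (Submodule.smul_mem _ _ (Tw_mem_twSpan q hw))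
    | add g h _ _ hg hh => rw [mul_add]; exact add_mem hg hh
  | add a b _ _ ha hb => rw [add_mul]; exact add_mem (ha hh) (hb hh)
  | mul a b _ _ ha hb => rw [mul_assoc]; exact ha (hb hh)

end Span

/-! ### Induction along a free extension -/

section
variable {R A B D : Type*} [CommSemiring R] [Ring A] [Ring B] [Algebra R A] [Algebra R B]
  [Fintype D]
  {φ : B →ₐ[R] A} {t : D → A}

/-- The linear map `(b_d) ↦ ∑ t_d φ(b_d)`. -/
def rightCombination (φ : B →ₐ[R] A) (t : D → A) : (D → B) →ₗ[R] A :=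
  ∑ d, LinearMap.mulLeft R (t d) ∘ₗ φ.toLinearMap ∘ₗ LinearMap.proj d

theorem rightCombination_apply (f : D → B) :
    rightCombination φ t f = ∑ d, t d * φ (f d) := by
  simp [rightCombination]

/-- The family `t` is a basis of `A` as a right module over `B` acting through `φ`. -/
def IsRightBasis (φ : B →ₐ[R] A) (t : D → A) : Prop :=
  Function.Bijective (rightCombination φ t)

namespace IsRightBasis

/-- The coordinates of an element of `A` in the right basis `t`. -/
noncomputable def coeff (ht : IsRightBasis φ t) : A →ₗ[R] D → B :=
  (LinearEquiv.ofBijective (rightCombination φ t) ht).symm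

variable (ht : IsRightBasis φ t)
include ht

theorem sum_mul_coeff (a : A) : ∑ d, t d * φ (ht.coeff a d) = a := by
  rw [← rightCombination_apply]
  exact (LinearEquiv.ofBijective _ ht).apply_symm_apply a

theorem coeff_sum_mul (f : D → B) : ht.coeff (∑ d, t d * φ (f d)) = f := by
  rw [← rightCombination_apply]
  exact (LinearEquiv.ofBijective _ ht).symm_apply_apply f

theorem coeff_basis [DecidableEq D] (e : D) : ht.coeff (t e) = Pi.single e 1 := by
  rw [← ht.coeff_sum_mul (Pi.single e 1), Finset.sum_eq_single e] <;> simp +contextual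

theorem coeff_mul_map (a : A) (b : B) (d : D) : ht.coeff (a * φ b) d = ht.coeff a d * b := by
  have h := ht.coeff_sum_mul fun d => ht.coeff a d * b
  simp only [map_mul, ← mul_assoc, ← Finset.sum_mul, ht.sum_mul_coeff] at h
  exact congrFun h d

theorem coeff_mul (a b : A) (d : D) :
    ht.coeff (a * b) d = ∑ e, ht.coeff (a * t e) d * ht.coeff b e := by
  conv_lhs => rw [← ht.sum_mul_coeff b, Finset.mul_sum]
  simp only [map_sum, Finset.sum_apply, ← mul_assoc, ht.coeff_mul_map]

variable {M : Type*} [AddCommGroup M] [Module R M]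

/-- The action of `A` on `D → M ≅ A ⊗_B M` for a representation `ρ` of `B`, as a linear map. -/
noncomputable def inducedAction (ρ : B →ₐ[R] Module.End R M) : A →ₗ[R] Module.End R (D → M) where
  toFun a := LinearMap.pi fun d => ∑ e, ρ (ht.coeff (a * t e) d) ∘ₗ LinearMap.proj e
  map_add' a b := by
    refine LinearMap.ext fun m => funext fun d => ?_
    simp [add_mul, Finset.sum_add_distrib]
  map_smul' r a := by
    refine LinearMap.ext fun m => funext fun d => ?_
    simp [Finset.smul_sum]

theorem inducedAction_apply (ρ : B →ₐ[R] Module.End R M) (a : A) (m : D → M) (d : D) :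
    ht.inducedAction ρ a m d = ∑ e, ρ (ht.coeff (a * t e) d) (m e) := by
  simp [inducedAction]

theorem inducedAction_one (ρ : B →ₐ[R] Module.End R M) : ht.inducedAction ρ 1 = 1 := by
  classical
  refine LinearMap.ext fun m => funext fun d => ?_
  rw [inducedAction_apply, Finset.sum_eq_single d]
  · simp [ht.coeff_basis]
  · intro e _ he
    simp [ht.coeff_basis, Pi.single_eq_of_ne he.symm]
  · simp

theorem inducedAction_mul (ρ : B →ₐ[R] Module.End R M) (a b : A) :
    ht.inducedAction ρ (a * b) = ht.inducedAction ρ a * ht.inducedAction ρ b := by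
  refine LinearMap.ext fun m => funext fun d => ?_
  simp only [Module.End.mul_apply, inducedAction_apply, map_sum]
  rw [Finset.sum_comm]
  refine Finset.sum_congr rfl fun e _ => ?_
  simp [mul_assoc, ht.coeff_mul a (b * _)]

/-- The representation of `A` on `D → M ≅ A ⊗_B M` induced from a representation `ρ` of `B`. -/
noncomputable def inducedRep (ρ : B →ₐ[R] Module.End R M) : A →ₐ[R] Module.End R (D → M) :=
  AlgHom.ofLinearMap (ht.inducedAction ρ) (ht.inducedAction_one ρ) (ht.inducedAction_mul ρ)

theorem inducedRep_apply (ρ : B →ₐ[R] Module.End R M) (a : A) (m : D → M) (d : D) :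
    ht.inducedRep ρ a m d = ∑ e, ρ (ht.coeff (a * t e) d) (m e) :=
  ht.inducedAction_apply ρ a m d

/-- The map `m ↦ 1 ⊗ m` from `M` to `D → M ≅ A ⊗_B M`. -/
noncomputable def inducedEmbedding (ρ : B →ₐ[R] Module.End R M) : M →ₗ[R] D → M :=
  LinearMap.pi fun d => ρ (ht.coeff 1 d)

theorem inducedRep_inducedEmbedding (ρ : B →ₐ[R] Module.End R M) (a : A) (m : M) (d : D) :
    ht.inducedRep ρ a (ht.inducedEmbedding ρ m) d = ρ (ht.coeff a d) m := by
  rw [inducedRep_apply]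
  conv_rhs => rw [← mul_one a, ht.coeff_mul]
  simp [inducedEmbedding]

theorem inducedEmbedding_map (ρ : B →ₐ[R] Module.End R M) (b : B) (m : M) :
    ht.inducedEmbedding ρ (ρ b m) = ht.inducedRep ρ (φ b) (ht.inducedEmbedding ρ m) := by
  ext d
  rw [inducedRep_inducedEmbedding, ← one_mul (φ b), ht.coeff_mul_map]
  simp [inducedEmbedding]

end IsRightBasis

section
variable {M E : Type*} [AddCommGroup M] [Module R M] [AddCommGroup E] [Module R E]

/-- The map `(m_d) ↦ ∑ t_d ⊗ m_d` from `D → M` to a module `E` with a map `ι : M → E`. -/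
def sumAct (t : D → A) (ρE : A →ₐ[R] Module.End R E) (ι : M →ₗ[R] E) : (D → M) →ₗ[R] E :=
  ∑ d, ρE (t d) ∘ₗ ι ∘ₗ LinearMap.proj d

theorem sumAct_apply (t : D → A) (ρE : A →ₐ[R] Module.End R E) (ι : M →ₗ[R] E) (m : D → M) :
    sumAct t ρE ι m = ∑ d, ρE (t d) (ι (m d)) := by
  simp [sumAct]

variable {ρ : B →ₐ[R] Module.End R M} {ρE : A →ₐ[R] Module.End R E} {ι : M →ₗ[R] E}
  (ht : IsRightBasis φ t) (hι : ∀ b m, ι (ρ b m) = ρE (φ b) (ι m))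
include hι

theorem IsRightBasis.sum_act_coeff (a : A) (m : M) :
    ∑ d, ρE (t d) (ι (ρ (ht.coeff a d) m)) = ρE a (ι m) := by
  conv_rhs => rw [← ht.sum_mul_coeff a]
  simp [hι]

theorem IsRightBasis.sumAct_inducedRep (a : A) (m : D → M) :
    sumAct t ρE ι (ht.inducedRep ρ a m) = ρE a (sumAct t ρE ι m) := by
  simp only [sumAct_apply, IsRightBasis.inducedRep_apply, map_sum]
  rw [Finset.sum_comm]
  refine Finset.sum_congr rfl fun e _ => ?_
  rw [ht.sum_act_coeff hι, map_mul, Module.End.mul_apply]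

theorem IsRightBasis.sumAct_inducedEmbedding (m : M) :
    sumAct t ρE ι (ht.inducedEmbedding ρ m) = ι m := by
  rw [sumAct_apply]
  simpa [IsRightBasis.inducedEmbedding] using ht.sum_act_coeff hι 1 m

end

end

theorem IsInducedAlong.exists_equiv {F : Type} [Field F] {A B D : Type} [Ring A] [Ring B]
    [Algebra F A] [Algebra F B] [Fintype D] {φ : B →ₐ[F] A} {t : D → A} (ht : IsRightBasis φ t)
    {M E : Type} [AddCommGroup M] [Module F M] [AddCommGroup E] [Module F E]
    {ρ : B →ₐ[F] Module.End F M} {ρE : A →ₐ[F] Module.End F E} {ι : M →ₗ[F] E}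
    (h : IsInducedAlong F φ ρ ρE ι) :
    ∃ K : (D → M) ≃ₗ[F] E, ∀ m, K m = ∑ d, ρE (t d) (ι (m d)) := by
  classical
  obtain ⟨hι, universal⟩ := h
  obtain ⟨g, ⟨g_act, g_ι⟩, -⟩ := universal (D → M) (ht.inducedRep ρ) (ht.inducedEmbedding ρ)
    (ht.inducedEmbedding_map ρ)
  have right_inv : sumAct t ρE ι ∘ₗ g = LinearMap.id := by
    refine (universal E ρE ι hι).unique ⟨fun x e => ?_, fun m => ?_⟩
      ⟨fun _ _ => rfl, fun _ => rfl⟩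
    · simp only [LinearMap.comp_apply, g_act, ht.sumAct_inducedRep hι]
    · rw [LinearMap.comp_apply, g_ι, ht.sumAct_inducedEmbedding hι]
  have left_inv : g ∘ₗ sumAct t ρE ι = LinearMap.id := by
    refine LinearMap.ext fun m => funext fun e => ?_
    rw [LinearMap.comp_apply, sumAct_apply, map_sum, Finset.sum_apply, LinearMap.id_apply]
    simp only [g_act, g_ι, ht.inducedRep_inducedEmbedding, ht.coeff_basis]
    rw [Finset.sum_eq_single e]
    · simp
    · intro d _ hd
      simp [Pi.single_eq_of_ne hd.symm]
    · simp
  exact ⟨.ofLinearMap (sumAct t ρE ι) g right_inv left_inv, sumAct_apply t ρE ι⟩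

/-! ### Coset bases of parabolic subalgebras -/

section CosetBasis

variable {F} (q : F) {n : ℕ} {κ : Type*} [LinearOrder κ] {c : Fin n → κ}

theorem Tw_mem_parabolicJ (hc : Monotone c) {w : Perm (Fin n)} (hw : w ∈ youngSubgroup c) :
    Tw q w ∈ parabolicJ F q (youngIndices c) := by
  refine youngSubgroup_induction hc (p := fun w => Tw q w ∈ parabolicJ F q (youngIndices c)) ?_
    (fun u _ i hi h hu => ?_) hw
  · rw [Tw_one]
    exact one_mem _
  · rw [← Tw_mul_T_of_lt q h]
    exact mul_mem hu (T_mem_parabolicJ q hi)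

omit [LinearOrder κ] in
theorem mem_twSpan_youngSubgroup {h : H F q n} (hh : h ∈ parabolicJ F q (youngIndices c)) :
    h ∈ twSpan q (youngSubgroup c : Set (Perm (Fin n))) :=
  mem_twSpan_of_mem_parabolicJ q (one_mem _) (fun _ hw _ hj => mul_mem hw hj) hh

open Classical in
theorem coord_Tw_mul_of_mem_parabolicJ (hc : Monotone c) {d d' u : Perm (Fin n)}
    (hd : IsMinCosetRep c d) (hd' : IsMinCosetRep c d') (hu : u ∈ youngSubgroup c) {h : H F q n}
    (hh : h ∈ parabolicJ F q (youngIndices c)) :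
    coord q (Tw q d * h) (d' * u) = if d = d' then coord q h u else 0 := by
  have hspan := mem_twSpan_youngSubgroup q hh
  clear hh
  induction hspan using twSpan_induction with
  | zero => simp
  | Tw_mul_ofCL v hv a =>
    rw [← mul_assoc, Tw_mul q (hd.isReducedMul hc hv), coord_Tw_mul_ofCL, coord_Tw_mul_ofCL]
    split_ifs with e
    · simp [e, Pi.single_apply]
    · exact Pi.single_eq_of_ne (fun e' => e (hd'.unique hc hd hu hv e').1.symm) _
  | add g h _ _ hg hh =>
    rw [mul_add, map_add, map_add, Pi.add_apply, hg, hh]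
    split_ifs <;> simp

/-- The minimal length representatives, lying in the subgroup `G`, of the left cosets of the Young
subgroup of `c`. -/
abbrev CosetReps (G : Subgroup (Perm (Fin n))) (c : Fin n → κ) : Type :=
  {d : Perm (Fin n) // d ∈ G ∧ IsMinCosetRep c d}

noncomputable instance (G : Subgroup (Perm (Fin n))) : Fintype (CosetReps G c) :=
  Fintype.ofFinite _

variable {G : Subgroup (Perm (Fin n))}

theorem exists_sum_Tw_mul (hc : Monotone c) (hG : youngSubgroup c ≤ G) {h : H F q n}
    (hh : h ∈ twSpan q (G : Set (Perm (Fin n)))) :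
    ∃ f : CosetReps G c → parabolicJ F q (youngIndices c), ∑ d, Tw q d.1 * (f d : H F q n) = h := by
  classical
  induction hh using twSpan_induction with
  | zero => exact ⟨0, by simp⟩
  | Tw_mul_ofCL w hw a =>
    obtain ⟨d, u, hd, hu, rfl, -⟩ := exists_isMinCosetRep_mul hc w
    let d' : CosetReps G c := ⟨d, (Subgroup.mul_mem_cancel_right _ (hG hu)).1 hw, hd⟩
    refine ⟨Pi.single d' ⟨Tw q u * ofCL q a,
      mul_mem (Tw_mem_parabolicJ q hc hu) (ofCL_mem_parabolicJ q _ a)⟩, ?_⟩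
    rw [Finset.sum_eq_single d' (fun e _ he => by simp [Pi.single_eq_of_ne he]) (by simp),
      Pi.single_eq_same, ← mul_assoc, Tw_mul q (hd.isReducedMul hc hu)]
  | add g h _ _ hg hh =>
    obtain ⟨f, rfl⟩ := hg
    obtain ⟨f', rfl⟩ := hh
    exact ⟨f + f', by simp [mul_add, Finset.sum_add_distrib]⟩

theorem coord_sum_Tw_mul (hc : Monotone c) (f : CosetReps G c → parabolicJ F q (youngIndices c))
    (d : CosetReps G c) {u : Perm (Fin n)} (hu : u ∈ youngSubgroup c) :
    coord q (∑ e, Tw q e.1 * (f e : H F q n)) (d.1 * u) = coord q (f d : H F q n) u := by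
  classical
  simp only [map_sum, Finset.sum_apply,
    fun e => coord_Tw_mul_of_mem_parabolicJ q hc e.2.2 d.2.2 hu (f e).2]
  rw [Finset.sum_eq_single d (fun e _ he => if_neg fun h => he (Subtype.ext h)) (by simp),
    if_pos rfl]

theorem sum_Tw_mul_injective (hc : Monotone c) : Function.Injective
    fun f : CosetReps G c → parabolicJ F q (youngIndices c) =>
      ∑ d, Tw q d.1 * (f d : H F q n) := by
  intro f g hfg
  ext d
  refine coord_injective q (funext fun u => ?_)
  by_cases hu : u ∈ youngSubgroup c
  · rw [← coord_sum_Tw_mul q hc f d hu, ← coord_sum_Tw_mul q hc g d hu]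
    exact congrArg (coord q · (d.1 * u)) hfg
  · rw [coord_eq_zero_of_mem_twSpan q (mem_twSpan_youngSubgroup q (f d).2) hu,
      coord_eq_zero_of_mem_twSpan q (mem_twSpan_youngSubgroup q (g d).2) hu]

theorem isRightBasis_of_apply_eq_Tw (hc : Monotone c) (hG : youngSubgroup c ≤ G)
    {J : Set (Fin (n - 1))} (hJ : J = youngIndices c) {A : Type*} [Ring A] [Algebra F A]
    {ψ : A →ₐ[F] H F q n} (hψ : Function.Injective ψ)
    (hA : ∀ a, ψ a ∈ twSpan q (G : Set (Perm (Fin n))))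
    {φ : parabolicJ F q J →ₐ[F] A} (hφ : ∀ b, ψ (φ b) = b)
    {t : CosetReps G c → A} (ht : ∀ d, ψ (t d) = Tw q d.1) :
    IsRightBasis (R := F) (B := parabolicJ F q J) φ t := by
  subst hJ
  have key (f : CosetReps G c → parabolicJ F q (youngIndices c)) :
      ψ (rightCombination (B := parabolicJ F q (youngIndices c)) φ t f)
        = ∑ d, Tw q d.1 * (f d : H F q n) := by
    simp only [rightCombination_apply, map_sum, map_mul, hφ, ht]
  refine ⟨fun f g hfg => sum_Tw_mul_injective q hc ?_, fun a => ?_⟩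
  · simpa only [key] using congrArg ψ hfg
  · obtain ⟨f, hf⟩ := exists_sum_Tw_mul q hc hG (hA a)
    exact ⟨f, hψ ((key f).trans hf)⟩

end CosetBasis

/-! ### Filtration by unions of double cosets -/

section Cells

variable {F} {n : ℕ} {κ κ' : Type*} {c : Fin n → κ} {c' : Fin n → κ'} {xs : List (Perm (Fin n))}
  {k : ℕ}

/-- The union of the first `k` double cosets of the Young subgroups of `c` and `c'` represented
in the list `xs`. -/
def cells (c : Fin n → κ) (c' : Fin n → κ') (xs : List (Perm (Fin n))) (k : ℕ) :
    Set (Perm (Fin n)) :=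
  {w | ∃ i : Fin xs.length, i < k ∧
    w ∈ doubleCoset (xs.get i) (youngSubgroup c : Set (Perm (Fin n))) (youngSubgroup c')}

theorem cells_mono : Monotone (cells c c' xs) :=
  fun _ _ h _ ⟨i, hi, hw⟩ => ⟨i, hi.trans_le h, hw⟩

theorem cells_zero : cells c c' xs 0 = ∅ :=
  Set.eq_empty_of_forall_notMem fun _ ⟨_, hi, _⟩ => Nat.not_lt_zero _ hi

theorem mul_mem_cells {u v w : Perm (Fin n)} (hu : u ∈ youngSubgroup c)
    (hv : v ∈ youngSubgroup c') (hw : w ∈ cells c c' xs k) : u * w * v ∈ cells c c' xs k := by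
  obtain ⟨i, hi, hw⟩ := hw
  obtain ⟨a, ha, b, hb, rfl⟩ := mem_doubleCoset.1 hw
  exact ⟨i, hi, mem_doubleCoset.2 ⟨u * a, mul_mem hu ha, b * v, mul_mem hb hv, by
    simp only [mul_assoc]⟩⟩

theorem mul_left_mem_cells {u w : Perm (Fin n)} (hu : u ∈ youngSubgroup c)
    (hw : w ∈ cells c c' xs k) : u * w ∈ cells c c' xs k := by
  simpa only [mul_one] using mul_mem_cells hu (one_mem _) hw

theorem mul_right_mem_cells {v w : Perm (Fin n)} (hv : v ∈ youngSubgroup c')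
    (hw : w ∈ cells c c' xs k) : w * v ∈ cells c c' xs k := by
  simpa only [one_mul] using mul_mem_cells (one_mem _) hv hw

theorem get_mem_cells (i : Fin xs.length) : xs.get i ∈ cells c c' xs (i + 1) :=
  ⟨i, Nat.lt_succ_self _, mem_doubleCoset_self _ _ _⟩

/-- `xs` lists the minimal length double coset representatives without repetition, in an order
refining the Bruhat order. -/
structure IsBruhatEnumeration (c : Fin n → κ) (c' : Fin n → κ') (xs : List (Perm (Fin n))) :
    Prop where
  nodup : xs.Nodup
  mem_iff : ∀ x, IsMinDoubleCosetRep c c' x ↔ x ∈ xs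
  lt_of_bruhatLE : ∀ i j : Fin xs.length, BruhatLE (xs.get i) (xs.get j) →
    xs.get i ≠ xs.get j → (i : ℕ) < j

namespace IsBruhatEnumeration

variable (hxs : IsBruhatEnumeration c c' xs)
include hxs

theorem isMinDoubleCosetRep_get (i : Fin xs.length) : IsMinDoubleCosetRep c c' (xs.get i) :=
  (hxs.mem_iff _).2 (List.get_mem _ _)

variable [LinearOrder κ] [LinearOrder κ'] (hc : Monotone c) (hc' : Monotone c')
include hc hc'

theorem cells_length : cells c c' xs xs.length = Set.univ := by
  refine Set.eq_univ_of_forall fun w => ?_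
  obtain ⟨x, hx, hw, -⟩ := exists_isMinDoubleCosetRep_le hc hc' w
  obtain ⟨i, rfl⟩ := List.get_of_mem ((hxs.mem_iff x).1 hx)
  exact ⟨i, i.2, hw⟩

theorem mem_cells_of_bruhatLE {y w : Perm (Fin n)} (hw : w ∈ cells c c' xs k)
    (h : BruhatLE y w) : y ∈ cells c c' xs k := by
  obtain ⟨i, hi, hw⟩ := hw
  obtain ⟨z, hz, hy, hzx⟩ := h.exists_isMinDoubleCosetRep_le hc hc' hw
  obtain ⟨j, rfl⟩ := List.get_of_mem ((hxs.mem_iff z).1 hz)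
  refine ⟨j, ?_, hy⟩
  by_cases hne : xs.get j = xs.get i
  · rwa [hxs.nodup.get_inj_iff.1 hne]
  · exact (hxs.lt_of_bruhatLE j i hzx hne).trans hi

theorem get_notMem_cells (i : Fin xs.length) : xs.get i ∉ cells c c' xs i := by
  rintro ⟨j, hj, hij⟩
  have := (hxs.isMinDoubleCosetRep_get j).eq_of_mem_doubleCoset hc hc'
    (hxs.isMinDoubleCosetRep_get i) hij
  exact hj.ne' (congrArg Fin.val (hxs.nodup.get_inj_iff.1 this))

theorem mul_get_notMem_cells (i : Fin xs.length) {u : Perm (Fin n)} (hu : u ∈ youngSubgroup c) :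
    u * xs.get i ∉ cells c c' xs i := fun h =>
  hxs.get_notMem_cells hc hc' i <| by
    simpa only [inv_mul_cancel_left] using mul_left_mem_cells (inv_mem hu) h

theorem mem_cells_of_bruhatLE_get {i : Fin xs.length} {y : Perm (Fin n)}
    (h : BruhatLE y (xs.get i)) (hne : y ≠ xs.get i) : y ∈ cells c c' xs i := by
  obtain ⟨j, hj, hy⟩ := hxs.mem_cells_of_bruhatLE hc hc' (get_mem_cells i) h
  refine ⟨j, (Nat.lt_succ_iff.1 hj).lt_of_ne fun hji => ?_, hy⟩
  obtain rfl : j = i := Fin.ext hji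
  obtain ⟨u, hu, v, hv, rfl⟩ := mem_doubleCoset.1 hy
  exact ((hxs.isMinDoubleCosetRep_get j).len_le hc hc' hu hv).not_gt (h.len_lt hne)

theorem exists_eq_mul_get {i : Fin xs.length} {d : Perm (Fin n)} (hd : IsMinCosetRep c' d)
    (hmem : d ∈ cells c c' xs (i + 1)) (hnot : d ∉ cells c c' xs i) :
    ∃ u ∈ youngSubgroup c, IsMinCosetRep (meetColouring c c' (xs.get i)) u ∧
      d = u * xs.get i := by
  obtain ⟨j, hj, hdj⟩ := hmem
  rcases (Nat.lt_succ_iff.1 hj).lt_or_eq with hlt | heq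
  · exact absurd ⟨j, hlt, hdj⟩ hnot
  · obtain rfl : j = i := Fin.ext heq
    exact (hxs.isMinDoubleCosetRep_get j).exists_eq_mul hc hc' hd hdj

theorem mul_mem_twSpan_cells {q : F} {b h : H F q n} (hb : b ∈ parabolicJ F q (youngIndices c))
    (hh : h ∈ twSpan q (cells c c' xs k)) : b * h ∈ twSpan q (cells c c' xs k) :=
  mul_mem_twSpan_of_bruhatLE_mem q (fun _ hw _ => hxs.mem_cells_of_bruhatLE hc hc' hw)
    (fun _ hw _ hj => mul_left_mem_cells hj hw) hb hh

end IsBruhatEnumeration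

theorem twSpan_cells_mul_mem {q : F} {b h : H F q n}
    (hh : h ∈ twSpan q (cells c c' xs k)) (hb : b ∈ parabolicJ F q (youngIndices c')) :
    h * b ∈ twSpan q (cells c c' xs k) :=
  mul_mem_twSpan_of_mem_parabolicJ q (fun _ hw _ hj => mul_right_mem_cells hj hw) hb hh

theorem IsMinDoubleCosetRep.exists_T_mul_Tw [LinearOrder κ'] (q : F) (hc' : Monotone c')
    {x : Perm (Fin n)} (hx : IsMinDoubleCosetRep c c' x) {j : Fin (n - 1)}
    (hj : j ∈ youngIndices (meetColouring c c' x)) :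
    ∃ j' ∈ youngIndices c', lo j' = x⁻¹ (lo j) ∧ T F q j * Tw q x = Tw q x * T F q j' := by
  obtain ⟨j', hj', hlo, hhi⟩ := hx.exists_conj_s hc' hj
  have conj : s j * x = x * s j' := by
    rw [s, s, Equiv.mul_swap_eq_swap_mul, hlo, hhi]
    simp
  refine ⟨j', hj', hlo, ?_⟩
  rw [T_mul_Tw_of_lt q (by simpa only [hlo, hhi] using lo_lt_hi j'),
    Tw_mul_T_of_lt q (by simpa [hlo, hhi] using lo_lt_hi j), conj]

end Cells

/-! ### The Mackey filtration -/

section Compositions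

variable {F} {n : ℕ} {μ ν : List ℕ}

theorem blk_mono (μ : List ℕ) : Monotone (blk μ) := by
  induction μ with
  | nil => exact fun _ _ _ => le_rfl
  | cons a l ih =>
    intro k k' hk
    simp only [blk]
    split_ifs with h h'
    · exact le_rfl
    · exact Nat.zero_le _
    · omega
    · exact Nat.succ_le_succ (ih (Nat.sub_le_sub_right hk a))

/-- The colouring of positions by the blocks of a composition; its Young subgroup is `S_μ` and
`parabolicC F q μ` is by definition `parabolicJ F q (youngIndices (blkColour n μ))`. -/
def blkColour (n : ℕ) (μ : List ℕ) : Fin n → ℕ := fun k => blk μ k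

theorem blkColour_mono (μ : List ℕ) : Monotone (blkColour n μ) := fun _ _ h => blk_mono μ h

theorem isMinDC_iff {x : Perm (Fin n)} :
    IsMinDC μ ν x ↔ IsMinDoubleCosetRep (blkColour n μ) (blkColour n ν) x :=
  ⟨isMinDoubleCosetRep_of_len_le (blkColour_mono μ) (blkColour_mono ν),
    fun h _ _ => h.len_le (blkColour_mono μ) (blkColour_mono ν)⟩

theorem Jcap_eq (μ ν : List ℕ) (x : Perm (Fin n)) :
    Jcap μ ν x = youngIndices (meetColouring (blkColour n μ) (blkColour n ν) x) :=
  Set.ext fun j => (mem_youngSubgroup_meetColouring (c := blkColour n μ) (c' := blkColour n ν)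
    (w := s j)).symm

theorem isRightBasis_val (q : F) (ν : List ℕ) :
    IsRightBasis (R := F) (B := parabolicC F q (n := n) ν) (parabolicC F q (n := n) ν).val
      fun d : CosetReps ⊤ (blkColour n ν) => Tw q d.1 :=
  isRightBasis_of_apply_eq_Tw q (blkColour_mono ν) le_top rfl (ψ := AlgHom.id F _)
    Function.injective_id (fun a => by
      rw [Subgroup.coe_top, twSpan_univ]
      exact Submodule.mem_top) (fun _ => rfl) fun _ => rfl

theorem isRightBasis_JcapIncl (q : F) {x : Perm (Fin n)}
    (hx : IsMinDoubleCosetRep (blkColour n μ) (blkColour n ν) x) :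
    IsRightBasis (R := F) (A := parabolicC F q (n := n) μ) (B := parabolicJ F q (Jcap μ ν x))
      (JcapIncl F q μ ν x)
      fun u : CosetReps (youngSubgroup (blkColour n μ))
        (meetColouring (blkColour n μ) (blkColour n ν) x) =>
          ⟨Tw q u.1, Tw_mem_parabolicJ q (blkColour_mono μ) u.2.1⟩ :=
  isRightBasis_of_apply_eq_Tw q
    (hx.monotone_meetColouring (blkColour_mono μ) (blkColour_mono ν))
    (youngSubgroup_meetColouring_le x) (Jcap_eq μ ν x) (ψ := (parabolicC F q μ).val)
    Subtype.val_injective (fun a => mem_twSpan_youngSubgroup q a.2) (fun _ => rfl) fun _ => rfl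

end Compositions

section CosetDecomposition

variable {F} {q : F} {n : ℕ} {ν : List ℕ} {M E : Type} [AddCommGroup M] [Module F M]
  [AddCommGroup E] [Module F E] {ρν : parabolicC F q (n := n) ν →ₐ[F] Module.End F M}
  {ρE : H F q n →ₐ[F] Module.End F E} {ι : M →ₗ[F] E}
  {K : (CosetReps ⊤ (blkColour n ν) → M) ≃ₗ[F] E}

/-- `K` is the decomposition `E = ⨁ T_d ⊗ M` of the `H_ν`-module `M` induced to `H_n`, over the
minimal length left coset representatives `d`, with `1 ⊗ m` written `ι m`. -/
structure IsCosetDecomposition (ρν : parabolicC F q (n := n) ν →ₐ[F] Module.End F M)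
    (ρE : H F q n →ₐ[F] Module.End F E) (ι : M →ₗ[F] E)
    (K : (CosetReps ⊤ (blkColour n ν) → M) ≃ₗ[F] E) : Prop where
  map_act : ∀ b m, ι (ρν b m) = ρE (b : H F q n) (ι m)
  apply_eq_sum : ∀ m, K m = ∑ d, ρE (Tw q d.1) (ι (m d))

theorem exists_isCosetDecomposition
    (h : IsInducedAlong F (A := H F q n) (B := parabolicC F q (n := n) ν)
      (parabolicC F q (n := n) ν).val ρν ρE ι) :
    ∃ K : (CosetReps ⊤ (blkColour n ν) → M) ≃ₗ[F] E, IsCosetDecomposition ρν ρE ι K := by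
  obtain ⟨K, hK⟩ := IsInducedAlong.exists_equiv (A := H F q n) (B := parabolicC F q (n := n) ν)
    (isRightBasis_val q ν) h
  exact ⟨K, h.1, hK⟩

/-- The sum of the `T_d ⊗ M` with `d ∈ S`. -/
def cellSpace (K : (CosetReps ⊤ (blkColour n ν) → M) ≃ₗ[F] E) (S : Set (Perm (Fin n))) :
    Submodule F E where
  carrier := {e | ∀ d : CosetReps ⊤ (blkColour n ν), d.1 ∉ S → K.symm e d = 0}
  add_mem' ha hb d hd := by rw [map_add, Pi.add_apply, ha d hd, hb d hd, add_zero]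
  zero_mem' d _ := by rw [map_zero, Pi.zero_apply]
  smul_mem' r e he d hd := by rw [map_smul, Pi.smul_apply, he d hd, smul_zero]

theorem cellSpace_mono : Monotone (cellSpace K) :=
  fun _ _ h _ he d hd => he d fun hd' => hd (h hd')

theorem cellSpace_empty : cellSpace K ∅ = ⊥ := by
  refine eq_bot_iff.2 fun e he => ?_
  rw [Submodule.mem_bot, ← map_eq_zero_iff K.symm K.symm.injective]
  exact funext fun d => he d (Set.notMem_empty _)

theorem cellSpace_univ : cellSpace K Set.univ = ⊤ :=
  eq_top_iff.2 fun _ _ _ hd => absurd (Set.mem_univ _) hd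

namespace IsCosetDecomposition

variable (hK : IsCosetDecomposition ρν ρE ι K) {S : Set (Perm (Fin n))}
include hK

open Classical in
theorem apply_single (d : CosetReps ⊤ (blkColour n ν)) (m : M) :
    K (Pi.single d m) = ρE (Tw q d.1) (ι m) := by
  rw [hK.apply_eq_sum, Finset.sum_eq_single d, Pi.single_eq_same]
  · intro e _ he
    rw [Pi.single_eq_of_ne he, map_zero, map_zero]
  · simp

theorem Tw_mem_cellSpace {d : Perm (Fin n)} (hd : IsMinCosetRep (blkColour n ν) d) (hS : d ∈ S)
    (m : M) : ρE (Tw q d) (ι m) ∈ cellSpace K S := by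
  classical
  intro e he
  rw [← hK.apply_single ⟨d, trivial, hd⟩ m, LinearEquiv.symm_apply_apply, Pi.single_eq_of_ne]
  rintro rfl
  exact he hS

theorem cellSpace_le {p : Submodule F E}
    (h : ∀ d ∈ S, IsMinCosetRep (blkColour n ν) d → ∀ m, ρE (Tw q d) (ι m) ∈ p) :
    cellSpace K S ≤ p := by
  intro e he
  rw [← K.apply_symm_apply e, hK.apply_eq_sum]
  refine sum_mem fun d _ => ?_
  by_cases hd : d.1 ∈ S
  · exact h d.1 hd d.2.2 _
  · rw [he d hd, map_zero, map_zero]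
    exact zero_mem _

theorem mem_cellSpace_of_mem_twSpan
    (hS : ∀ w ∈ S, ∀ v ∈ youngSubgroup (blkColour n ν), w * v ∈ S) {h : H F q n}
    (hh : h ∈ twSpan q S) (m : M) : ρE h (ι m) ∈ cellSpace K S := by
  induction hh using twSpan_induction with
  | zero => rw [map_zero]; exact zero_mem _
  | Tw_mul_ofCL w hw a =>
    obtain ⟨d, v, hd, hv, rfl, -⟩ := exists_isMinCosetRep_mul (blkColour_mono ν) w
    have hdS : d ∈ S := by simpa only [mul_inv_cancel_right] using hS _ hw _ (inv_mem hv)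
    let b : parabolicC F q (n := n) ν := ⟨Tw q v * ofCL q a,
      mul_mem (Tw_mem_parabolicJ q (blkColour_mono ν) hv) (ofCL_mem_parabolicJ q _ a)⟩
    have hmem := hK.Tw_mem_cellSpace hd hdS (ρν b m)
    rwa [hK.map_act, ← Module.End.mul_apply, ← map_mul, ← mul_assoc,
      Tw_mul q (hd.isReducedMul (blkColour_mono ν) hv)] at hmem
  | add g h _ _ hg hh => rw [map_add]; exact add_mem hg hh

end IsCosetDecomposition

end CosetDecomposition

section TwistedRep

variable {F} {q : F} {n : ℕ} {μ ν : List ℕ} {M : Type} [AddCommGroup M] [Module F M]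
  {ρν : parabolicC F q (n := n) ν →ₐ[F] Module.End F M} {x : Perm (Fin n)}
  {J : Set (Fin (n - 1))} {ρ' : parabolicJ F q J →ₐ[F] Module.End F M}

theorem IsTwistedRep.apply_ofCL (hρ' : IsTwistedRep F q ν x (parabolicJ F q J) ρν ρ')
    (a : CliffordLaurent F n) :
    ρ' ⟨ofCL q a, ofCL_mem_parabolicJ q J a⟩ =
      ρν ⟨ofCL q (.perm x⁻¹ a), ofCL_mem_parabolicJ q _ _⟩ := by
  have comp_eq : ρ'.comp ((ofCL q).codRestrict _ (ofCL_mem_parabolicJ q J)) =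
      (ρν.comp ((ofCL q).codRestrict _ fun a => ofCL_mem_parabolicJ q _ a)).comp
        (CliffordLaurent.perm x⁻¹) :=
    CliffordLaurent.algHom_ext
      (fun j => hρ'.1 j _ _ (ofCL_x q j)
        ((congrArg (ofCL q) (CliffordLaurent.perm_x x⁻¹ j)).trans (ofCL_x q _)))
      (fun j => hρ'.2.1 j _ _ (ofCL_xInv q j)
        ((congrArg (ofCL q) (CliffordLaurent.perm_xInv x⁻¹ j)).trans (ofCL_xInv q _)))
      (fun j => hρ'.2.2.1 j _ _ (ofCL_c q j)
        ((congrArg (ofCL q) (CliffordLaurent.perm_c x⁻¹ j)).trans (ofCL_c q _)))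
  exact DFunLike.congr_fun comp_eq a

variable {xs : List (Perm (Fin n))} {i : Fin xs.length}
  {ρx : parabolicJ F q (Jcap μ ν (xs.get i)) →ₐ[F] Module.End F M}

/-- Modulo the preceding double cosets, moving an element of `H_{μ∩xν}` past `T_x` is the twist
`φ_{x⁻¹}`. -/
theorem IsTwistedRep.exists_mul_Tw_get
    (hxs : IsBruhatEnumeration (blkColour n μ) (blkColour n ν) xs)
    (hρx : IsTwistedRep F q ν (xs.get i) (parabolicJ F q (Jcap μ ν (xs.get i))) ρν ρx)
    (h : parabolicJ F q (Jcap μ ν (xs.get i))) :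
    ∃ h' : parabolicC F q (n := n) ν, ρx h = ρν h' ∧
      ∃ l ∈ twSpan q (cells (blkColour n μ) (blkColour n ν) xs i),
        (h : H F q n) * Tw q (xs.get i) = Tw q (xs.get i) * h' + l := by
  obtain ⟨h, hh⟩ := h
  induction hh using parabolicJ_induction with
  | ofCL a =>
    obtain ⟨l, hl, e⟩ := exists_ofCL_mul_Tw q (xs.get i) a
    exact ⟨_, hρx.apply_ofCL a, l, twSpan_mono q (fun _ hy =>
      hxs.mem_cells_of_bruhatLE_get (blkColour_mono μ) (blkColour_mono ν) hy.1 hy.2) hl, e⟩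
  | T j hj =>
    obtain ⟨j', hj', hlo, e⟩ := (hxs.isMinDoubleCosetRep_get i).exists_T_mul_Tw q
      (blkColour_mono ν) (Jcap_eq μ ν _ ▸ hj)
    exact ⟨⟨T F q j', T_mem_parabolicJ q hj'⟩, hρx.2.2.2 j j' _ _ hlo rfl rfl, 0, zero_mem _,
      e.trans (add_zero _).symm⟩
  | add g h hg hh ihg ihh =>
    obtain ⟨g', hg', l, hl, e⟩ := ihg
    obtain ⟨h', hh', l', hl', e'⟩ := ihh
    refine ⟨g' + h', ?_, l + l', add_mem hl hl', ?_⟩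
    · rw [map_add, ← hg', ← hh', ← map_add]
      rfl
    · rw [Subalgebra.coe_add, mul_add, add_mul, e, e']
      abel
  | mul g h hg hh ihg ihh =>
    obtain ⟨g', hg', l, hl, e⟩ := ihg
    obtain ⟨h', hh', l', hl', e'⟩ := ihh
    refine ⟨g' * h', ?_, l * h' + g * l', add_mem (twSpan_cells_mul_mem hl h'.2)
      (hxs.mul_mem_twSpan_cells (blkColour_mono μ) (blkColour_mono ν)
        (parabolicJ_mono F q (fun _ hj => hj.1) hg) hl'), ?_⟩
    · rw [map_mul, ← hg', ← hh', ← map_mul]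
      rfl
    · rw [Subalgebra.coe_mul, mul_assoc, e', mul_add, ← mul_assoc, e, add_mul, mul_assoc,
        add_assoc]

end TwistedRep

section Subquotient

variable {F} {q : F} {n : ℕ} {μ ν : List ℕ} {M E Q : Type} [AddCommGroup M] [Module F M]
  [AddCommGroup E] [Module F E] [AddCommGroup Q] [Module F Q]
  {ρν : parabolicC F q (n := n) ν →ₐ[F] Module.End F M}
  {ρE : H F q n →ₐ[F] Module.End F E} {ι : M →ₗ[F] E}
  {K : (CosetReps ⊤ (blkColour n ν) → M) ≃ₗ[F] E} {x : Perm (Fin n)} {xs : List (Perm (Fin n))}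

/-- The minimal length representatives of the left cosets of `S_μ ∩ xS_νx⁻¹` in `S_μ`; their
translates by `x` are the minimal length left coset representatives of `S_ν` in `S_μ x S_ν`. -/
abbrev MeetReps (n : ℕ) (μ ν : List ℕ) (x : Perm (Fin n)) : Type :=
  CosetReps (youngSubgroup (blkColour n μ)) (meetColouring (blkColour n μ) (blkColour n ν) x)

/-- The minimal length left coset representative `ux` of `S_ν`. -/
def MeetReps.translate (hx : IsMinDoubleCosetRep (blkColour n μ) (blkColour n ν) x)
    (u : MeetReps n μ ν x) : CosetReps ⊤ (blkColour n ν) :=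
  ⟨u.1 * x, trivial, (hx.isMinCosetRep_mul_iff (blkColour_mono μ) u.2.1).2 u.2.2⟩

theorem MeetReps.translate_injective
    (hx : IsMinDoubleCosetRep (blkColour n μ) (blkColour n ν) x) :
    Function.Injective (MeetReps.translate hx) :=
  fun _ _ h => Subtype.ext (mul_right_cancel (congrArg Subtype.val h))

/-- The projection of the induced module onto its components `T_{ux} ⊗ M` in the double coset
of `x`. -/
def cellProj (K : (CosetReps ⊤ (blkColour n ν) → M) ≃ₗ[F] E)
    (hx : IsMinDoubleCosetRep (blkColour n μ) (blkColour n ν) x) :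
    E →ₗ[F] (MeetReps n μ ν x → M) :=
  LinearMap.funLeft F M (MeetReps.translate hx) ∘ₗ K.symm.toLinearMap

open Classical in
theorem IsCosetDecomposition.cellProj_Tw (hK : IsCosetDecomposition ρν ρE ι K)
    (hx : IsMinDoubleCosetRep (blkColour n μ) (blkColour n ν) x) (u : MeetReps n μ ν x) (m : M) :
    cellProj K hx (ρE (Tw q (u.1 * x)) (ι m)) = Pi.single u m := by
  refine funext fun w => ?_
  change K.symm (ρE (Tw q (MeetReps.translate hx u).1) (ι m)) (MeetReps.translate hx w) = _
  rw [← hK.apply_single, LinearEquiv.symm_apply_apply, Pi.single_apply, Pi.single_apply]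
  simp only [(MeetReps.translate_injective hx).eq_iff]

theorem cellProj_eq_zero_iff (hxs : IsBruhatEnumeration (blkColour n μ) (blkColour n ν) xs)
    (i : Fin xs.length) {e : E}
    (he : e ∈ cellSpace K (cells (blkColour n μ) (blkColour n ν) xs (i + 1))) :
    cellProj K (hxs.isMinDoubleCosetRep_get i) e = 0 ↔
      e ∈ cellSpace K (cells (blkColour n μ) (blkColour n ν) xs i) := by
  refine ⟨fun h d hd => ?_, fun h => funext fun u => ?_⟩
  · by_cases hd' : d.1 ∈ cells (blkColour n μ) (blkColour n ν) xs (i + 1)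
    · obtain ⟨u, hu, hum, hdu⟩ := hxs.exists_eq_mul_get (blkColour_mono μ) (blkColour_mono ν)
        d.2.2 hd' hd
      rw [show d = MeetReps.translate (hxs.isMinDoubleCosetRep_get i) ⟨u, hu, hum⟩ from
        Subtype.ext hdu]
      exact congrFun h ⟨u, hu, hum⟩
    · exact he d hd'
  · exact h _ (hxs.mul_get_notMem_cells (blkColour_mono μ) (blkColour_mono ν) i u.2.1)

namespace IsCosetDecomposition

variable (hK : IsCosetDecomposition ρν ρE ι K)
  (hxs : IsBruhatEnumeration (blkColour n μ) (blkColour n ν) xs)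
include hK

theorem mem_cellSpace_cells {k : ℕ} {h : H F q n}
    (hh : h ∈ twSpan q (cells (blkColour n μ) (blkColour n ν) xs k)) (m : M) :
    ρE h (ι m) ∈ cellSpace K (cells (blkColour n μ) (blkColour n ν) xs k) :=
  hK.mem_cellSpace_of_mem_twSpan (fun _ hw _ hv => mul_right_mem_cells hv hw) hh m

include hxs

theorem act_mem_cellSpace_cells {k : ℕ} (b : parabolicC F q (n := n) μ) {e : E}
    (he : e ∈ cellSpace K (cells (blkColour n μ) (blkColour n ν) xs k)) :
    ρE (b : H F q n) e ∈ cellSpace K (cells (blkColour n μ) (blkColour n ν) xs k) := by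
  refine hK.cellSpace_le (p := (cellSpace K _).comap (ρE b)) (fun d hd _ m => ?_) he
  rw [Submodule.mem_comap, ← Module.End.mul_apply, ← map_mul]
  exact hK.mem_cellSpace_cells (hxs.mul_mem_twSpan_cells (blkColour_mono μ) (blkColour_mono ν)
    b.2 (Tw_mem_twSpan q hd)) m

theorem exists_cellProj_eq (i : Fin xs.length) (f : MeetReps n μ ν (xs.get i) → M) :
    ∃ e ∈ cellSpace K (cells (blkColour n μ) (blkColour n ν) xs (i + 1)),
      cellProj K (hxs.isMinDoubleCosetRep_get i) e = f := by
  classical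
  refine ⟨∑ u, ρE (Tw q (u.1 * xs.get i)) (ι (f u)), sum_mem fun u _ =>
    hK.mem_cellSpace_cells (Tw_mem_twSpan q (mul_left_mem_cells u.2.1 (get_mem_cells i))) _, ?_⟩
  rw [map_sum]
  simp only [hK.cellProj_Tw]
  exact Finset.univ_sum_single f

variable {i : Fin xs.length}

theorem cellProj_eq_zero_of_mem_twSpan {h : H F q n}
    (hh : h ∈ twSpan q (cells (blkColour n μ) (blkColour n ν) xs i)) (m : M) :
    cellProj K (hxs.isMinDoubleCosetRep_get i) (ρE h (ι m)) = 0 :=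
  (cellProj_eq_zero_iff hxs i (cellSpace_mono (cells_mono (Nat.le_succ _))
    (hK.mem_cellSpace_cells hh m))).2 (hK.mem_cellSpace_cells hh m)

variable {ρQ : parabolicC F q (n := n) μ →ₐ[F] Module.End F Q} {ι' : M →ₗ[F] Q}

theorem cellProj_act {KQ : (MeetReps n μ ν (xs.get i) → M) ≃ₗ[F] Q}
    (hKQ : ∀ (b : parabolicC F q (n := n) μ) (m : M),
      KQ (cellProj K (hxs.isMinDoubleCosetRep_get i) (ρE (b * Tw q (xs.get i)) (ι m))) =
        ρQ b (ι' m)) (b : parabolicC F q (n := n) μ) {e : E}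
    (he : e ∈ cellSpace K (cells (blkColour n μ) (blkColour n ν) xs (i + 1))) :
    KQ (cellProj K (hxs.isMinDoubleCosetRep_get i) (ρE (b : H F q n) e)) =
      ρQ b (KQ (cellProj K (hxs.isMinDoubleCosetRep_get i) e)) := by
  let κ : E →ₗ[F] Q := KQ.toLinearMap ∘ₗ cellProj K (hxs.isMinDoubleCosetRep_get i)
  refine hK.cellSpace_le (p := LinearMap.eqLocus (κ ∘ₗ ρE b) (ρQ b ∘ₗ κ))
    (fun d hd hdm m => ?_) he
  change KQ (cellProj K _ (ρE b (ρE (Tw q d) (ι m)))) =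
    ρQ b (KQ (cellProj K _ (ρE (Tw q d) (ι m))))
  rw [← Module.End.mul_apply, ← map_mul]
  by_cases hd' : d ∈ cells (blkColour n μ) (blkColour n ν) xs i
  · rw [hK.cellProj_eq_zero_of_mem_twSpan hxs (Tw_mem_twSpan q hd'),
      hK.cellProj_eq_zero_of_mem_twSpan hxs (hxs.mul_mem_twSpan_cells (blkColour_mono μ)
        (blkColour_mono ν) b.2 (Tw_mem_twSpan q hd')), map_zero, map_zero]
  · obtain ⟨u, hu, -, rfl⟩ := hxs.exists_eq_mul_get (blkColour_mono μ) (blkColour_mono ν) hdm hd hd'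
    let Tu : parabolicC F q (n := n) μ := ⟨Tw q u, Tw_mem_parabolicJ q (blkColour_mono μ) hu⟩
    rw [← Tw_mul q ((hxs.isMinDoubleCosetRep_get i).left.isReducedMul_of_inv (blkColour_mono μ) hu),
      ← mul_assoc]
    have hbTu : ρQ (b * Tu) (ι' m) = ρQ b (ρQ Tu (ι' m)) := by rw [map_mul, Module.End.mul_apply]
    exact (hKQ (b * Tu) m).trans (hbTu.trans (congrArg (ρQ b) (hKQ Tu m).symm))

variable {ρx : parabolicJ F q (Jcap μ ν (xs.get i)) →ₐ[F] Module.End F M}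
  (hρx : IsTwistedRep F q ν (xs.get i) (parabolicJ F q (Jcap μ ν (xs.get i))) ρν ρx)
include hρx

open Classical in
theorem cellProj_Tw_mul_mul_Tw (u : MeetReps n μ ν (xs.get i))
    (h : parabolicJ F q (Jcap μ ν (xs.get i))) (m : M) :
    cellProj K (hxs.isMinDoubleCosetRep_get i) (ρE (Tw q u.1 * h * Tw q (xs.get i)) (ι m)) =
      Pi.single u (ρx h m) := by
  obtain ⟨h', hh', l, hl, e⟩ := hρx.exists_mul_Tw_get hxs h
  have hTl : Tw q u.1 * l ∈ twSpan q (cells (blkColour n μ) (blkColour n ν) xs i) :=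
    hxs.mul_mem_twSpan_cells (blkColour_mono μ) (blkColour_mono ν)
      (Tw_mem_parabolicJ q (blkColour_mono μ) u.2.1) hl
  have hTu : Tw q u.1 * Tw q (xs.get i) = Tw q (u.1 * xs.get i) :=
    Tw_mul q ((hxs.isMinDoubleCosetRep_get i).left.isReducedMul_of_inv (blkColour_mono μ) u.2.1)
  rw [mul_assoc, e, mul_add, ← mul_assoc, hTu, map_add, LinearMap.add_apply, map_add,
    hK.cellProj_eq_zero_of_mem_twSpan hxs hTl, add_zero, map_mul, Module.End.mul_apply,
    ← hK.map_act, hK.cellProj_Tw, hh']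

theorem cellProj_mul_Tw (b : parabolicC F q (n := n) μ) (m : M) :
    cellProj K (hxs.isMinDoubleCosetRep_get i) (ρE (b * Tw q (xs.get i)) (ι m)) = fun u =>
      ρx ((isRightBasis_JcapIncl q (hxs.isMinDoubleCosetRep_get i)).coeff b u) m := by
  classical
  have hb := congrArg Subtype.val
    ((isRightBasis_JcapIncl q (hxs.isMinDoubleCosetRep_get i)).sum_mul_coeff b)
  rw [AddSubmonoidClass.coe_finsetSum] at hb
  conv_lhs => rw [← hb, Finset.sum_mul, map_sum, LinearMap.sum_apply, map_sum]
  refine (Finset.sum_congr rfl fun u _ => ?_).trans (Finset.univ_sum_single _)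
  exact hK.cellProj_Tw_mul_mul_Tw hxs hρx u _ m

variable (hQ : IsInducedAlong F (A := parabolicC F q (n := n) μ)
    (B := parabolicJ F q (Jcap μ ν (xs.get i))) (JcapIncl F q μ ν (xs.get i)) ρx ρQ ι')
include hQ

theorem exists_equiv_cellProj_equivariant :
    ∃ KQ : (MeetReps n μ ν (xs.get i) → M) ≃ₗ[F] Q, ∀ (b : parabolicC F q (n := n) μ) (m : M),
      KQ (cellProj K (hxs.isMinDoubleCosetRep_get i) (ρE (b * Tw q (xs.get i)) (ι m))) =
        ρQ b (ι' m) := by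
  have basis := isRightBasis_JcapIncl q (hxs.isMinDoubleCosetRep_get i)
  obtain ⟨KQ, hKQ⟩ := IsInducedAlong.exists_equiv (A := parabolicC F q (n := n) μ)
    (B := parabolicJ F q (Jcap μ ν (xs.get i))) basis hQ
  refine ⟨KQ, fun b m => ?_⟩
  rw [hK.cellProj_mul_Tw hxs hρx, hKQ]
  conv_rhs => rw [← basis.sum_mul_coeff b, map_sum, LinearMap.sum_apply]
  refine Finset.sum_congr rfl fun u _ => ?_
  rw [hQ.1, map_mul, Module.End.mul_apply]

end IsCosetDecomposition

end Subquotient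

theorem mackey_theorem_general
    (F : Type) [Field F] (q : F) (_hq : q ≠ 0) (n : ℕ)
    (μ ν : List ℕ) (_hμ : IsComposition μ n) (_hν : IsComposition ν n)
    (M : Type) [AddCommGroup M] [Module F M]
    (ρν : ↥(parabolicC F q (n := n) ν) →ₐ[F] Module.End F M)
    (E : Type) [AddCommGroup E] [Module F E]
    (ρE : H F q n →ₐ[F] Module.End F E) (ι : M →ₗ[F] E)
    (hInd : IsInducedAlong F (A := H F q n) (B := ↥(parabolicC F q (n := n) ν))
      (parabolicC F q (n := n) ν).val ρν ρE ι)
    (xs : List (Perm (Fin n))) (hnd : xs.Nodup)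
    (hxs : ∀ x : Perm (Fin n), IsMinDC μ ν x ↔ x ∈ xs)
    (hord : ∀ i j : Fin xs.length, BruhatLE (xs.get i) (xs.get j) →
      xs.get i ≠ xs.get j → (i : ℕ) < (j : ℕ)) :
    ∃ V : ℕ → Submodule F E,
      V 0 = ⊥ ∧ V xs.length = ⊤ ∧ (∀ k : ℕ, V k ≤ V (k + 1)) ∧
      (∀ (k : ℕ) (b : ↥(parabolicC F q (n := n) μ)) (e : E),
        e ∈ V k → ρE (b : H F q n) e ∈ V k) ∧
      ∀ (k : Fin xs.length)
        (ρ' : ↥(parabolicJ F q (Jcap μ ν (xs.get k))) →ₐ[F] Module.End F M),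
        IsTwistedRep F q ν (xs.get k) (parabolicJ F q (Jcap μ ν (xs.get k))) ρν ρ' →
        ∀ (Q : Type) [AddCommGroup Q] [Module F Q],
        ∀ (ρQ : ↥(parabolicC F q (n := n) μ) →ₐ[F] Module.End F Q) (ι' : M →ₗ[F] Q),
          IsInducedAlong F (A := ↥(parabolicC F q (n := n) μ))
            (B := ↥(parabolicJ F q (Jcap μ ν (xs.get k))))
            (JcapIncl F q μ ν (xs.get k)) ρ' ρQ ι' →
          ∃ π : ↥(V ((k : ℕ) + 1)) →ₗ[F] Q, Function.Surjective π ∧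
            (∀ e : ↥(V ((k : ℕ) + 1)), π e = 0 ↔ (e : E) ∈ V (k : ℕ)) ∧
            ∀ (b : ↥(parabolicC F q (n := n) μ)) (e e' : ↥(V ((k : ℕ) + 1))),
              (e' : E) = ρE (b : H F q n) (e : E) → π e' = ρQ b (π e) := by
  have hE : IsBruhatEnumeration (blkColour n μ) (blkColour n ν) xs :=
    ⟨hnd, fun x => isMinDC_iff.symm.trans (hxs x), hord⟩
  obtain ⟨K, hK⟩ := exists_isCosetDecomposition hInd
  refine ⟨fun k => cellSpace K (cells (blkColour n μ) (blkColour n ν) xs k), ?_, ?_,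
    fun k => cellSpace_mono (cells_mono k.le_succ), fun k b e => hK.act_mem_cellSpace_cells hE b,
    fun k ρ' hρ' Q _ _ ρQ ι' hQ => ?_⟩
  · exact (congrArg (cellSpace K) cells_zero).trans cellSpace_empty
  · exact (congrArg (cellSpace K) (hE.cells_length (blkColour_mono μ) (blkColour_mono ν))).trans
      cellSpace_univ
  obtain ⟨KQ, hKQ⟩ := hK.exists_equiv_cellProj_equivariant hE hρ' hQ
  refine ⟨KQ.toLinearMap ∘ₗ cellProj K (hE.isMinDoubleCosetRep_get k) ∘ₗ Submodule.subtype _,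
    fun y => ?_, fun e => ?_, fun b e e' he' => ?_⟩
  · obtain ⟨e, he, hy⟩ := hK.exists_cellProj_eq hE k (KQ.symm y)
    exact ⟨⟨e, he⟩, (congrArg KQ hy).trans (KQ.apply_symm_apply y)⟩
  · exact (map_eq_zero_iff KQ KQ.injective).trans (cellProj_eq_zero_iff hE k e.2)
  · exact (congrArg (fun f => KQ (cellProj K (hE.isMinDoubleCosetRep_get k) f)) he').trans
      (hK.cellProj_act hE hKQ b e.2)

end HeckeClifford

/-- **Mackey theorem for affine Hecke–Clifford superalgebras** (Theorem `TMackey`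
of Brundan–Kleshchev): for compositions `μ, ν` of `n` and an `H_ν`-module `M`, the
restriction `res^n_μ ind^n_ν M` admits a filtration by `H_μ`-submodules whose
successive subquotients are (evenly) isomorphic to
`ind^μ_{μ∩xν} (ˣ(res^ν_{x⁻¹μ∩ν} M))`, one for each minimal double coset
representative `x ∈ D_{μ,ν}`, and the subquotients can be taken in any order
refining the Bruhat order on `D_{μ,ν}` (in particular, for `x = 1`,
`ind^μ_{μ∩ν} res^ν_{μ∩ν} M` appears as a submodule). -/
theorem mackey_theorem
    (F : Type) [Field F] [IsAlgClosed F] (h2 : (2 : F) ≠ 0)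
    (q : F) (hq : GoodParam F q) (n : ℕ)
    (μ ν : List ℕ) (hμ : IsComposition μ n) (hν : IsComposition ν n)
    (M : Type) [AddCommGroup M] [Module F M]
    (ρν : ↥(parabolicC F q (n := n) ν) →ₐ[F] Module.End F M)
    (E : Type) [AddCommGroup E] [Module F E]
    (ρE : H F q n →ₐ[F] Module.End F E) (ι : M →ₗ[F] E)
    (hInd : IsInducedAlong F (A := H F q n) (B := ↥(parabolicC F q (n := n) ν))
      (parabolicC F q (n := n) ν).val ρν ρE ι)
    -- an enumeration of the minimal double coset representatives in an order
    -- refining the Bruhat order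
    (xs : List (Equiv.Perm (Fin n))) (hnd : xs.Nodup)
    (hxs : ∀ x : Equiv.Perm (Fin n), IsMinDC μ ν x ↔ x ∈ xs)
    (hord : ∀ i j : Fin xs.length, BruhatLE (xs.get i) (xs.get j) →
      xs.get i ≠ xs.get j → (i : ℕ) < (j : ℕ)) :
    ∃ V : ℕ → Submodule F E,
      V 0 = ⊥ ∧ V xs.length = ⊤ ∧ (∀ k : ℕ, V k ≤ V (k + 1)) ∧
      (∀ (k : ℕ) (b : ↥(parabolicC F q (n := n) μ)) (e : E),
        e ∈ V k → ρE (b : H F q n) e ∈ V k) ∧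
      ∀ (k : Fin xs.length)
        (ρ' : ↥(parabolicJ F q (Jcap μ ν (xs.get k))) →ₐ[F] Module.End F M),
        IsTwistedRep F q ν (xs.get k) (parabolicJ F q (Jcap μ ν (xs.get k))) ρν ρ' →
        ∀ (Q : Type) [AddCommGroup Q] [Module F Q],
        ∀ (ρQ : ↥(parabolicC F q (n := n) μ) →ₐ[F] Module.End F Q) (ι' : M →ₗ[F] Q),
          IsInducedAlong F (A := ↥(parabolicC F q (n := n) μ))
            (B := ↥(parabolicJ F q (Jcap μ ν (xs.get k))))
            (JcapIncl F q μ ν (xs.get k)) ρ' ρQ ι' →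
          ∃ π : ↥(V ((k : ℕ) + 1)) →ₗ[F] Q, Function.Surjective π ∧
            (∀ e : ↥(V ((k : ℕ) + 1)), π e = 0 ↔ (e : E) ∈ V (k : ℕ)) ∧
            ∀ (b : ↥(parabolicC F q (n := n) μ)) (e e' : ↥(V ((k : ℕ) + 1))),
              (e' : E) = ρE (b : H F q n) (e : E) → π e' = ρQ b (π e) := by
  exact mackey_theorem_general F q hq.1 n μ ν hμ hν M ρν E ρE ι hInd xs hnd hxs hord

end HC
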